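/- arXiv:1801.09169 — 2 statements merged into one kernel-verified Lean document; each statement's English description precedes it below -/
import Mathlib

section
/- Let Λ = KQ/⟨all paths of length L+1⟩ be a local truncated path algebra over an algebraically closed field, where Q has a single vertex and r ≥ 2 loops, and let d be a positive integer. (I) If d > L+1, then for any d-dimensional semisimple sequence S = (S_0,…,S_L) the following are equivalent: (1) the closure of Rep S is an irreducible component of Rep_d(Λ); (2) dim S_l ≤ r·dim S_{l−1} and dim S_{l−1} ≤ r·dim S_l for all 1 ≤ l ≤ L; (3) Rep S ≠ ∅ and (S_L, S_{L−1}, …, S_0) is the generic socle layering of the modules in Rep S; (4) S = S(M) for some module M such that the pair (S(M), S*(M)) is a minimal element of the image of Θ. Consequently the irreducible components of Rep_d(Λ) are precisely the closures of the Rep S for the sequences S satisfying (2). (II) If d ≤ L+1, then Rep_d(Λ) is irreducible and its modules are generically uniserial. -/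
open Finset

/-! # Varieties of representations of a quiver with relations: basic setup -/

/-- The Zariski topology on the affine space `ι → K`: it is generated by the basic open
sets `D(p) = {x | p(x) ≠ 0}`, where `p` ranges over multivariate polynomials. -/
def zariskiTopology (ι K : Type) [CommSemiring K] : TopologicalSpace (ι → K) :=
  TopologicalSpace.generateFrom
    {U | ∃ p : MvPolynomial ι K, U = {x | MvPolynomial.eval x p ≠ 0}}

/-- A finite quiver `Q`: vertices `Fin n`, arrows `Fin numArrows` with source and
target maps. -/
structure QuiverData where
  n : ℕ
  numArrows : ℕ
  src : Fin numArrows → Fin n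
  tgt : Fin numArrows → Fin n

namespace QuiverData

variable (Q : QuiverData) (d : Fin Q.n → ℕ) (K : Type) [Field K]

/-- Index of the coordinates of the affine space of `d`-dimensional representations:
for each arrow `a` a matrix entry index in `Fin (d (tgt a)) × Fin (d (src a))`. -/
abbrev Coords := Σ a : Fin Q.numArrows, Fin (d (Q.tgt a)) × Fin (d (Q.src a))

/-- The affine space of `d`-dimensional representations of `Q`:
a point `x` assigns to each arrow `a` a `d (tgt a) × d (src a)` matrix over `K`. -/
abbrev RepSpace := Coords Q d → K

/-- `RepSpace` carries the Zariski topology. -/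
noncomputable instance instRepTop : TopologicalSpace (RepSpace Q d K) :=
  zariskiTopology (Coords Q d) K

/-- The underlying `K`-vector space `⊕ᵢ K^{dᵢ}` of any `d`-dimensional representation. -/
abbrev Carrier := (Σ i : Fin Q.n, Fin (d i)) → K

/-- The projection onto the component of the `i`-th vertex (action of the primitive
idempotent `eᵢ`). -/
def proj (i : Fin Q.n) : Carrier Q d K →ₗ[K] Carrier Q d K where
  toFun m := fun jv => if jv.1 = i then m jv else 0
  map_add' u v := by
    funext jv; by_cases h : jv.1 = i <;> simp [h]
  map_smul' c u := by
    funext jv; by_cases h : jv.1 = i <;> simp [h]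

/-- The action of the arrow `a` on the carrier space of the representation `x`. -/
noncomputable def arrowMap (x : RepSpace Q d K) (a : Fin Q.numArrows) :
    Carrier Q d K →ₗ[K] Carrier Q d K where
  toFun m := fun jv =>
    if h : jv.1 = Q.tgt a then
      ∑ w : Fin (d (Q.src a)), x ⟨a, (Fin.cast (congrArg d h) jv.2, w)⟩ * m ⟨Q.src a, w⟩
    else 0
  map_add' u v := by
    funext jv
    by_cases h : jv.1 = Q.tgt a <;> simp [h, mul_add, Finset.sum_add_distrib]
  map_smul' c u := by
    funext jv
    by_cases h : jv.1 = Q.tgt a <;>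
      simp [h, Finset.mul_sum, mul_comm, mul_left_comm, mul_assoc]

/-- The action of a word `w = [a_k, …, a_1]` of arrows on the representation `x`
(the arrow `a_1` acts first; non-composable words act as `0`). -/
noncomputable def wordMap (x : RepSpace Q d K) (w : List (Fin Q.numArrows)) :
    Module.End K (Carrier Q d K) :=
  (w.map fun a => (arrowMap Q d K x a : Module.End K (Carrier Q d K))).prod

/-- The submodule `J^l · M_x` of the module `M_x`: the sum of the images of all words of
arrows of length `l` (for an admissible ideal, the radical acts through the arrows). -/
noncomputable def radPow (x : RepSpace Q d K) (l : ℕ) : Submodule K (Carrier Q d K) :=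
  ⨆ w : {w : List (Fin Q.numArrows) // w.length = l},
    LinearMap.range (wordMap Q d K x w.1)

/-- The socle series of `M_x`: `socPow x l = soc_l(M_x)`. -/
noncomputable def socPow (x : RepSpace Q d K) : ℕ → Submodule K (Carrier Q d K)
  | 0 => ⨅ a, LinearMap.ker (arrowMap Q d K x a)
  | (l+1) => ⨅ a, (socPow x l).comap (arrowMap Q d K x a)

/-- The dimension, at the vertex `i`, of a (vertex-graded) subspace `N`. -/
noncomputable def vdim (N : Submodule K (Carrier Q d K)) (i : Fin Q.n) : ℕ :=
  Module.finrank K (N.map (proj Q d K i))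

/-- The radical layering `S(M_x) = (M/JM, JM/J²M, …, J^L M/J^{L+1} M)` of the module `M_x`,
recorded through the dimension vectors of its semisimple layers. -/
noncomputable def radLayering (L : ℕ) (x : RepSpace Q d K) :
    Fin (L+1) → Fin Q.n → ℕ :=
  fun l i => vdim Q d K (radPow Q d K x l) i - vdim Q d K (radPow Q d K x (l+1)) i

/-- The socle layering `S*(M_x) = (soc₀M, soc₁M/soc₀M, …)` of the module `M_x`, recorded
through the dimension vectors of its semisimple layers. -/
noncomputable def socLayering (L : ℕ) (x : RepSpace Q d K) :
    Fin (L+1) → Fin Q.n → ℕ :=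
  fun l i => vdim Q d K (socPow Q d K x l) i -
    (if (l : ℕ) = 0 then 0 else vdim Q d K (socPow Q d K x ((l : ℕ) - 1)) i)

end QuiverData

/-- The dominance order on semisimple sequences (recorded as sequences of dimension
vectors): `dominates S S'` means `S ≤ S'`, i.e. `⊕_{j≤l} S_j ⊆ ⊕_{j≤l} S'_j` for all `l`. -/
def dominates {n L : ℕ} (S S' : Fin (L+1) → Fin n → ℕ) : Prop :=
  ∀ (l : Fin (L+1)) (i : Fin n),
    ∑ j ∈ Finset.univ.filter (fun j => j ≤ l), S j i ≤
      ∑ j ∈ Finset.univ.filter (fun j => j ≤ l), S' j i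

/-- A semisimple sequence has dimension vector `d` if its layers' dimension vectors sum
to `d`. -/
def hasDimVec {n L : ℕ} (S : Fin (L+1) → Fin n → ℕ) (d : Fin n → ℕ) : Prop :=
  ∀ i, ∑ l, S l i = d i

namespace QuiverData

variable (Q : QuiverData) (d : Fin Q.n → ℕ) (K : Type) [Field K]

/-- Evaluation of a formal noncommutative polynomial in the vertices (`Sum.inl`) and
arrows (`Sum.inr`) of `Q` on the representation `x`; an element of the path algebra `KQ`
is represented by such a polynomial. -/
noncomputable def evalRel (x : RepSpace Q d K) :
    FreeAlgebra K (Fin Q.n ⊕ Fin Q.numArrows) →ₐ[K] Module.End K (Carrier Q d K) :=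
  FreeAlgebra.lift K
    (Sum.elim (fun i => (proj Q d K i : Module.End K (Carrier Q d K)))
      (fun a => (arrowMap Q d K x a : Module.End K (Carrier Q d K))))

/-- The affine variety `Rep_d(Λ)` for `Λ = KQ/I`, where the ideal `I` is generated by the
set `R` of relations: the set of points of `RepSpace` annihilating every relation. -/
def RepVar (R : Set (FreeAlgebra K (Fin Q.n ⊕ Fin Q.numArrows))) :
    Set (RepSpace Q d K) :=
  {x | ∀ r ∈ R, evalRel Q d K x r = 0}

/-- The affine variety `Rep_d(Λ)` for the truncated path algebra
`Λ = KQ/⟨all paths of length L+1⟩`. -/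
def TruncRepVar (L : ℕ) : Set (RepSpace Q d K) :=
  {x | ∀ w : List (Fin Q.numArrows), w.length = L + 1 → wordMap Q d K x w = 0}

/-- A submodule of `M_x`, i.e. a subspace stable under the arrows and the vertex
idempotents. -/
def Stable (x : RepSpace Q d K) (N : Submodule K (Carrier Q d K)) : Prop :=
  (∀ a, N.map (arrowMap Q d K x a) ≤ N) ∧ ∀ i, N.map (proj Q d K i) ≤ N

/-- A submodule `N` of `M_x` is indecomposable (as a module). -/
def IndecompSub (x : RepSpace Q d K) (N : Submodule K (Carrier Q d K)) : Prop :=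
  N ≠ ⊥ ∧ ∀ N₁ N₂ : Submodule K (Carrier Q d K),
    Stable Q d K x N₁ → Stable Q d K x N₂ → N₁ ≤ N → N₂ ≤ N →
    N₁ ⊔ N₂ = N → N₁ ⊓ N₂ = ⊥ → N₁ = ⊥ ∨ N₂ = ⊥

/-- The module `M_x` is indecomposable. -/
def IndecompRep (x : RepSpace Q d K) : Prop :=
  IndecompSub Q d K x ⊤

/-- The module `M_x` is uniserial: its submodules form a chain. -/
def UniserialRep (x : RepSpace Q d K) : Prop :=
  ∀ N₁ N₂ : Submodule K (Carrier Q d K),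
    Stable Q d K x N₁ → Stable Q d K x N₂ → N₁ ≤ N₂ ∨ N₂ ≤ N₁

/-- `M_x` decomposes as a direct sum of `s` indecomposable submodules whose dimension
vectors are `D 0, …, D (s-1)`. -/
def DecompWith (x : RepSpace Q d K) (s : ℕ) (D : Fin s → Fin Q.n → ℕ) : Prop :=
  ∃ N : Fin s → Submodule K (Carrier Q d K),
    (∀ r, Stable Q d K x (N r)) ∧
    (∀ r, Disjoint (N r) (⨆ t, ⨆ (_ : t ≠ r), N t)) ∧
    (⨆ r, N r) = ⊤ ∧
    (∀ r, IndecompSub Q d K x (N r)) ∧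
    ∀ r i, vdim Q d K (N r) i = D r i

/-- A homomorphism of representations `M_x → M_y` (for possibly different dimension
vectors): a linear map commuting with the arrow actions and the vertex projections. -/
def RepHom (dx dy : Fin Q.n → ℕ) (x : RepSpace Q dx K) (y : RepSpace Q dy K)
    (φ : Carrier Q dx K →ₗ[K] Carrier Q dy K) : Prop :=
  (∀ a, φ ∘ₗ arrowMap Q dx K x a = arrowMap Q dy K y a ∘ₗ φ) ∧
  ∀ i, φ ∘ₗ proj Q dx K i = proj Q dy K i ∘ₗ φ

/-- The submodule `N` of `M_x` is isomorphic, as a representation, to `M_y`. -/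
def SubrepIso (dy : Fin Q.n → ℕ) (x : RepSpace Q d K)
    (N : Submodule K (Carrier Q d K)) (y : RepSpace Q dy K) : Prop :=
  ∃ φ : Carrier Q d K →ₗ[K] Carrier Q dy K,
    N ⊓ LinearMap.ker φ = ⊥ ∧ N.map φ = ⊤ ∧
    (∀ a, ∀ m ∈ N, φ (arrowMap Q d K x a m) = arrowMap Q dy K y a (φ m)) ∧
    (∀ i, ∀ m ∈ N, φ (proj Q d K i m) = proj Q dy K i (φ m))

/-- The representations `M_x` and `M_y` are isomorphic; the isomorphism classes are
exactly the orbits of the `GL(d)`-action. -/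
def IsoRep (x y : RepSpace Q d K) : Prop :=
  ∃ φ : Carrier Q d K ≃ₗ[K] Carrier Q d K,
    (∀ a m, φ (arrowMap Q d K x a m) = arrowMap Q d K y a (φ m)) ∧
    ∀ i m, φ (proj Q d K i m) = proj Q d K i (φ m)

/-- The `GL(d)`-orbit of the point `x`, i.e. the set of points encoding modules
isomorphic to `M_x`. -/
def orbitSet (x : RepSpace Q d K) : Set (RepSpace Q d K) :=
  {y | IsoRep Q d K x y}

/-- Given a family `P` of varieties `Rep_dv(Λ)` (one for every dimension vector `dv`),
`Ext¹_Λ(M_x, M_y) = 0`: every extension `0 → M_y → E → M_x → 0` of `Λ`-modules splits. -/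
def Ext1Zero (P : ∀ dv : Fin Q.n → ℕ, Set (RepSpace Q dv K))
    (dx dy : Fin Q.n → ℕ) (x : RepSpace Q dx K) (y : RepSpace Q dy K) : Prop :=
  ∀ z ∈ P (fun i => dx i + dy i),
    ∀ (ι : Carrier Q dy K →ₗ[K] Carrier Q (fun i => dx i + dy i) K)
      (π : Carrier Q (fun i => dx i + dy i) K →ₗ[K] Carrier Q dx K),
      RepHom Q K dy (fun i => dx i + dy i) y z ι →
      RepHom Q K (fun i => dx i + dy i) dx z x π →
      Function.Injective ι → Function.Surjective π →
      LinearMap.ker π = LinearMap.range ι →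
      ∃ σ : Carrier Q dx K →ₗ[K] Carrier Q (fun i => dx i + dy i) K,
        RepHom Q K dx (fun i => dx i + dy i) x z σ ∧ π ∘ₗ σ = LinearMap.id

/-- The direct sum `C₁ ⊕ ⋯ ⊕ C_s` of subvarieties `C_r ⊆ Rep_{D r}(Λ)`: the set of
points `x ∈ Rep_d(Λ)` whose module decomposes as `M_x ≅ ⊕_r M^{(r)}` with `M^{(r)}`
encoded by a point of `C_r`. -/
def DirectSumSet (s : ℕ) (D : Fin s → Fin Q.n → ℕ)
    (Cs : ∀ r : Fin s, Set (RepSpace Q (D r) K)) : Set (RepSpace Q d K) :=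
  {x | ∃ N : Fin s → Submodule K (Carrier Q d K),
    (∀ r, Stable Q d K x (N r)) ∧
    (∀ r, Disjoint (N r) (⨆ t, ⨆ (_ : t ≠ r), N t)) ∧
    (⨆ r, N r) = ⊤ ∧
    ∀ r, ∃ y ∈ Cs r, SubrepIso Q d K (D r) x (N r) y}

/-- The endomorphism space `End_Λ(M_x)` of the module `M_x`. -/
def endSpace (x : RepSpace Q d K) :
    Submodule K (Carrier Q d K →ₗ[K] Carrier Q d K) where
  carrier := {φ | RepHom Q K d d x x φ}
  add_mem' := by
    intro φ ψ hφ hψ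
    exact ⟨fun a => by rw [LinearMap.add_comp, LinearMap.comp_add, hφ.1 a, hψ.1 a],
      fun i => by rw [LinearMap.add_comp, LinearMap.comp_add, hφ.2 i, hψ.2 i]⟩
  zero_mem' := by
    exact ⟨fun a => by simp, fun i => by simp⟩
  smul_mem' := by
    intro c φ hφ
    exact ⟨fun a => by rw [LinearMap.smul_comp, LinearMap.comp_smul, hφ.1 a],
      fun i => by rw [LinearMap.smul_comp, LinearMap.comp_smul, hφ.2 i]⟩

/-- A word of arrows is a (composable) path when read in function-composition order. -/
def IsPathWord (w : List (Fin Q.numArrows)) : Prop :=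
  List.Chain' (fun a b => Q.src a = Q.tgt b) w

/-- The quiver `Q` has no oriented cycles. -/
def Acyclic : Prop :=
  ∀ (a : Fin Q.numArrows) (w : List (Fin Q.numArrows)),
    IsPathWord Q (a :: w) →
      Q.tgt a ≠ Q.src ((a :: w).getLast (List.cons_ne_nil a w))

/-- A filtration `M_x = F 0 ⊇ F 1 ⊇ ⋯ ⊇ F (L+1) = 0` by submodules which is governed by
the semisimple sequence `S`: each layer `F l / F (l+1)` is semisimple, isomorphic to `S l`. -/
def Governed (L : ℕ) (x : RepSpace Q d K) (S : Fin (L+1) → Fin Q.n → ℕ)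
    (F : Fin (L+2) → Submodule K (Carrier Q d K)) : Prop :=
  F 0 = ⊤ ∧ F (Fin.last (L+1)) = ⊥ ∧
  (∀ l : Fin (L+1), F l.succ ≤ F l.castSucc) ∧
  (∀ (l : Fin (L+2)) (i : Fin Q.n), (F l).map (proj Q d K i) ≤ F l) ∧
  (∀ (l : Fin (L+1)) (a : Fin Q.numArrows),
      (F l.castSucc).map (arrowMap Q d K x a) ≤ F l.succ) ∧
  ∀ (l : Fin (L+1)) (i : Fin Q.n),
      vdim Q d K (F l.castSucc) i = S l i + vdim Q d K (F l.succ) i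

/-- `Filt S`: the set of points whose module has a filtration governed by `S`. -/
def FiltSet (L : ℕ) (S : Fin (L+1) → Fin Q.n → ℕ) : Set (RepSpace Q d K) :=
  {x | ∃ F, Governed Q d K L x S F}

/-- `Γ(M_x)`: the number of semisimple sequences which are realizable (i.e. occur as the
radical layering of a module in the variety `P`) and which govern some filtration of `M_x`. -/
noncomputable def gammaCount (L : ℕ) (P : Set (RepSpace Q d K))
    (x : RepSpace Q d K) : ℕ :=
  Set.ncard {S : Fin (L+1) → Fin Q.n → ℕ |
    (∃ y ∈ P, radLayering Q d K L y = S) ∧ ∃ F, Governed Q d K L x S F}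

/-- `Sstar` is the generic (= minimal, attained) socle layering of the modules in `W`. -/
def GenSoc (L : ℕ) (W : Set (RepSpace Q d K))
    (Sstar : Fin (L+1) → Fin Q.n → ℕ) : Prop :=
  (∀ x ∈ W, dominates Sstar (socLayering Q d K L x)) ∧
  ∃ x ∈ W, socLayering Q d K L x = Sstar

end QuiverData

namespace QuiverData

variable (Q : QuiverData)

/-- The `i`-th entry of the row vector `e·A` (over `ℤ`), where `A` is the adjacency
matrix of `Q`: the sum of `e (src a)` over all arrows `a` ending at `i`. -/
def inflowZ (e : Fin Q.n → ℤ) (i : Fin Q.n) : ℤ :=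
  ∑ a ∈ Finset.univ.filter (fun a => Q.tgt a = i), e (Q.src a)

/-- The `i`-th entry of the row vector `e·B` (over `ℤ`), where `B` is the transpose of
the adjacency matrix of `Q`. -/
def outflowZ (e : Fin Q.n → ℤ) (i : Fin Q.n) : ℤ :=
  ∑ a ∈ Finset.univ.filter (fun a => Q.src a = i), e (Q.tgt a)

/-- Partial sums `t⁽⁰⁾ + ⋯ + t⁽ˡ⁾` of the recursion
`t⁽⁰⁾ = sup{0, d − d·A}`, `t⁽ˡ⁺¹⁾ = sup{0, (d − ∑_{k≤l} t⁽ᵏ⁾) − (d − ∑_{k≤l} t⁽ᵏ⁾)·A}`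
(computed componentwise). -/
def cumLayer (dz : Fin Q.n → ℤ) : ℕ → Fin Q.n → ℤ
  | 0 => fun i => max 0 (dz i - inflowZ Q dz i)
  | (l+1) => fun i =>
      cumLayer dz l i +
        max 0 ((dz i - cumLayer dz l i) -
          inflowZ Q (fun j => dz j - cumLayer dz l j) i)

/-- The positive part `∑ᵢ eᵢ fᵢ` of the Euler form of `Q`. -/
def eulerHomPart (e f : Fin Q.n → ℕ) : ℕ := ∑ i, e i * f i

/-- The negative part `∑_{α} e_{src α} f_{tgt α}` of the Euler form of `Q`, so that
`⟨e, f⟩ = eulerHomPart e f − eulerExtPart e f`. -/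
def eulerExtPart (e f : Fin Q.n → ℕ) : ℕ :=
  ∑ a, e (Q.src a) * f (Q.tgt a)

end QuiverData

/-- The quiver with a single vertex and `r` loops. -/
def QuiverData.loopQuiver (r : ℕ) : QuiverData :=
  ⟨1, r, fun _ => 0, fun _ => 0⟩

namespace QuiverData

variable (Q : QuiverData) (d : Fin Q.n → ℕ) (K : Type) [Field K]

/-- The variety `Rep_d(Λ)` for `Λ = KQ/⟨Rels⟩`, regarded as a topological space with the
(subspace) Zariski topology. -/
abbrev GenV (Rels : Set (FreeAlgebra K (Fin Q.n ⊕ Fin Q.numArrows))) :=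
  {y : RepSpace Q d K // y ∈ RepVar Q d K Rels}

/-- The variety `Rep_d(Λ)` for the truncated path algebra
`Λ = KQ/⟨paths of length L+1⟩`, regarded as a topological space. -/
abbrev TruncV (L : ℕ) := {y : RepSpace Q d K // y ∈ TruncRepVar Q d K L}

end QuiverData

namespace Stmt14

open QuiverData

/-- `Rep_d(Λ)` for the local truncated path algebra `Λ` on `r` loops with Loewy length
`L+1`, as a topological space. -/
abbrev LocV (K : Type) [Field K] (r L d : ℕ) :=
  TruncV (loopQuiver r) (fun _ => d) K L

/-- The stratum `Rep S` of points whose module has radical layering `S`. -/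
abbrev LocRepS (K : Type) [Field K] (r L d : ℕ) (S : Fin (L+1) → ℕ) :
    Set (LocV K r L d) :=
  {x | radLayering (loopQuiver r) (fun _ => d) K L x.1 = fun l _ => S l}

/-- Condition (2) of Statement 14: `dim S_l ≤ r · dim S_{l−1}` and
`dim S_{l−1} ≤ r · dim S_l` for all `1 ≤ l ≤ L`. -/
def Cond2 (r L : ℕ) (S : Fin (L+1) → ℕ) : Prop :=
  ∀ l : Fin L, S l.succ ≤ r * S l.castSucc ∧ S l.castSucc ≤ r * S l.succ

/-- Condition (3) of Statement 14: `Rep S ≠ ∅` and the reversed sequence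
`(S_L, …, S_0)` is the generic socle layering of the modules in `Rep S`. -/
def Cond3 (K : Type) [Field K] (r L d : ℕ) (S : Fin (L+1) → ℕ) : Prop :=
  (LocRepS K r L d S).Nonempty ∧
  GenSoc (loopQuiver r) (fun _ => d) K L
    {x | x ∈ TruncRepVar (loopQuiver r) (fun _ => d) K L ∧
      radLayering (loopQuiver r) (fun _ => d) K L x = fun l _ => S l}
    (fun l _ => S l.rev)

/-- Condition (4) of Statement 14: `S = S(M)` for a module `M` such that the pair
`(S(M), S*(M))` is a minimal element of the image of `Θ = (radical layering, socle
layering)` in the componentwise dominance order. -/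
def Cond4 (K : Type) [Field K] (r L d : ℕ) (S : Fin (L+1) → ℕ) : Prop :=
  ∃ x : LocV K r L d,
    radLayering (loopQuiver r) (fun _ => d) K L x.1 = (fun l _ => S l) ∧
    ∀ y : LocV K r L d,
      dominates (radLayering (loopQuiver r) (fun _ => d) K L y.1)
        (radLayering (loopQuiver r) (fun _ => d) K L x.1) →
      dominates (socLayering (loopQuiver r) (fun _ => d) K L y.1)
        (socLayering (loopQuiver r) (fun _ => d) K L x.1) →
      (radLayering (loopQuiver r) (fun _ => d) K L y.1 =
          radLayering (loopQuiver r) (fun _ => d) K L x.1 ∧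
        socLayering (loopQuiver r) (fun _ => d) K L y.1 =
          socLayering (loopQuiver r) (fun _ => d) K L x.1)

end Stmt14

/-!
For every module, `Jˡ M` is contained in `soc_{L-l} M`. The module is *rigid* when equality holds
for all `l`, and then its pair of radical and socle layerings is minimal: the partial sums of both
layerings are upper semicontinuous, so a rigid module of `Rep S` does not lie in the closure of
`Rep S'` for any other `S'`. If `S` satisfies condition (2), then linking successive levels of a
graded basis gives a rigid module in `Rep S`.

Conversely, `M` lies in the closure of `Rep S` as soon as it has a descending filtration with
semisimple layers of dimensions `S` and `Rep S` is nonempty, that is, `dim S_{l+1} ≤ r * dim S_l`.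
Among these filtrations of `M` take a pointwise maximal one. If it violated the other half of (2)
at a nonzero layer, one dimension could be moved on to that layer from the preceding one; if its
last layer were zero, a layer of dimension at least 2 could be split. Hence (2) holds if
`d > L + 1`, and all layers have dimension at most 1 if `d ≤ L + 1`. In the first case finitely
many closures of sets `Rep S` cover the variety, and none of them contains another; in the second
case a single one, that of the uniserial modules, is dense.
-/

namespace LocalTruncated

open Module Topology

section Series

variable {ι K V : Type*} [Field K] [AddCommGroup V] [Module K V]

/-- The radical series `l ↦ Jˡ V` of the module that a tuple `A` of endomorphisms of `V` defines:
`Jˡ V` is spanned by the images of the words of length `l` in `A`. -/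
def radSeries (A : ι → End K V) (l : ℕ) : Submodule K V :=
  ⨆ w : List.Vector ι l, LinearMap.range (w.1.map A).prod

/-- The socle series of the module that a tuple `A` of endomorphisms of `V` defines: the `l`-th
term consists of the vectors killed by all words of length `l` in `A`. The indexing is shifted
by one with respect to `QuiverData.socPow`, so that the `0`-th term is `⊥`. -/
def socSeries (A : ι → End K V) (l : ℕ) : Submodule K V :=
  ⨅ w : List.Vector ι l, LinearMap.ker (w.1.map A).prod

variable {A : ι → End K V} {l m n : ℕ}

theorem radSeries_zero : radSeries A 0 = ⊤ :=
  top_le_iff.1 <| le_iSup_of_le ⟨[], rfl⟩ (by simp [End.one_eq_id])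

theorem socSeries_zero : socSeries A 0 = ⊥ :=
  le_bot_iff.1 <| iInf_le_of_le ⟨[], rfl⟩ (by simp [End.one_eq_id])

theorem radSeries_succ : radSeries A (l + 1) = ⨆ a, (radSeries A l).map (A a) := by
  simp only [radSeries, Submodule.map_iSup, ← LinearMap.range_comp]
  apply le_antisymm
  · refine iSup_le fun ⟨w, hw⟩ ↦ ?_
    obtain ⟨a, w, rfl⟩ := List.exists_cons_of_length_eq_add_one hw
    exact le_iSup₂_of_le a ⟨w, Nat.succ.inj hw⟩ (by simp [End.mul_eq_comp])
  · exact iSup₂_le fun a w ↦ le_iSup_of_le (a ::ᵥ w) (by simp [End.mul_eq_comp])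

theorem socSeries_succ : socSeries A (l + 1) = ⨅ a, (socSeries A l).comap (A a) := by
  simp only [socSeries, Submodule.comap_iInf, ← LinearMap.ker_comp]
  apply le_antisymm
  · exact le_iInf₂ fun a w ↦
      iInf_le_of_le ⟨w.1 ++ [a], by simp [w.2]⟩ (by simp [End.mul_eq_comp])
  · refine le_iInf fun ⟨w, hw⟩ ↦ ?_
    obtain ⟨w, a, rfl⟩ := w.eq_nil_or_concat'.resolve_left (by rintro rfl; simp at hw)
    exact iInf₂_le_of_le a ⟨w, by simpa using hw⟩ (by simp [End.mul_eq_comp])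

theorem map_radSeries_le (a : ι) : (radSeries A l).map (A a) ≤ radSeries A (l + 1) :=
  radSeries_succ (A := A) ▸ le_iSup (fun a ↦ (radSeries A l).map (A a)) a

theorem radSeries_antitone : Antitone (radSeries A) := by
  refine antitone_nat_of_succ_le fun l ↦ ?_
  induction l with
  | zero => exact radSeries_zero (A := A) ▸ le_top
  | succ l ih =>
    rw [radSeries_succ (l := l + 1)]
    exact iSup_le fun a ↦ (Submodule.map_mono ih).trans (map_radSeries_le a)

theorem radSeries_eq_bot_iff :
    radSeries A l = ⊥ ↔ ∀ w : List ι, w.length = l → (w.map A).prod = 0 := by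
  simp [radSeries, iSup_eq_bot, LinearMap.range_eq_bot, List.Vector, Subtype.forall]

theorem radSeries_le_socSeries (h : radSeries A (l + m) = ⊥) : radSeries A l ≤ socSeries A m := by
  refine iSup_le fun v ↦ le_iInf fun w ↦ LinearMap.range_le_ker_iff.2 ?_
  rw [← End.mul_eq_comp, ← List.prod_append, ← List.map_append]
  exact radSeries_eq_bot_iff.1 h _ (by simp [v.2, w.2, add_comm])

theorem socSeries_mono : Monotone (socSeries A) := by
  refine monotone_nat_of_le_succ fun l ↦ ?_
  induction l with
  | zero => exact socSeries_zero (A := A) ▸ bot_le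
  | succ l ih =>
    rw [socSeries_succ, socSeries_succ (l := l + 1)]
    exact iInf_mono fun a ↦ Submodule.comap_mono ih

theorem socSeries_eq_top (h : radSeries A n = ⊥) : socSeries A n = ⊤ :=
  top_le_iff.1 <| radSeries_zero (A := A) ▸ radSeries_le_socSeries (by rwa [zero_add])

theorem socSeries_eq_top_of_le (h : radSeries A n = ⊥) (hl : n ≤ l) : socSeries A l = ⊤ :=
  socSeries_eq_top (le_bot_iff.1 (h ▸ radSeries_antitone hl))

theorem radSeries_eq_bot_of_le (h : radSeries A n = ⊥) (hl : n ≤ l) : radSeries A l = ⊥ :=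
  le_bot_iff.1 (h ▸ radSeries_antitone hl)

/-- The radical and the socle series of length `n` coincide up to reversal. These are the modules
whose layerings are minimal, see `IsRigid.of_layeringLE`. -/
def IsRigid (A : ι → End K V) (n : ℕ) : Prop :=
  ∀ l ≤ n, socSeries A (n - l) = radSeries A l

/-- The radical and the socle layering of `B` are dominated by those of `A`. Partial sums of the
layerings are the codimensions of the radicals and the dimensions of the socles, hence the opposite
directions of the two inequalities. -/
def LayeringLE (B A : ι → End K V) : Prop :=
  ∀ l, finrank K (radSeries A l) ≤ finrank K (radSeries B l) ∧
    finrank K (socSeries B l) ≤ finrank K (socSeries A l)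

variable [FiniteDimensional K V] {B : ι → End K V}

theorem IsRigid.of_layeringLE (hA : IsRigid A n) (hB : radSeries B n = ⊥) (h : LayeringLE B A) :
    IsRigid B n ∧ ∀ l ≤ n, finrank K (radSeries B l) = finrank K (radSeries A l) := by
  have hle : ∀ l ≤ n, radSeries B l ≤ socSeries B (n - l) := fun l hl ↦
    radSeries_le_socSeries (by rwa [Nat.add_sub_cancel' hl])
  have hge : ∀ l ≤ n, finrank K (socSeries B (n - l)) ≤ finrank K (radSeries A l) :=
    fun l hl ↦ hA l hl ▸ (h (n - l)).2
  exact ⟨fun l hl ↦ (Submodule.eq_of_le_of_finrank_le (hle l hl) ((hge l hl).trans (h l).1)).symm,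
    fun l hl ↦ ((Submodule.finrank_mono (hle l hl)).trans (hge l hl)).antisymm (h l).1⟩

theorem IsRigid.finrank_socSeries_le (hA : IsRigid A n) (hB : radSeries B n = ⊥)
    (h : ∀ l ≤ n, finrank K (radSeries A l) ≤ finrank K (radSeries B l)) (l : ℕ) :
    finrank K (socSeries A l) ≤ finrank K (socSeries B l) := by
  rcases le_total n l with hl | hl
  · rw [socSeries_eq_top_of_le hB hl, finrank_top]
    exact Submodule.finrank_le _
  · have hsoc := hA (n - l) (Nat.sub_le n l)
    rw [Nat.sub_sub_self hl] at hsoc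
    rw [hsoc]
    exact (h _ (Nat.sub_le n l)).trans (Submodule.finrank_mono
      (radSeries_le_socSeries (by rwa [Nat.sub_add_cancel hl])))

end Series
section Sequences

/-- The sequence `s` of layer dimensions satisfies the bound on the growth of the radical layers of
a module over `r` loops. Sequences of finite length are extended by `0`. -/
def IsRealizable (r : ℕ) (s : ℕ → ℕ) : Prop :=
  ∀ l, s (l + 1) ≤ r * s l

/-- The sequence `f 0, …, f j, p, f (j + 1), …`, for refining a filtration by one more term. -/
def insertAfter {α : Type*} (f : ℕ → α) (j : ℕ) (p : α) (l : ℕ) : α :=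
  if l ≤ j then f l else if l = j + 1 then p else f (l - 1)

variable {α : Type*} {f : ℕ → α} {r j l n d : ℕ} {p : α} {s : ℕ → ℕ}

theorem insertAfter_of_le (h : l ≤ j) : insertAfter f j p l = f l := if_pos h

theorem insertAfter_self : insertAfter f j p (j + 1) = p := by simp [insertAfter]

theorem insertAfter_of_lt (h : j < l) : insertAfter f j p (l + 1) = f l := by
  simp [insertAfter, h.ne', (h.trans l.lt_succ_self).not_ge]

theorem IsRealizable.eq_zero_of_le (hs : IsRealizable r s) (hj : s j = 0) (hl : j ≤ l) :
    s l = 0 := by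
  induction l, hl using Nat.le_induction with
  | base => exact hj
  | succ l _ ih => simpa [ih] using hs l

theorem IsRealizable.eq_ite_of_le_one (hs : IsRealizable r s) (hle : ∀ l, s l ≤ 1)
    (hzero : ∀ l, n ≤ l → s l = 0) (hsum : ∑ l ∈ range n, s l = d) (l : ℕ) :
    s l = if l < d then 1 else 0 := by
  have hsum' : ∑ j ∈ range (max n (l + 1)), s j = d := by
    rw [← hsum, ← sum_range_add_sum_Ico s (le_max_left n (l + 1)), Nat.add_eq_left]
    exact sum_eq_zero fun j hj ↦ hzero j (mem_Ico.1 hj).1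
  have hl : l + 1 ≤ max n (l + 1) := le_max_right _ _
  rcases (Nat.le_one_iff_eq_zero_or_eq_one.1 (hle l)) with h | h
  · have hd : d ≤ l := by
      rw [← hsum', ← sum_range_add_sum_Ico s (l.le_succ.trans hl),
        sum_eq_zero fun j hj ↦ hs.eq_zero_of_le h (mem_Ico.1 hj).1, add_zero]
      simpa using sum_le_card_nsmul (range l) s 1 fun j _ ↦ hle j
    rw [h, if_neg hd.not_gt]
  · have hpos : ∀ j ∈ range (l + 1), 1 ≤ s j := fun j hj ↦ by
      by_contra! h0
      exact absurd (hs.eq_zero_of_le (Nat.lt_one_iff.1 h0) (mem_range_succ_iff.1 hj)) (by omega)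
    have hd : l + 1 ≤ d := by
      rw [← hsum', ← sum_range_add_sum_Ico s hl]
      have := card_nsmul_le_sum (range (l + 1)) s 1 hpos
      rw [card_range, smul_eq_mul, mul_one] at this
      exact this.trans (Nat.le_add_right _ _)
    rw [h, if_pos (Nat.lt_of_succ_le hd)]

theorem IsRealizable.insertAfter (hr : 0 < r) (hs : IsRealizable r s) (hj : 2 ≤ s j)
    (hle : ∀ k, j < k → s k ≤ 1) :
    IsRealizable r (insertAfter (Function.update s j (s j - 1)) j 1) := by
  intro l
  have hsl := hs l
  rcases lt_trichotomy l j with h | rfl | h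
  · rw [insertAfter_of_le h, insertAfter_of_le h.le, Function.update_of_ne h.ne]
    exact (update_le_self_iff.2 (Nat.sub_le _ 1) (l + 1)).trans hsl
  · rw [insertAfter_self, insertAfter_of_le le_rfl, Function.update_self]
    exact Nat.mul_pos hr (by omega)
  · rw [insertAfter_of_lt h, Function.update_of_ne h.ne']
    obtain ⟨l, rfl⟩ := Nat.exists_eq_add_one_of_ne_zero (Nat.ne_zero_of_lt h)
    rcases (Nat.lt_succ_iff.1 h).eq_or_lt with rfl | h'
    · rw [insertAfter_self]
      exact (hle _ h).trans (by omega)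
    · rw [insertAfter_of_lt h', Function.update_of_ne h'.ne']
      exact hs l

theorem IsRealizable.update (hr : 2 ≤ r) (hs : IsRealizable r s) (hj : r * s (j + 1) < s j)
    (hpos : 0 < s (j + 1)) :
    IsRealizable r (Function.update (Function.update s j (s j - 1)) (j + 1) (s (j + 1) + 1)) := by
  intro l
  have hsl := hs l
  rcases eq_or_ne l (j + 1) with rfl | h
  · rw [Function.update_self, Function.update_of_ne (by omega), Function.update_of_ne (by omega)]
    exact hsl.trans (Nat.mul_le_mul_left r (Nat.le_succ _))
  rcases eq_or_ne l j with rfl | h'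
  · rw [Function.update_self, Function.update_of_ne h, Function.update_self]
    have : 2 * s (l + 1) ≤ s l - 1 := (Nat.mul_le_mul_right _ hr).trans (by omega)
    nlinarith
  · rw [Function.update_of_ne (a := l + 1) (by omega), Function.update_of_ne h,
      Function.update_of_ne h']
    exact (update_le_self_iff.2 (Nat.sub_le _ 1) (l + 1)).trans hsl

end Sequences

section Filtrations

variable {ι K V : Type*} [Field K] [AddCommGroup V] [Module K V]

/-- A filtration `V = F 0 ⊇ F 1 ⊇ ⋯ ⊇ F n = 0` by subspaces which each `A a` carries one step
down, so that the layers `F l / F (l + 1)` are semisimple modules. -/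
structure IsLoewyFiltration (A : ι → End K V) (n : ℕ) (F : ℕ → Submodule K V) : Prop where
  zero : F 0 = ⊤
  eq_bot : F n = ⊥
  antitone : Antitone F
  map_le : ∀ l a, (F l).map (A a) ≤ F (l + 1)

/-- The dimension of the `l`-th layer `F l / F (l + 1)` of a descending filtration. -/
noncomputable def layerDim (F : ℕ → Submodule K V) (l : ℕ) : ℕ :=
  finrank K (F l) - finrank K (F (l + 1))

variable {A : ι → End K V} {F : ℕ → Submodule K V} {l n : ℕ}

theorem isLoewyFiltration_radSeries (h : radSeries A n = ⊥) :
    IsLoewyFiltration A n (radSeries A) :=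
  ⟨radSeries_zero, h, radSeries_antitone, fun _ ↦ map_radSeries_le⟩

theorem IsLoewyFiltration.eq_bot_of_le (hF : IsLoewyFiltration A n F) (hl : n ≤ l) : F l = ⊥ :=
  le_bot_iff.1 (hF.eq_bot ▸ hF.antitone hl)

theorem IsLoewyFiltration.radSeries_le (hF : IsLoewyFiltration A n F) (l : ℕ) :
    radSeries A l ≤ F l := by
  induction l with
  | zero => exact hF.zero ▸ le_top
  | succ l ih =>
    rw [radSeries_succ]
    exact iSup_le fun a ↦ (Submodule.map_mono ih).trans (hF.map_le l a)

theorem IsLoewyFiltration.layerDim_eq_zero (hF : IsLoewyFiltration A n F) (hl : n ≤ l) :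
    layerDim F l = 0 := by
  rw [layerDim, hF.eq_bot_of_le hl, finrank_bot, Nat.zero_sub]

section Improvement

variable {j : ℕ} {P : Submodule K V}

theorem le_insertAfter (hF : Antitone F) (hP : F (j + 1) ≤ P) : F ≤ insertAfter F j P := by
  intro l
  rcases lt_trichotomy l (j + 1) with h | rfl | h
  · exact (insertAfter_of_le (Nat.lt_succ_iff.1 h)).ge
  · exact insertAfter_self (f := F) ▸ hP
  · obtain ⟨l, rfl⟩ := Nat.exists_eq_add_one_of_ne_zero (Nat.ne_zero_of_lt h)
    exact insertAfter_of_lt (f := F) (Nat.lt_of_succ_lt_succ h) ▸ hF l.le_succ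

theorem IsLoewyFiltration.insertAfter (hF : IsLoewyFiltration A n F) (hj : j < n)
    (hP : F (j + 1) ≤ P) (hP' : P ≤ F j) :
    IsLoewyFiltration A (n + 1) (insertAfter F j P) where
  zero := by rw [insertAfter_of_le j.zero_le, hF.zero]
  eq_bot := by rw [insertAfter_of_lt hj, hF.eq_bot]
  antitone := by
    refine antitone_nat_of_succ_le fun l ↦ ?_
    rcases lt_trichotomy l j with h | rfl | h
    · rw [insertAfter_of_le h, insertAfter_of_le h.le]
      exact hF.antitone l.le_succ
    · rwa [insertAfter_self, insertAfter_of_le le_rfl]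
    · rw [insertAfter_of_lt h]
      exact le_insertAfter hF.antitone hP l
  map_le l a := by
    rcases lt_trichotomy l j with h | rfl | h
    · rw [insertAfter_of_le h, insertAfter_of_le h.le]
      exact hF.map_le l a
    · rw [insertAfter_self, insertAfter_of_le le_rfl]
      exact (hF.map_le l a).trans hP
    · rw [insertAfter_of_lt h]
      obtain ⟨l, rfl⟩ := Nat.exists_eq_add_one_of_ne_zero (Nat.ne_zero_of_lt h)
      rcases (Nat.lt_succ_iff.1 h).eq_or_lt with rfl | h'
      · rw [insertAfter_self]
        exact (Submodule.map_mono hP').trans (hF.map_le j a)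
      · rw [insertAfter_of_lt h']
        exact hF.map_le l a

theorem layerDim_insertAfter (hP : finrank K P = finrank K (F (j + 1)) + 1) :
    layerDim (LocalTruncated.insertAfter F j P) =
      LocalTruncated.insertAfter (Function.update (layerDim F) j (layerDim F j - 1)) j 1 := by
  funext l
  rcases lt_trichotomy l j with h | rfl | h
  · rw [insertAfter_of_le h.le, Function.update_of_ne h.ne, layerDim, layerDim,
      insertAfter_of_le h.le, insertAfter_of_le h]
  · rw [insertAfter_of_le le_rfl, Function.update_self, layerDim, layerDim, insertAfter_self,
      insertAfter_of_le le_rfl, hP, Nat.sub_sub]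
  · obtain ⟨l, rfl⟩ := Nat.exists_eq_add_one_of_ne_zero (Nat.ne_zero_of_lt h)
    rcases (Nat.lt_succ_iff.1 h).eq_or_lt with rfl | h'
    · rw [insertAfter_self, layerDim, insertAfter_self, insertAfter_of_lt j.lt_succ_self, hP,
        Nat.add_sub_cancel_left]
    · rw [insertAfter_of_lt h', Function.update_of_ne h'.ne', layerDim, layerDim,
        insertAfter_of_lt h', insertAfter_of_lt (h'.trans l.lt_succ_self)]

theorem IsLoewyFiltration.update (hF : IsLoewyFiltration A n F) (hj : j + 1 < n)
    (hP : F (j + 1) ≤ P) (hP' : P ≤ F j ⊓ ⨅ a, (F (j + 2)).comap (A a)) :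
    IsLoewyFiltration A n (Function.update F (j + 1) P) where
  zero := by rw [Function.update_of_ne j.succ_ne_zero.symm, hF.zero]
  eq_bot := by rw [Function.update_of_ne hj.ne', hF.eq_bot]
  antitone := by
    refine antitone_nat_of_succ_le fun l ↦ ?_
    rcases eq_or_ne l j with rfl | h
    · rw [Function.update_self, Function.update_of_ne l.succ_ne_self.symm]
      exact hP'.trans inf_le_left
    · rw [Function.update_of_ne (a := l + 1) (by omega)]
      exact (hF.antitone l.le_succ).trans (le_update_self_iff.2 hP l)
  map_le l a := by
    rcases eq_or_ne l (j + 1) with rfl | h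
    · rw [Function.update_self, Function.update_of_ne (by omega)]
      exact Submodule.map_le_iff_le_comap.2 (hP'.trans (inf_le_right.trans (iInf_le _ a)))
    · rw [Function.update_of_ne h]
      exact (hF.map_le l a).trans (le_update_self_iff.2 hP (l + 1))

end Improvement

variable [FiniteDimensional K V]

theorem layerDim_add (hF : Antitone F) (l : ℕ) :
    layerDim F l + finrank K (F (l + 1)) = finrank K (F l) :=
  Nat.sub_add_cancel (Submodule.finrank_mono (hF l.le_succ))

theorem sum_layerDim_add (hF : Antitone F) (l : ℕ) :
    ∑ j ∈ range l, layerDim F j + finrank K (F l) = finrank K (F 0) := by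
  induction l with
  | zero => simp
  | succ l ih => rw [sum_range_succ, add_assoc, layerDim_add hF, ih]

theorem IsLoewyFiltration.sum_layerDim (hF : IsLoewyFiltration A n F) :
    ∑ l ∈ range n, layerDim F l = finrank K V := by
  have := sum_layerDim_add hF.antitone n
  rwa [hF.eq_bot, hF.zero, finrank_bot, finrank_top, add_zero] at this

theorem IsLoewyFiltration.eq_bot_of_layerDim_eq_zero (hF : IsLoewyFiltration A (n + 1) F)
    (h : layerDim F n = 0) : F n = ⊥ := by
  have := layerDim_add hF.antitone n
  rw [h, hF.eq_bot, finrank_bot] at this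
  exact Submodule.finrank_eq_zero.1 this.symm

theorem exists_sup_eq_of_finrank_eq_layerDim (hF : Antitone F) (l : ℕ) :
    ∃ C, F (l + 1) ⊔ C = F l ∧ finrank K C = layerDim F l := by
  obtain ⟨C, hdisj, hsup⟩ := IsModularLattice.exists_disjoint_and_sup_eq (hF l.le_succ)
  refine ⟨C, hsup, ?_⟩
  rw [layerDim, ← hsup, ← add_zero (finrank K (_ ⊔ C : Submodule K V)), ← finrank_bot K V,
    ← hdisj.eq_bot, Submodule.finrank_sup_add_finrank_inf_eq, Nat.add_sub_cancel_left]

theorem finrank_iSup_map_le [Fintype ι] (A : ι → End K V) (C : Submodule K V) :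
    finrank K (⨆ a, C.map (A a) : Submodule K V) ≤ Fintype.card ι * finrank K C := by
  classical
  have h : ∀ s : Finset ι, finrank K (s.sup fun a ↦ C.map (A a) : Submodule K V) ≤
      #s * finrank K C := by
    intro s
    induction s using Finset.induction_on with
    | empty => simp
    | insert a s ha ih =>
      rw [sup_insert, card_insert_of_notMem ha, add_one_mul, add_comm]
      exact (Submodule.finrank_add_le_finrank_add_finrank _ _).trans
        (add_le_add (Submodule.finrank_map_le (A a) C) ih)
  rw [← sup_univ_eq_iSup]
  exact h univ

theorem finrank_le_finrank_inf_iInf_comap_add [Fintype ι] {M N P : Submodule K V}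
    (hP : P ≤ M) (hN : ∀ a, N.map (A a) ≤ M) :
    finrank K N ≤ finrank K (N ⊓ ⨅ a, P.comap (A a) : Submodule K V) +
      Fintype.card ι * (finrank K M - finrank K P) := by
  let P' : Submodule K M := P.comap M.subtype
  let φ : N →ₗ[K] ι → M ⧸ P' := LinearMap.pi fun a ↦
    P'.mkQ ∘ₗ (A a).restrict fun v hv ↦ hN a (Submodule.mem_map_of_mem hv)
  have hker : finrank K (LinearMap.ker φ) ≤
      finrank K (N ⊓ ⨅ a, P.comap (A a) : Submodule K V) := by
    rw [← Submodule.finrank_map_subtype_eq]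
    refine Submodule.finrank_mono ?_
    rintro _ ⟨v, hv, rfl⟩
    refine ⟨v.2, (Submodule.mem_iInf _).2 fun a ↦ ?_⟩
    simpa [φ, P'] using congrFun hv a
  have hquot : finrank K (M ⧸ P') = finrank K M - finrank K P := by
    rw [Submodule.finrank_quotient, (Submodule.comapSubtypeEquivOfLe hP).finrank_eq]
  have hrange : finrank K (LinearMap.range φ) ≤
      Fintype.card ι * (finrank K M - finrank K P) := by
    simpa [hquot, finrank_pi_fintype] using (LinearMap.range φ).finrank_le
  have := φ.finrank_range_add_finrank_ker
  omega

theorem isRealizable_layerDim_radSeries [Fintype ι] (A : ι → End K V) :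
    IsRealizable (Fintype.card ι) (layerDim (radSeries A)) := by
  intro l
  obtain ⟨C, hsup, hC⟩ := exists_sup_eq_of_finrank_eq_layerDim (radSeries_antitone (A := A)) l
  have hle : radSeries A (l + 1) ≤ radSeries A (l + 2) ⊔ ⨆ a, C.map (A a) := by
    rw [radSeries_succ (l := l), ← hsup]
    refine iSup_le fun a ↦ ?_
    rw [Submodule.map_sup]
    exact sup_le_sup (map_radSeries_le a) (le_iSup (fun a ↦ C.map (A a)) a)
  have hadd := Submodule.finrank_add_le_finrank_add_finrank (radSeries A (l + 2))
    (⨆ a, C.map (A a))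
  rw [layerDim, ← hC]
  exact Nat.sub_le_iff_le_add'.2 <| (Submodule.finrank_mono hle).trans <|
    hadd.trans (Nat.add_le_add_left (finrank_iSup_map_le A C) _)

/-- A Loewy filtration whose sequence of layer dimensions is realizable. The module then lies in the
closure of the modules with that radical layering, and the pointwise maximal filtrations of this
kind give the generic layerings. -/
def IsRealizableFiltration (A : ι → End K V) (r n : ℕ) (F : ℕ → Submodule K V) : Prop :=
  IsLoewyFiltration A n F ∧ IsRealizable r (layerDim F)

theorem exists_maximal_isRealizableFiltration [Fintype ι] (h : radSeries A n = ⊥) :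
    ∃ F, Maximal (IsRealizableFiltration A (Fintype.card ι) n) F := by
  obtain ⟨F, hF, hmax⟩ := exists_minimalFor_of_wellFoundedLT
    (IsRealizableFiltration A (Fintype.card ι) n)
    (fun F (l : Fin n) ↦ OrderDual.toDual (F l))
    ⟨_, isLoewyFiltration_radSeries h, isRealizable_layerDim_radSeries A⟩
  refine ⟨F, hF, fun G hG hle l ↦ ?_⟩
  rcases lt_or_ge l n with hl | hl
  · exact hmax hG (fun i ↦ OrderDual.toDual_le_toDual.2 (hle i)) ⟨l, hl⟩
  · rw [hG.1.eq_bot_of_le hl]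
    exact bot_le

theorem exists_le_le_finrank_eq_add_one {N M : Submodule K V} (h : N < M) :
    ∃ P, N ≤ P ∧ P ≤ M ∧ finrank K P = finrank K N + 1 := by
  obtain ⟨v, hvM, hvN⟩ := SetLike.exists_of_lt h
  exact ⟨N ⊔ K ∙ v, le_sup_left, sup_le h.le ((Submodule.span_singleton_le_iff_mem _ _).2 hvM),
    Submodule.finrank_sup_span_singleton hvN⟩

theorem layerDim_update {j : ℕ} {P : Submodule K V} (hF : Antitone F)
    (hP : finrank K P = finrank K (F (j + 1)) + 1) :
    layerDim (Function.update F (j + 1) P) =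
      Function.update (Function.update (layerDim F) j (layerDim F j - 1)) (j + 1)
        (layerDim F (j + 1) + 1) := by
  have := layerDim_add hF (j + 1)
  funext l
  rcases eq_or_ne l (j + 1) with rfl | h
  · rw [Function.update_self, layerDim, Function.update_self, Function.update_of_ne (by omega)]
    omega
  rw [Function.update_of_ne h, layerDim, Function.update_of_ne h]
  rcases eq_or_ne l j with rfl | h'
  · rw [Function.update_self, Function.update_self, hP, layerDim, Nat.sub_sub]
  · rw [Function.update_of_ne h', Function.update_of_ne (by omega), layerDim]

section Maximal

variable {r j L : ℕ}

theorem layerDim_le_one_of_maximal (hr : 0 < r)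
    (hF : Maximal (IsRealizableFiltration A r (n + 1)) F) (hn : layerDim F n = 0) (l : ℕ) :
    layerDim F l ≤ 1 := by
  obtain ⟨⟨hfil, hreal⟩, hmax⟩ := hF
  -- Otherwise the last layer of dimension at least 2 splits into two layers.
  by_contra! hl
  have hlt : ∀ k, 2 ≤ layerDim F k → k < n := fun k hk ↦ by
    by_contra! h
    exact absurd (hreal.eq_zero_of_le hn h) (by omega)
  obtain ⟨j, ⟨hj, hjmax⟩⟩ : ∃ j, Maximal (fun k ↦ 2 ≤ layerDim F k) j :=
    ((Set.finite_lt_nat n).subset hlt).exists_maximal ⟨l, hl⟩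
  have hle : ∀ k, j < k → layerDim F k ≤ 1 := fun k hk ↦ by
    by_contra! h
    exact hk.not_ge (hjmax h hk.le)
  have hfin := layerDim_add hfil.antitone j
  have hFj : F (j + 1) < F j := (hfil.antitone j.le_succ).lt_of_ne fun h ↦ by
    rw [h] at hfin
    omega
  obtain ⟨P, hP, hP', hrank⟩ := exists_le_le_finrank_eq_add_one hFj
  have hfil' : IsLoewyFiltration A n F :=
    { hfil with eq_bot := hfil.eq_bot_of_layerDim_eq_zero hn }
  have hmem : IsRealizableFiltration A r (n + 1) (insertAfter F j P) :=
    ⟨hfil'.insertAfter (hlt j hj) hP hP',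
      layerDim_insertAfter hrank ▸ hreal.insertAfter hr hj hle⟩
  have : P ≤ F (j + 1) := by
    simpa [insertAfter_self] using hmax hmem (le_insertAfter hfil.antitone hP) (j + 1)
  have := Submodule.finrank_mono this
  omega

theorem layerDim_le_mul_layerDim_succ_of_maximal [Fintype ι] (hr : 2 ≤ Fintype.card ι)
    (hF : Maximal (IsRealizableFiltration A (Fintype.card ι) n) F) (hj : j + 1 < n)
    (hpos : 0 < layerDim F (j + 1)) :
    layerDim F j ≤ Fintype.card ι * layerDim F (j + 1) := by
  obtain ⟨⟨hfil, hreal⟩, hmax⟩ := hF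
  -- Otherwise `F (j + 1)` can be enlarged by one dimension: the vectors of `F j` that all `A a`
  -- send into `F (j + 2)` have codimension at most `card ι * layerDim F (j + 1) < layerDim F j`.
  by_contra! hlt
  have hle : F (j + 1) ≤ F j ⊓ ⨅ a, (F (j + 2)).comap (A a) :=
    le_inf (hfil.antitone j.le_succ)
      (le_iInf fun a ↦ Submodule.map_le_iff_le_comap.1 (hfil.map_le (j + 1) a))
  have hcodim := finrank_le_finrank_inf_iInf_comap_add (hfil.antitone (j + 1).le_succ)
    (hfil.map_le j)
  have hfin := layerDim_add hfil.antitone j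
  have hFj : F (j + 1) < F j ⊓ ⨅ a, (F (j + 2)).comap (A a) := hle.lt_of_ne fun h ↦ by
    rw [← h, ← layerDim] at hcodim
    omega
  obtain ⟨P, hP, hP', hrank⟩ := exists_le_le_finrank_eq_add_one hFj
  have hmem : IsRealizableFiltration A (Fintype.card ι) n (Function.update F (j + 1) P) :=
    ⟨hfil.update hj hP hP', layerDim_update hfil.antitone hrank ▸ hreal.update hr hlt hpos⟩
  have : P ≤ F (j + 1) := by
    simpa using hmax hmem (le_update_self_iff.2 hP) (j + 1)
  have := Submodule.finrank_mono this
  omega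

theorem layerDim_of_maximal [Fintype ι] (hr : 2 ≤ Fintype.card ι)
    (hF : Maximal (IsRealizableFiltration A (Fintype.card ι) (L + 1)) F) :
    (∀ l, layerDim F l ≤ 1) ∨ (∀ l ≤ L, 0 < layerDim F l) ∧
      ∀ l < L, layerDim F l ≤ Fintype.card ι * layerDim F (l + 1) := by
  rcases (layerDim F L).eq_zero_or_pos with hL | hL
  · exact Or.inl (layerDim_le_one_of_maximal (by omega) hF hL)
  · have hpos : ∀ l ≤ L, 0 < layerDim F l := fun l hl ↦ Nat.pos_of_ne_zero fun h ↦
      hL.ne' (hF.prop.2.eq_zero_of_le h hl)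
    exact Or.inr ⟨hpos, fun l hl ↦ layerDim_le_mul_layerDim_succ_of_maximal hr hF
      (Nat.succ_lt_succ hl) (hpos (l + 1) hl)⟩

theorem layerDim_le_mul_of_maximal [Fintype ι] (hr : 2 ≤ Fintype.card ι)
    (hF : Maximal (IsRealizableFiltration A (Fintype.card ι) (L + 1)) F)
    (hL : L + 1 < finrank K V) {l : ℕ} (hl : l < L) :
    layerDim F l ≤ Fintype.card ι * layerDim F (l + 1) := by
  refine ((layerDim_of_maximal hr hF).resolve_left fun h ↦ ?_).2 l hl
  have := sum_le_card_nsmul (range (L + 1)) (layerDim F) 1 fun l _ ↦ h l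
  rw [hF.prop.1.sum_layerDim] at this
  rw [card_range, smul_eq_mul, mul_one] at this
  omega

theorem layerDim_eq_ite_of_maximal [Fintype ι] (hr : 2 ≤ Fintype.card ι)
    (hF : Maximal (IsRealizableFiltration A (Fintype.card ι) (L + 1)) F)
    (hL : finrank K V ≤ L + 1) (l : ℕ) :
    layerDim F l = if l < finrank K V then 1 else 0 := by
  have hfil := hF.prop.1
  refine hF.prop.2.eq_ite_of_le_one ?_ (fun _ ↦ hfil.layerDim_eq_zero) hfil.sum_layerDim l
  rcases layerDim_of_maximal hr hF with h | ⟨hpos, -⟩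
  · exact h
  intro l
  rcases lt_or_ge L l with hl | hl
  · exact (hfil.layerDim_eq_zero hl).le.trans zero_le_one
  by_contra! h
  have : ∑ _l ∈ range (L + 1), 1 < ∑ l ∈ range (L + 1), layerDim F l :=
    sum_lt_sum (fun j hj ↦ hpos j (mem_range_succ_iff.1 hj)) ⟨l, mem_range_succ_iff.2 hl, h⟩
  rw [hfil.sum_layerDim, sum_const, card_range, smul_eq_mul, mul_one] at this
  omega

end Maximal

theorem exists_eq_radSeries_of_map_le (hn : radSeries A n = ⊥)
    (hle : ∀ l, layerDim (radSeries A) l ≤ 1) {N : Submodule K V} (hN : ∀ a, N.map (A a) ≤ N) :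
    ∃ l, N = radSeries A l := by
  classical
  by_cases hbot : N = ⊥
  · exact ⟨n, hbot.trans hn.symm⟩
  obtain ⟨l, hl, hl'⟩ : ∃ l, N ≤ radSeries A l ∧ ¬ N ≤ radSeries A (l + 1) := by
    by_contra! h
    refine hbot (le_bot_iff.1 (hn ▸ ?_))
    exact Nat.rec (radSeries_zero (A := A) ▸ le_top) h n
  have hsup : N ⊔ radSeries A (l + 1) = radSeries A l := by
    refine Submodule.eq_of_le_of_finrank_le (sup_le hl (radSeries_antitone l.le_succ)) ?_
    have h1 := layerDim_add (radSeries_antitone (A := A)) l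
    have h2 := Submodule.finrank_lt_finrank_of_lt (right_lt_sup.2 hl')
    have := hle l
    omega
  have hind : ∀ k, radSeries A l ≤ N ⊔ radSeries A (l + k) := by
    intro k
    induction k with
    | zero => exact le_sup_right
    | succ k ih =>
      refine hsup.ge.trans (sup_le le_sup_left ?_)
      rw [radSeries_succ]
      refine iSup_le fun a ↦ (Submodule.map_mono ih).trans ?_
      rw [Submodule.map_sup]
      exact sup_le_sup (hN a) (map_radSeries_le a)
  refine ⟨l, hl.antisymm ?_⟩
  simpa [radSeries_eq_bot_of_le hn (Nat.le_add_left n l)] using hind n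

end Filtrations
section AdaptedBases

variable {ι κ K V : Type*} [Field K] [AddCommGroup V] [Module K V]

/-- The span of the vectors `b k` of level at least `l`, where `lev k` is the level of `b k`. -/
def levelSpan (b : κ → V) (lev : κ → ℕ) (l : ℕ) : Submodule K V :=
  Submodule.span K (b '' {k | l ≤ lev k})

variable {A : ι → End K V} {F : ℕ → Submodule K V} {lev : κ → ℕ} {l m n : ℕ}

theorem levelSpan_antitone (b : κ → V) (lev : κ → ℕ) :
    Antitone (levelSpan (K := K) b lev) := fun _ _ h ↦
  Submodule.span_mono (Set.image_mono fun _ ↦ h.trans)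

theorem mem_levelSpan (b : κ → V) {k : κ} (h : l ≤ lev k) : b k ∈ levelSpan (K := K) b lev l :=
  Submodule.subset_span ⟨k, h, rfl⟩

theorem mem_levelSpan_iff {b : Basis κ K V} {v : V} :
    v ∈ levelSpan (K := K) b lev l ↔ ∀ k, b.repr v k ≠ 0 → l ≤ lev k := by
  simp [levelSpan, b.mem_span_image, Set.subset_def]

theorem finrank_levelSpan [Fintype κ] (b : Basis κ K V) (lev : κ → ℕ) (l : ℕ) :
    finrank K (levelSpan b lev l : Submodule K V) = #{k | l ≤ lev k} := by
  rw [levelSpan, Set.image_eq_range, ← Fintype.card_subtype]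
  exact finrank_span_eq_card (b.linearIndependent.comp _ Subtype.val_injective)

theorem isLoewyFiltration_levelSpan {b : Basis κ K V} (hlev : ∀ k, lev k < n)
    (hA : ∀ a k k', b.repr (A a (b k)) k' ≠ 0 → lev k < lev k') :
    IsLoewyFiltration A n (levelSpan b lev) where
  zero := by simp [levelSpan, b.span_eq]
  eq_bot := by simp [levelSpan, (hlev _).not_ge]
  antitone := levelSpan_antitone b lev
  map_le l a := by
    rw [levelSpan, Submodule.map_span, Submodule.span_le]
    rintro _ ⟨_, ⟨k, hk, rfl⟩, rfl⟩
    exact mem_levelSpan_iff.2 fun k' hk' ↦ Nat.lt_of_le_of_lt hk (hA a k k' hk')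

theorem levelSpan_le_radSeries {b : κ → V}
    (h : ∀ k, 0 < lev k → ∃ a k', lev k' + 1 = lev k ∧ A a (b k') = b k) (l : ℕ) :
    levelSpan b lev l ≤ radSeries A l := by
  induction l with
  | zero => exact radSeries_zero (A := A) ▸ le_top
  | succ l ih =>
    rw [levelSpan, Submodule.span_le]
    rintro _ ⟨k, hk, rfl⟩
    obtain ⟨a, k', hk', hb⟩ := h k (Nat.zero_lt_of_lt hk)
    rw [← hb]
    exact map_radSeries_le a (Submodule.mem_map_of_mem
      (ih (mem_levelSpan b (Nat.le_of_succ_le_succ (hk.trans_eq hk'.symm)))))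

theorem socSeries_le_levelSpan {b : Basis κ K V}
    (h : ∀ k, lev k + 1 < n → ∃ a k', lev k' = lev k + 1 ∧ ∀ v, b.repr (A a v) k' = b.repr v k)
    (m : ℕ) : socSeries A m ≤ levelSpan b lev (n - m) := by
  suffices H : ∀ v ∈ socSeries A m, ∀ k, lev k + m < n → b.repr v k = 0 from fun v hv ↦
    mem_levelSpan_iff.2 fun k hk ↦ by
      by_contra! hlt
      exact hk (H v hv k (by omega))
  induction m with
  | zero => simp [socSeries_zero]
  | succ m ih =>
    intro v hv k hk
    rw [socSeries_succ, Submodule.mem_iInf] at hv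
    obtain ⟨a, k', hk', hrow⟩ := h k (by omega)
    exact hrow v ▸ ih (A a v) (hv a) k' (by omega)

theorem isRigid_of_levelSpan {b : Basis κ K V} (hF : IsLoewyFiltration A n (levelSpan b lev))
    (hrad : ∀ l, levelSpan b lev l ≤ radSeries A l)
    (hsoc : ∀ m, socSeries A m ≤ levelSpan b lev (n - m)) : IsRigid A n := fun l hl ↦ by
  have hbot : radSeries A n = ⊥ := le_bot_iff.1 (hF.eq_bot ▸ hF.radSeries_le n)
  refine le_antisymm ?_ (radSeries_le_socSeries (by rwa [Nat.add_sub_cancel' hl]))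
  exact ((hsoc (n - l)).trans_eq (by rw [Nat.sub_sub_self hl])).trans (hrad l)

theorem le_levelSpan {b : κ → V} (hbot : ∀ l, n ≤ l → F l = ⊥)
    (h : ∀ l, F l ≤ F (l + 1) ⊔ levelSpan b lev l) (l : ℕ) : F l ≤ levelSpan b lev l := by
  suffices H : ∀ m l, n ≤ l + m → F l ≤ levelSpan b lev l from H n l (Nat.le_add_left n l)
  intro m
  induction m with
  | zero => exact fun l hl ↦ hbot l hl ▸ bot_le
  | succ m ih =>
    exact fun l hl ↦ (h l).trans <|
      sup_le ((ih (l + 1) (by omega)).trans (levelSpan_antitone b lev l.le_succ)) le_rfl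

variable [FiniteDimensional K V]

theorem exists_basis_le_levelSpan [Fintype κ] (hF : IsLoewyFiltration A n F)
    (hlev : ∀ l, layerDim F l = #{k | lev k = l}) :
    ∃ b : Basis κ K V, (∀ k, b k ∈ F (lev k)) ∧ ∀ l, F l ≤ levelSpan b lev l := by
  classical
  have hlayer : ∀ l, ∃ c : {k // lev k = l} → V, (∀ k, c k ∈ F l) ∧
      F l ≤ F (l + 1) ⊔ Submodule.span K (Set.range c) := fun l ↦ by
    obtain ⟨C, hsup, hC⟩ := exists_sup_eq_of_finrank_eq_layerDim hF.antitone l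
    have hcard : finrank K C = Fintype.card {k // lev k = l} := by
      rw [hC, hlev, Fintype.card_subtype]
    let c := (finBasisOfFinrankEq K C hcard).reindex (Fintype.equivFin {k // lev k = l}).symm
    have hspan : Submodule.span K (Set.range fun k ↦ (c k : V)) = C := by
      have := congrArg (Submodule.map C.subtype) c.span_eq
      rwa [Submodule.map_span, ← Set.range_comp, Submodule.map_subtype_top] at this
    exact ⟨fun k ↦ c k, fun k ↦ hsup ▸ Submodule.mem_sup_right (c k).2, by rw [hspan, hsup]⟩
  choose c hcF hcspan using hlayer
  let b (k : κ) : V := c (lev k) ⟨k, rfl⟩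
  have hF_le : ∀ l, F l ≤ levelSpan b lev l := le_levelSpan (fun _ ↦ hF.eq_bot_of_le) fun l ↦
    (hcspan l).trans <| sup_le_sup_left (Submodule.span_mono <| by
      rintro _ ⟨⟨k, rfl⟩, rfl⟩
      exact ⟨k, le_refl (lev k), rfl⟩) _
  have hspan : ⊤ ≤ Submodule.span K (Set.range b) :=
    hF.zero ▸ (hF_le 0).trans (Submodule.span_mono (Set.image_subset_range _ _))
  have hcard : Fintype.card κ = finrank K V := by
    have hmem : ∀ k ∈ (univ : Finset κ), lev k ∈ range n := fun k _ ↦ by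
      rw [mem_range]
      by_contra! h
      have : #{k' | lev k' = lev k} = 0 := hlev (lev k) ▸ hF.layerDim_eq_zero h
      simpa using (Finset.card_eq_zero.1 this ▸ (by simp) : k ∈ (∅ : Finset κ))
    rw [← hF.sum_layerDim, ← card_univ, card_eq_sum_card_fiberwise hmem]
    exact sum_congr rfl fun l _ ↦ (hlev l).symm
  refine ⟨basisOfTopLeSpanOfCardEqFinrank b hspan hcard, ?_⟩
  rw [coe_basisOfTopLeSpanOfCardEqFinrank]
  exact ⟨fun k ↦ hcF _ _, hF_le⟩

end AdaptedBases

section Conjugation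

variable {ι K V : Type*} [Field K] [AddCommGroup V] [Module K V] [FiniteDimensional K V]

theorem finrank_radSeries_conj_le {N : ι → End K V} {F : ℕ → Submodule K V} {n : ℕ}
    (hF : IsLoewyFiltration N n F) {g h : End K V} {c : K} (hgh : h * g = c • 1) (l : ℕ) :
    finrank K (radSeries (fun a ↦ g * N a * h) l) ≤ finrank K (F l) := by
  cases l with
  | zero => rw [hF.zero, radSeries_zero]
  | succ l =>
    refine (Submodule.finrank_mono ?_).trans (Submodule.finrank_map_le g (F (l + 1)))
    induction l with
    | zero =>
      rw [radSeries_succ, iSup_le_iff]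
      rintro a _ ⟨v, -, rfl⟩
      exact Submodule.mem_map_of_mem (hF.map_le 0 a ⟨h v, hF.zero ▸ trivial, rfl⟩)
    | succ l ih =>
      rw [radSeries_succ, iSup_le_iff]
      refine fun a ↦ (Submodule.map_mono ih).trans ?_
      rintro _ ⟨_, ⟨v, hv, rfl⟩, rfl⟩
      have hhg : h (g v) = c • v := LinearMap.congr_fun hgh v
      simp only [Module.End.mul_apply, hhg, map_smul]
      exact Submodule.smul_mem _ c
        (Submodule.mem_map_of_mem (hF.map_le (l + 1) a (Submodule.mem_map_of_mem hv)))

end Conjugation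

section Zariski

variable {σ τ K : Type} [Field K]

theorem isOpen_eval_ne_zero (p : MvPolynomial σ K) :
    IsOpen[zariskiTopology σ K] {x | MvPolynomial.eval x p ≠ 0} :=
  TopologicalSpace.isOpen_generateFrom_of_mem ⟨p, rfl⟩

theorem continuous_eval (q : τ → MvPolynomial σ K) :
    Continuous[zariskiTopology σ K, zariskiTopology τ K]
      fun x k ↦ MvPolynomial.eval x (q k) := by
  let _ := zariskiTopology σ K
  refine continuous_generateFrom_iff.2 ?_
  rintro _ ⟨p, rfl⟩
  convert isOpen_eval_ne_zero (MvPolynomial.bind₁ q p) using 1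
  simp only [← MvPolynomial.coe_aeval_eq_eval, RingHom.coe_coe, MvPolynomial.aeval_bind₁]
  rfl

theorem isTopologicalBasis_eval_ne_zero :
    @TopologicalSpace.IsTopologicalBasis _ (zariskiTopology σ K)
      {U | ∃ p : MvPolynomial σ K, U = {x | MvPolynomial.eval x p ≠ 0}} := by
  let _ := zariskiTopology σ K
  rw [← Set.insert_eq_of_mem (a := Set.univ)
    (s := {U | ∃ p : MvPolynomial σ K, U = {x | MvPolynomial.eval x p ≠ 0}}) ⟨1, by ext; simp⟩]
  refine TopologicalSpace.isTopologicalBasis_of_subbasis_of_inter rfl ?_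
  rintro _ ⟨p, rfl⟩ _ ⟨q, rfl⟩
  exact ⟨p * q, by ext; simp⟩

theorem isIrreducible_univ_zariskiTopology [Infinite K] :
    @IsIrreducible _ (zariskiTopology σ K) Set.univ := by
  let _ := zariskiTopology σ K
  refine ⟨⟨0, trivial⟩, ?_⟩
  rintro u v hu hv ⟨x, -, hx⟩ ⟨y, -, hy⟩
  obtain ⟨_, ⟨p, rfl⟩, hxp, hpu⟩ :=
    isTopologicalBasis_eval_ne_zero.exists_subset_of_mem_open hx hu
  obtain ⟨_, ⟨q, rfl⟩, hyq, hqv⟩ :=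
    isTopologicalBasis_eval_ne_zero.exists_subset_of_mem_open hy hv
  have hp : p ≠ 0 := by rintro rfl; simp at hxp
  have hq : q ≠ 0 := by rintro rfl; simp at hyq
  obtain ⟨z, hz⟩ : ∃ z, MvPolynomial.eval z (p * q) ≠ 0 := by
    by_contra! h
    exact mul_ne_zero hp hq (MvPolynomial.funext fun z ↦ by rw [h z, map_zero])
  rw [map_mul] at hz
  exact ⟨z, trivial, hpu (left_ne_zero_of_mul hz), hqv (right_ne_zero_of_mul hz)⟩

end Zariski

section Minors

variable {K m n : Type*} [Field K] [Fintype n]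

theorem exists_linearIndependent_row_of_le_rank [Finite m] (M : Matrix m n K) {c : ℕ}
    (hc : c ≤ M.rank) : ∃ f : Fin c → m, LinearIndependent K (M.submatrix f id).row := by
  rw [M.rank_eq_finrank_span_row] at hc
  obtain ⟨v, hv, -, hli⟩ := Submodule.exists_fun_fin_finrank_span_eq K (Set.range M.row)
  choose f hf using hv
  refine ⟨f ∘ Fin.castLE hc, ?_⟩
  have hrow : (M.submatrix (f ∘ Fin.castLE hc) id).row = v ∘ Fin.castLE hc :=
    funext fun k ↦ hf _
  exact hrow ▸ hli.comp _ (Fin.castLE_injective hc)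

theorem le_rank_iff_exists_minor_ne_zero [Finite m] (M : Matrix m n K) (c : ℕ) :
    c ≤ M.rank ↔ ∃ (f : Fin c → m) (g : Fin c → n), (M.submatrix f g).det ≠ 0 := by
  constructor
  · intro h
    obtain ⟨f, hf⟩ := exists_linearIndependent_row_of_le_rank M h
    have hrank : c ≤ (M.submatrix f id).transpose.rank := by
      rw [Matrix.rank_transpose, hf.rank_matrix, Fintype.card_fin]
    obtain ⟨g, hg⟩ := exists_linearIndependent_row_of_le_rank _ hrank
    refine ⟨f, g, ?_⟩
    rw [← Matrix.det_transpose]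
    have hunit := Matrix.linearIndependent_rows_iff_isUnit.1 hg
    exact ((Matrix.isUnit_iff_isUnit_det _).1 hunit).ne_zero
  · rintro ⟨f, g, h⟩
    calc c = (M.submatrix f g).rank := by rw [Matrix.rank_of_det_ne_zero h, Fintype.card_fin]
      _ ≤ M.rank := M.rank_submatrix_le f g

end Minors

section WordMatrices

variable {α n R : Type*}

/-- The matrix whose columns are the columns of all products of `l` of the matrices `P a`. Its
column space is the `l`-th term of the radical series of `P`. -/
def wordColumns [Fintype n] [DecidableEq n] [Semiring R] (P : α → Matrix n n R) (l : ℕ) :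
    Matrix n (List.Vector α l × n) R :=
  Matrix.of fun i wj ↦ (wj.1.1.map P).prod i wj.2

/-- The matrix whose rows are the rows of all products of `l` of the matrices `P a`. Its null
space is the `l`-th term of the socle series of `P`. -/
def wordRows [Fintype n] [DecidableEq n] [Semiring R] (P : α → Matrix n n R) (l : ℕ) :
    Matrix (List.Vector α l × n) n R :=
  Matrix.of fun wi j ↦ (wi.1.1.map P).prod wi.2 j

variable [Fintype n] [DecidableEq n]

theorem map_prod_matrix {S : Type*} [Semiring R] [Semiring S] (f : R →+* S)
    (P : α → Matrix n n R) (w : List α) :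
    (w.map P).prod.map f = (w.map fun a ↦ (P a).map f).prod := by
  rw [← RingHom.mapMatrix_apply, map_list_prod, List.map_map]
  rfl

variable {K : Type*} [Field K]

theorem toLin'_list_prod (P : α → Matrix n n K) (w : List α) :
    (w.map fun a ↦ (P a).toLin').prod = (w.map P).prod.toLin' := by
  change _ = Matrix.toLinAlgEquiv' _
  rw [map_list_prod, List.map_map]
  rfl

theorem finrank_radSeries_toLin' [Fintype α] (P : α → Matrix n n K) (l : ℕ) :
    finrank K (radSeries (fun a ↦ (P a).toLin') l) = (wordColumns P l).rank := by
  have hcol : Set.range (wordColumns P l).col =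
      ⋃ w : List.Vector α l, Set.range (w.1.map P).prod.col := by
    ext v
    simp only [Set.mem_iUnion, Set.mem_range, Prod.exists]
    rfl
  have hrad : radSeries (fun a ↦ (P a).toLin') l =
      Submodule.span K (Set.range (wordColumns P l).col) := by
    rw [hcol, Submodule.span_iUnion]
    exact iSup_congr fun w ↦ by rw [toLin'_list_prod, Matrix.range_toLin']
  rw [Matrix.rank_eq_finrank_span_cols, hrad]

theorem socSeries_toLin' (P : α → Matrix n n K) (l : ℕ) :
    socSeries (fun a ↦ (P a).toLin') l = LinearMap.ker (wordRows P l).mulVecLin := by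
  ext v
  simp only [socSeries, toLin'_list_prod, Submodule.mem_iInf, LinearMap.mem_ker,
    Matrix.toLin'_apply, Matrix.mulVecLin_apply, funext_iff, Prod.forall]
  rfl

theorem finrank_socSeries_toLin' [Finite α] (P : α → Matrix n n K) (l : ℕ) :
    (wordRows P l).rank + finrank K (socSeries (fun a ↦ (P a).toLin') l) = Fintype.card n := by
  have := Fintype.ofFinite α
  rw [socSeries_toLin', Matrix.rank, LinearMap.finrank_range_add_finrank_ker,
    finrank_fintype_fun_eq_card]

end WordMatrices

section Semicontinuity

variable {σ K : Type} [Field K] {α n : Type*} [Fintype n]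

theorem isOpen_le_rank {m : Type*} [Finite m] (P : Matrix m n (MvPolynomial σ K)) (c : ℕ) :
    IsOpen[zariskiTopology σ K] {x | c ≤ (P.map (MvPolynomial.eval x)).rank} := by
  let _ := zariskiTopology σ K
  simp only [le_rank_iff_exists_minor_ne_zero, Set.ofPred_exists]
  refine isOpen_iUnion fun f ↦ isOpen_iUnion fun g ↦ ?_
  convert isOpen_eval_ne_zero (P.submatrix f g).det using 4 with x
  rw [RingHom.map_det, RingHom.mapMatrix_apply, Matrix.submatrix_map]

variable [DecidableEq n] [Finite α] (P : α → Matrix n n (MvPolynomial σ K)) (l c : ℕ)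

theorem isOpen_le_finrank_radSeries :
    IsOpen[zariskiTopology σ K]
      {x | c ≤ finrank K (radSeries (fun a ↦ ((P a).map (MvPolynomial.eval x)).toLin') l)} := by
  have := Fintype.ofFinite α
  convert isOpen_le_rank (wordColumns P l) c using 4 with x
  rw [finrank_radSeries_toLin']
  congr 1
  ext i wj
  simp only [wordColumns, ← map_prod_matrix, Matrix.of_apply, Matrix.map_apply]

theorem isOpen_finrank_socSeries_le :
    IsOpen[zariskiTopology σ K]
      {x | finrank K (socSeries (fun a ↦ ((P a).map (MvPolynomial.eval x)).toLin') l) ≤ c} := by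
  convert isOpen_le_rank (wordRows P l) (Fintype.card n - c) using 3 with x
  have hmap : (wordRows P l).map (MvPolynomial.eval x) =
      wordRows (fun a ↦ (P a).map (MvPolynomial.eval x)) l := by
    ext wi j
    simp only [wordRows, ← map_prod_matrix, Matrix.of_apply, Matrix.map_apply]
  have := finrank_socSeries_toLin' (fun a ↦ (P a).map (MvPolynomial.eval x)) l
  rw [hmap]
  omega

end Semicontinuity

section LevelCounts

variable {κ : Type*} [Fintype κ] (lev : κ → ℕ)

theorem card_level_add_card_succ_le (l : ℕ) :
    #{k | lev k = l} + #{k | l + 1 ≤ lev k} = #{k | l ≤ lev k} := by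
  classical
  rw [← card_union_of_disjoint (disjoint_filter.2 fun _ _ h ↦ by omega), ← filter_or]
  exact congrArg card (filter_congr fun _ _ ↦ by omega)

theorem layerDim_radSeries_eq_card_iff {α K : Type*} [Field K] {A : α → End K (κ → K)} :
    (∀ l, layerDim (radSeries A) l = #{k | lev k = l}) ↔
      ∀ l, finrank K (radSeries A l) = #{k | l ≤ lev k} := by
  constructor
  · intro h l
    induction l with
    | zero => rw [radSeries_zero]; simp
    | succ l ih =>
      have h₁ := layerDim_add (radSeries_antitone (A := A)) l
      have h₂ := card_level_add_card_succ_le lev l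
      rw [h, ih] at h₁
      omega
  · intro h l
    have := card_level_add_card_succ_le lev l
    rw [layerDim, h, h]
    omega

end LevelCounts

section Parametrization

variable {κ : Type*} [Fintype κ] [DecidableEq κ]

/-- The matrix `G * N' * adj G`, where `N'` keeps only those entries of `N` that strictly raise the
level function `lev`. These are the matrices respecting a Loewy filtration with layers of dimension
`#{k | lev k = l}`; the adjugate replaces the inverse of `G` so that they depend polynomially on
`G` and `N`. -/
def conjRaising {R : Type*} [CommRing R] (lev : κ → ℕ) (G N : Matrix κ κ R) : Matrix κ κ R :=
  G * Matrix.of (fun i j ↦ if lev j < lev i then N i j else 0) * G.adjugate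

variable (lev : κ → ℕ)

theorem map_conjRaising {R S : Type*} [CommRing R] [CommRing S] (f : R →+* S)
    (G N : Matrix κ κ R) :
    (conjRaising lev G N).map f = conjRaising lev (G.map f) (N.map f) := by
  have hN : (Matrix.of fun i j ↦ if lev j < lev i then N i j else 0).map f =
      Matrix.of fun i j ↦ if lev j < lev i then N.map f i j else 0 := by
    ext i j
    simp [apply_ite f]
  rw [conjRaising, Matrix.map_mul, Matrix.map_mul, hN, ← RingHom.mapMatrix_apply f G.adjugate,
    RingHom.map_adjugate, RingHom.mapMatrix_apply, conjRaising]

variable {α K : Type*} [Field K]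

theorem finrank_radSeries_conjRaising_le (G : Matrix κ κ K) (N : α → Matrix κ κ K) (l : ℕ) :
    finrank K (radSeries (fun a ↦ (conjRaising lev G (N a)).toLin') l) ≤ #{k | l ≤ lev k} := by
  set N' : α → Matrix κ κ K := fun a ↦
    Matrix.of fun i j ↦ if lev j < lev i then N a i j else 0
  have hF : IsLoewyFiltration (fun a ↦ (N' a).toLin') (univ.sup lev + 1)
      (levelSpan (Pi.basisFun K κ) lev) := by
    refine isLoewyFiltration_levelSpan
      (fun k ↦ Nat.lt_succ_of_le (le_sup (mem_univ k))) fun a k k' h ↦ ?_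
    by_contra hlt
    simp [N', hlt] at h
  have hadj : G.adjugate.toLin' * G.toLin' = G.det • 1 := by
    rw [Module.End.mul_eq_comp, ← Matrix.toLin'_mul, Matrix.adjugate_mul, map_smul,
      Matrix.toLin'_one]
    rfl
  have hconj : (fun a ↦ (conjRaising lev G (N a)).toLin') =
      fun a ↦ G.toLin' * (N' a).toLin' * G.adjugate.toLin' := funext fun a ↦ by
    rw [conjRaising, Matrix.toLin'_mul, Matrix.toLin'_mul]
    rfl
  rw [hconj, ← finrank_levelSpan (Pi.basisFun K κ) lev]
  exact finrank_radSeries_conj_le hF hadj l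

theorem exists_conjRaising_eq {A : α → End K (κ → K)} {n : ℕ} {F : ℕ → Submodule K (κ → K)}
    (hF : IsLoewyFiltration A n F) (hlev : ∀ l, layerDim F l = #{k | lev k = l}) :
    ∃ (G : Matrix κ κ K) (N : α → Matrix κ κ K), ∀ a,
      (conjRaising lev G (N a)).toLin' = A a := by
  obtain ⟨b, hb, hle⟩ := exists_basis_le_levelSpan hF hlev
  have hraise : ∀ a k k', b.repr (A a (b k)) k' ≠ 0 → lev k < lev k' := fun a k ↦
    mem_levelSpan_iff.1 (hle _ (hF.map_le _ a ⟨b k, hb k, rfl⟩))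
  set G := (Pi.basisFun K κ).toMatrix b
  have hG : G.det ≠ 0 :=
    (Matrix.isUnit_det_of_right_inverse ((Pi.basisFun K κ).toMatrix_mul_toMatrix_flip b)).ne_zero
  refine ⟨G, fun a ↦ G.det⁻¹ • LinearMap.toMatrix b b (A a), fun a ↦ ?_⟩
  have hN : (Matrix.of fun i j ↦ if lev j < lev i then
      (G.det⁻¹ • LinearMap.toMatrix b b (A a)) i j else 0) =
        G.det⁻¹ • LinearMap.toMatrix b b (A a) := by
    ext i j
    simp only [Matrix.of_apply, Matrix.smul_apply, smul_eq_mul, LinearMap.toMatrix_apply]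
    split_ifs with h
    · rfl
    · rw [not_ne_iff.1 (mt (hraise a j i) h), mul_zero]
  have hconj : G * LinearMap.toMatrix b b (A a) = LinearMap.toMatrix' (A a) * G := by
    rw [← LinearMap.toMatrix_eq_toMatrix', linearMap_toMatrix_mul_basis_toMatrix,
      basis_toMatrix_mul_linearMap_toMatrix]
  rw [conjRaising, hN, Matrix.mul_smul, hconj, Matrix.smul_mul, Matrix.mul_assoc,
    Matrix.mul_adjugate, Matrix.mul_smul, Matrix.mul_one, smul_smul, inv_mul_cancel₀ hG, one_smul,
    Matrix.toLin'_toMatrix']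

end Parametrization

section Stratum

variable {α κ τ K : Type} [Fintype κ] [DecidableEq κ] [Field K]

/-- The tuple of endomorphisms of `κ → K` whose matrix entries are the coordinates of `x`, arranged
according to `e`. -/
def entryEnd (e : α × κ × κ ≃ τ) (x : τ → K) (a : α) : End K (κ → K) :=
  (Matrix.of fun i j ↦ x (e (a, i, j))).toLin'

variable (e : α × κ × κ ≃ τ) (lev : κ → ℕ)

theorem entryEnd_eq_map_eval (x : τ → K) : entryEnd e x = fun a ↦
    ((Matrix.of fun i j ↦ (MvPolynomial.X (e (a, i, j)) : MvPolynomial τ K)).map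
      (MvPolynomial.eval x)).toLin' := by
  funext a
  refine congrArg Matrix.toLin' (Matrix.ext fun i j ↦ ?_)
  simp only [Matrix.map_apply, Matrix.of_apply, MvPolynomial.eval_X]

theorem isOpen_le_finrank_radSeries_entryEnd [Finite α] (l c : ℕ) :
    IsOpen[zariskiTopology τ K] {x | c ≤ finrank K (radSeries (entryEnd e x) l)} := by
  convert isOpen_le_finrank_radSeries (K := K)
    (fun a ↦ Matrix.of fun i j ↦ MvPolynomial.X (e (a, i, j))) l c using 3 with x
  rw [entryEnd_eq_map_eval]

theorem isOpen_finrank_socSeries_entryEnd_le [Finite α] (l c : ℕ) :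
    IsOpen[zariskiTopology τ K] {x | finrank K (socSeries (entryEnd e x) l) ≤ c} := by
  convert isOpen_finrank_socSeries_le (K := K)
    (fun a ↦ Matrix.of fun i j ↦ MvPolynomial.X (e (a, i, j))) l c using 3 with x
  rw [entryEnd_eq_map_eval]

/-- The point whose tuple of matrices is `a ↦ conjRaising lev G (N a)`, where the entries of `G`
and of the `N a` are the coordinates of `p`. -/
def raisingPoint {R : Type*} [CommRing R] (p : (κ × κ) ⊕ (α × κ × κ) → R) (t : τ) : R :=
  conjRaising lev (Matrix.of fun i j ↦ p (Sum.inl (i, j)))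
    (Matrix.of fun i j ↦ p (Sum.inr ((e.symm t).1, i, j))) (e.symm t).2.1 (e.symm t).2.2

theorem map_raisingPoint {R S : Type*} [CommRing R] [CommRing S] (f : R →+* S)
    (p : (κ × κ) ⊕ (α × κ × κ) → R) (t : τ) :
    f (raisingPoint e lev p t) = raisingPoint e lev (f ∘ p) t :=
  congrFun₂ (map_conjRaising lev f _ _) _ _

theorem entryEnd_raisingPoint (p : (κ × κ) ⊕ (α × κ × κ) → K) (a : α) :
    entryEnd e (raisingPoint e lev p) a = (conjRaising lev (Matrix.of fun i j ↦ p (Sum.inl (i, j)))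
      (Matrix.of fun i j ↦ p (Sum.inr (a, i, j)))).toLin' := by
  simp only [entryEnd, raisingPoint, Equiv.symm_apply_apply]
  rfl

theorem isIrreducible_range_raisingPoint [Infinite K] :
    @IsIrreducible (τ → K) (zariskiTopology τ K) (Set.range (raisingPoint e lev)) := by
  let _ := zariskiTopology τ K
  let _ := zariskiTopology ((κ × κ) ⊕ (α × κ × κ)) K
  rw [← Set.image_univ]
  refine isIrreducible_univ_zariskiTopology.image _ (Continuous.continuousOn ?_)
  convert continuous_eval (K := K) (raisingPoint e lev MvPolynomial.X) using 3 with p t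
  simp [map_raisingPoint, Function.comp_def]

theorem mem_range_raisingPoint {x : τ → K} {n : ℕ} {F : ℕ → Submodule K (κ → K)}
    (hF : IsLoewyFiltration (entryEnd e x) n F) (hlev : ∀ l, layerDim F l = #{k | lev k = l}) :
    x ∈ Set.range (raisingPoint e lev) := by
  obtain ⟨G, N, hGN⟩ := exists_conjRaising_eq lev hF hlev
  refine ⟨Sum.elim (fun ij ↦ G ij.1 ij.2) fun aij ↦ N aij.1 aij.2.1 aij.2.2, funext fun t ↦ ?_⟩
  obtain ⟨⟨a, i, j⟩, rfl⟩ := e.surjective t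
  have := congrFun₂ (Matrix.toLin'.injective (hGN a)) i j
  simp only [raisingPoint, Equiv.symm_apply_apply]
  exact this

/-- The points whose tuple of endomorphisms has radical layers of dimension `#{k | lev k = l}`. -/
def stratum (K : Type) [Field K] : Set (τ → K) :=
  {x | ∀ l, layerDim (radSeries (entryEnd e x)) l = #{k | lev k = l}}

theorem exists_isOpen_stratum_eq [Finite α] :
    ∃ U, IsOpen[zariskiTopology τ K] U ∧
      stratum e lev K = Set.range (raisingPoint e lev) ∩ U := by
  let _ := zariskiTopology τ K
  have hvanish : ∀ l, univ.sup lev < l → #{k | l ≤ lev k} = 0 := fun l hl ↦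
    card_eq_zero.2 (filter_eq_empty_iff.2 fun k _ ↦
      not_le.2 ((le_sup (mem_univ k)).trans_lt hl))
  refine ⟨⋂ l ∈ range (univ.sup lev + 1), {x | #{k | l ≤ lev k} ≤
    finrank K (radSeries (entryEnd e x) l)}, isOpen_biInter_finset fun l _ ↦
      isOpen_le_finrank_radSeries_entryEnd e l _, ?_⟩
  ext x
  rw [stratum, Set.mem_ofPred_eq, Set.mem_inter_iff]
  constructor
  · intro hx
    have hcard := (layerDim_radSeries_eq_card_iff lev).1 hx
    have hbot : radSeries (entryEnd e x) (univ.sup lev + 1) = ⊥ :=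
      Submodule.finrank_eq_zero.1 ((hcard _).trans (hvanish _ (Nat.lt_succ_self _)))
    refine ⟨mem_range_raisingPoint e lev (isLoewyFiltration_radSeries hbot) hx, ?_⟩
    simp only [Set.mem_iInter]
    exact fun l _ ↦ (hcard l).ge
  · rintro ⟨⟨p, rfl⟩, hU⟩
    simp only [Set.mem_iInter] at hU
    refine (layerDim_radSeries_eq_card_iff lev).2 fun l ↦ le_antisymm ?_ ?_
    · rw [show entryEnd e (raisingPoint e lev p) = _ from funext (entryEnd_raisingPoint e lev p)]
      exact finrank_radSeries_conjRaising_le lev _ _ l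
    · rcases le_or_gt l (univ.sup lev) with hl | hl
      · exact hU l (mem_range.2 (Nat.lt_succ_of_le hl))
      · exact (hvanish l hl).le.trans (Nat.zero_le _)

theorem range_raisingPoint_subset_closure_stratum [Finite α] [Infinite K]
    (hne : (stratum e lev K).Nonempty) :
    Set.range (raisingPoint e lev) ⊆ @closure _ (zariskiTopology τ K) (stratum e lev K) := by
  let _ := zariskiTopology τ K
  obtain ⟨U, hU, h⟩ := exists_isOpen_stratum_eq (K := K) e lev
  rw [h] at hne ⊢
  exact subset_closure_inter_of_isPreirreducible_of_isOpen
    (isIrreducible_range_raisingPoint e lev).isPreirreducible hU hne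

theorem isIrreducible_stratum [Finite α] [Infinite K] (hne : (stratum e lev K).Nonempty) :
    @IsIrreducible _ (zariskiTopology τ K) (stratum e lev K) := by
  let _ := zariskiTopology τ K
  obtain ⟨U, -, h⟩ := exists_isOpen_stratum_eq (K := K) e lev
  have hclosure : closure (stratum e lev K) = closure (Set.range (raisingPoint e lev)) :=
    (closure_mono (h ▸ Set.inter_subset_left)).antisymm
      (closure_minimal (range_raisingPoint_subset_closure_stratum e lev hne) isClosed_closure)
  rw [← isIrreducible_iff_closure, hclosure, isIrreducible_iff_closure]
  exact isIrreducible_range_raisingPoint e lev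

end Stratum

section Model

theorem exists_link_iff_eq {p q r j : ℕ} (hq : q ≤ r * p) (hj : j < q) :
    ∃ a < r, ∃ i < p, ∀ j', (j' = i + a * p ∨ i = j' + a * q) ↔ j' = j := by
  have hjp : j < r * p := hj.trans_le hq
  have hp : 0 < p := Nat.pos_of_mul_pos_left (Nat.zero_lt_of_lt hjp)
  have hdiv : j % p + j / p * p = j := Nat.mod_add_div' j p
  refine ⟨j / p, Nat.div_lt_of_lt_mul (by rwa [mul_comm]), j % p, Nat.mod_lt j hp, fun j' ↦ ?_⟩
  rw [hdiv]
  refine ⟨?_, Or.inl⟩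
  rintro (h | h)
  · exact h
  · rcases Nat.eq_zero_or_pos (j / p) with h₀ | h₀
    · simp only [h₀, zero_mul, add_zero] at h hdiv
      exact h.symm.trans hdiv
    · have := Nat.le_mul_of_pos_left q h₀
      have := Nat.mod_le j p
      omega

variable {κ : Type*} [Fintype κ] (lev : κ → ℕ)

theorem exists_pos_existsUnique : ∃ pos : κ → ℕ, (∀ k, pos k < #{k' | lev k' = lev k}) ∧
    ∀ l, ∀ j < #{k | lev k = l}, ∃! k, lev k = l ∧ pos k = j := by
  have e (l : ℕ) : {k // lev k = l} ≃ Fin #{k | lev k = l} :=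
    Fintype.equivFinOfCardEq (Fintype.card_subtype _)
  let pos (k : κ) : ℕ := e (lev k) ⟨k, rfl⟩
  have hpos : ∀ {l} (k : {k // lev k = l}), pos k = e l k := by
    rintro _ ⟨k, rfl⟩
    rfl
  refine ⟨pos, fun k ↦ (e (lev k) ⟨k, rfl⟩).2, fun l j hj ↦
    ⟨(e l).symm ⟨j, hj⟩, ⟨((e l).symm ⟨j, hj⟩).2, ?_⟩, ?_⟩⟩
  · rw [hpos, Equiv.apply_symm_apply]
  · rintro k ⟨hk, rfl⟩
    have hek : ⟨k, hk⟩ = (e l).symm ⟨pos k, hj⟩ :=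
      (e l).eq_symm_apply.2 (Fin.ext (hpos ⟨k, hk⟩).symm)
    exact congrArg Subtype.val hek

variable {K : Type*} [Field K]

/-- The `a`-th arrow of the model module: it sends the basis vector at position `i` of level `l` to
the sum of those of level `l + 1` at positions `j` with `j = i + a * p` or `i = j + a * q`, where
`p` and `q` are the sizes of the levels `l` and `l + 1`. When `q ≤ r * p`, each basis vector of
level `l + 1` is the image of one of level `l` under some arrow, and dually when `p ≤ r * q`. -/
def linkMatrix (lev pos : κ → ℕ) (a : ℕ) : Matrix κ κ K :=
  Matrix.of fun k' k ↦ if lev k' = lev k + 1 ∧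
    (pos k' = pos k + a * #{k'' | lev k'' = lev k} ∨
      pos k = pos k' + a * #{k'' | lev k'' = lev k'}) then 1 else 0

variable {lev} {pos : κ → ℕ}

theorem exists_linkMatrix_col_eq {r : ℕ} (hpos : ∀ k, pos k < #{k' | lev k' = lev k})
    (hunique : ∀ l, ∀ j < #{k | lev k = l}, ∃! k, lev k = l ∧ pos k = j)
    (hs : IsRealizable r fun l ↦ #{k | lev k = l}) [DecidableEq κ] {k' : κ} (hk' : 0 < lev k') :
    ∃ a < r, ∃ k, lev k + 1 = lev k' ∧ (linkMatrix lev pos a : Matrix κ κ K).col k =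
      Pi.single k' 1 := by
  obtain ⟨l, hl⟩ := Nat.exists_eq_add_one_of_ne_zero hk'.ne'
  obtain ⟨a, ha, i, hi, hlink⟩ := exists_link_iff_eq (hs l) (hl ▸ hpos k')
  obtain ⟨k, ⟨rfl, rfl⟩, -⟩ := hunique l i hi
  refine ⟨a, ha, k, hl.symm, funext fun k'' ↦ ?_⟩
  rw [Matrix.col_apply, linkMatrix, Matrix.of_apply, Pi.single_apply]
  refine if_congr ⟨fun h ↦ ?_, ?_⟩ rfl rfl
  · have hk'' := (hlink (pos k'')).1 (h.1 ▸ h.2)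
    exact (hunique _ _ (hpos k')).unique ⟨h.1.trans hl.symm, hk''⟩ ⟨rfl, rfl⟩
  · rintro rfl
    exact ⟨hl, hl ▸ (hlink (pos k'')).2 rfl⟩

theorem exists_linkMatrix_row_eq {r : ℕ} (hpos : ∀ k, pos k < #{k' | lev k' = lev k})
    (hunique : ∀ l, ∀ j < #{k | lev k = l}, ∃! k, lev k = l ∧ pos k = j) [DecidableEq κ] {k : κ}
    (hs : #{k' | lev k' = lev k} ≤ r * #{k' | lev k' = lev k + 1}) :
    ∃ a < r, ∃ k', lev k' = lev k + 1 ∧ (linkMatrix lev pos a : Matrix κ κ K).row k' =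
      Pi.single k 1 := by
  obtain ⟨a, ha, j, hj, hlink⟩ := exists_link_iff_eq hs (hpos k)
  obtain ⟨k', ⟨hk', rfl⟩, -⟩ := hunique _ j hj
  refine ⟨a, ha, k', hk', funext fun k'' ↦ ?_⟩
  rw [Matrix.row_apply, linkMatrix, Matrix.of_apply, Pi.single_apply]
  refine if_congr ⟨fun h ↦ ?_, ?_⟩ rfl rfl
  · have hlev : lev k'' = lev k := Nat.succ_injective (h.1.symm.trans hk')
    have hk'' := (hlink (pos k'')).1 (hk' ▸ hlev ▸ h.2.symm)
    exact (hunique _ _ (hpos k)).unique ⟨hlev, hk''⟩ ⟨rfl, rfl⟩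
  · rintro rfl
    exact ⟨hk', hk' ▸ ((hlink (pos k'')).2 rfl).symm⟩

theorem exists_radSeries_eq_levelSpan [DecidableEq κ] {n r : ℕ} (hlev : ∀ k, lev k < n)
    (hs : IsRealizable r fun l ↦ #{k | lev k = l}) :
    ∃ M : Fin r → Matrix κ κ K,
      (∀ l, radSeries (fun a ↦ (M a).toLin') l = levelSpan (Pi.basisFun K κ) lev l) ∧
      ((∀ l, l + 1 < n → #{k | lev k = l} ≤ r * #{k | lev k = l + 1}) →
        IsRigid (fun a ↦ (M a).toLin') n) := by
  obtain ⟨pos, hpos, hunique⟩ := exists_pos_existsUnique lev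
  let A (a : Fin r) : End K (κ → K) := (linkMatrix lev pos a).toLin'
  have hF : IsLoewyFiltration A n (levelSpan (Pi.basisFun K κ) lev) := by
    refine isLoewyFiltration_levelSpan hlev fun a k k' h ↦ ?_
    by_contra hlt
    simp [A, linkMatrix, show lev k' ≠ lev k + 1 by omega] at h
  have hrad : ∀ l, levelSpan (Pi.basisFun K κ) lev l ≤ radSeries A l := by
    refine levelSpan_le_radSeries fun k' hk' ↦ ?_
    obtain ⟨a, ha, k, hk, hcol⟩ := exists_linkMatrix_col_eq (K := K) hpos hunique hs hk'
    refine ⟨⟨a, ha⟩, k, hk, ?_⟩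
    simpa [A] using hcol
  refine ⟨fun a ↦ linkMatrix lev pos a, fun l ↦ (hF.radSeries_le l).antisymm (hrad l), fun hup ↦
    isRigid_of_levelSpan hF hrad (socSeries_le_levelSpan fun k hk ↦ ?_)⟩
  obtain ⟨a, ha, k', hk', hrow⟩ := exists_linkMatrix_row_eq (K := K) hpos hunique (hup _ hk)
  refine ⟨⟨a, ha⟩, k', hk', fun v ↦ ?_⟩
  rw [Pi.basisFun_repr, Pi.basisFun_repr, Matrix.toLin'_apply, Matrix.mulVec]
  exact (congrArg (· ⬝ᵥ v) hrow).trans (single_one_dotProduct k v)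

end Model

section RigidLayers

variable {ι K V : Type*} [Field K] [AddCommGroup V] [Module K V] {A : ι → End K V} {n : ℕ}

theorem IsRigid.finrank_socSeries_succ_sub (hA : IsRigid A n) {l : ℕ} (hl : l < n) :
    finrank K (socSeries A (l + 1)) - finrank K (socSeries A l) =
      layerDim (radSeries A) (n - (l + 1)) := by
  have h₁ := hA (n - (l + 1)) (Nat.sub_le _ _)
  have h₂ := hA (n - l) (Nat.sub_le _ _)
  rw [Nat.sub_sub_self hl] at h₁
  rw [Nat.sub_sub_self hl.le] at h₂
  rw [h₁, h₂, layerDim, show n - (l + 1) + 1 = n - l by omega]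

theorem isRigid_of_finrank_socSeries_succ_sub [FiniteDimensional K V] (h : radSeries A n = ⊥)
    (hlayer : ∀ l < n, finrank K (socSeries A (l + 1)) - finrank K (socSeries A l) =
      layerDim (radSeries A) (n - (l + 1))) : IsRigid A n := by
  have hdim : ∀ m ≤ n, finrank K (socSeries A m) = finrank K (radSeries A (n - m)) := by
    intro m hm
    induction m with
    | zero => rw [socSeries_zero, Nat.sub_zero, h]
    | succ m ih =>
      have hsoc := Submodule.finrank_mono (socSeries_mono (A := A) (Nat.le_add_right m 1))
      have hrad := layerDim_add (radSeries_antitone (A := A)) (n - (m + 1))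
      rw [← hlayer m hm, show n - (m + 1) + 1 = n - m by omega, ← ih (by omega)] at hrad
      omega
  refine fun l hl ↦ (Submodule.eq_of_le_of_finrank_le
    (radSeries_le_socSeries (by rwa [Nat.add_sub_cancel' hl])) ?_).symm
  rw [hdim _ (Nat.sub_le n l), Nat.sub_sub_self hl]

end RigidLayers

theorem isIrreducible_preimage_val {X : Type*} [TopologicalSpace X] {p : X → Prop} {s : Set X}
    (hs : IsIrreducible s) (hsp : ∀ x ∈ s, p x) :
    IsIrreducible (Subtype.val ⁻¹' s : Set {x // p x}) := by
  refine ⟨?_, fun u v hu hv ⟨x, hxs, hxu⟩ ⟨y, hys, hyv⟩ ↦ ?_⟩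
  · obtain ⟨x, hx⟩ := hs.nonempty
    exact ⟨⟨x, hsp x hx⟩, hx⟩
  · obtain ⟨u', hu', rfl⟩ := isOpen_induced_iff.1 hu
    obtain ⟨v', hv', rfl⟩ := isOpen_induced_iff.1 hv
    obtain ⟨z, hzs, hz⟩ := hs.isPreirreducible u' v' hu' hv' ⟨x, hxs, hxu⟩ ⟨y, hys, hyv⟩
    exact ⟨⟨z, hsp z hzs⟩, hzs, hz⟩

theorem sum_filter_le_eq_sum_range {n : ℕ} (f : ℕ → ℕ) (l : Fin n) :
    ∑ j ∈ univ.filter (· ≤ l), f j = ∑ j ∈ range (l + 1), f j := by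
  rw [filter_ge_eq_Iic, Nat.range_succ_eq_Iic, ← Fin.map_valEmbedding_Iic, sum_map]
  rfl

section LoopQuiver

open QuiverData Stmt14

instance (r : ℕ) : Unique (Fin (loopQuiver r).n) :=
  inferInstanceAs (Unique (Fin 1))

/-- The index set of the standard basis of the vector space underlying a `d`-dimensional
representation of the quiver with one vertex and `r` loops. -/
abbrev LoopIndex (r d : ℕ) :=
  Σ _ : Fin (loopQuiver r).n, Fin d

theorem card_loopIndex (r d : ℕ) : Fintype.card (LoopIndex r d) = d := by
  simp [Fintype.card_sigma]

/-- The identification of the coordinates of the representation space with the entries of an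
`r`-tuple of matrices. -/
def loopCoords (r d : ℕ) :
    Fin r × LoopIndex r d × LoopIndex r d ≃ Coords (loopQuiver r) (fun _ ↦ d) where
  toFun t := ⟨t.1, t.2.1.2, t.2.2.2⟩
  invFun c := (c.1, ⟨default, c.2.1⟩, ⟨default, c.2.2⟩)
  left_inv t := by
    obtain ⟨a, ⟨i, j⟩, i', j'⟩ := t
    rw [Subsingleton.elim i default, Subsingleton.elim i' default]
  right_inv _ := rfl

variable {K : Type} [Field K] {r L d : ℕ}

/-- The `r`-tuple of endomorphisms by which the loops act on the module `M_x`. -/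
def loopEnd (x : LocV K r L d) : Fin r → End K (LoopIndex r d → K) :=
  entryEnd (loopCoords r d) x.1

theorem arrowMap_eq_entryEnd (x : RepSpace (loopQuiver r) (fun _ ↦ d) K) :
    arrowMap (loopQuiver r) (fun _ ↦ d) K x = entryEnd (loopCoords r d) x := by
  refine funext fun a ↦ LinearMap.ext fun v ↦ funext fun k ↦ ?_
  have h : k.1 = (loopQuiver r).tgt a := Subsingleton.elim _ _
  refine (dif_pos h).trans ?_
  simp only [entryEnd, Matrix.toLin'_apply, Matrix.mulVec, dotProduct, Fintype.sum_sigma,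
    Fintype.sum_unique]
  rfl

theorem mem_truncRepVar_iff (x : RepSpace (loopQuiver r) (fun _ ↦ d) K) :
    x ∈ TruncRepVar (loopQuiver r) (fun _ ↦ d) K L ↔
      radSeries (entryEnd (loopCoords r d) x) (L + 1) = ⊥ := by
  rw [radSeries_eq_bot_iff, ← arrowMap_eq_entryEnd]
  rfl

theorem radSeries_loopEnd (x : LocV K r L d) : radSeries (loopEnd x) (L + 1) = ⊥ :=
  (mem_truncRepVar_iff x.1).1 x.2

theorem radPow_eq (x : LocV K r L d) (l : ℕ) :
    radPow (loopQuiver r) (fun _ ↦ d) K x.1 l = radSeries (loopEnd x) l := by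
  rw [loopEnd, ← arrowMap_eq_entryEnd]
  rfl

theorem socPow_eq (x : LocV K r L d) (l : ℕ) :
    socPow (loopQuiver r) (fun _ ↦ d) K x.1 l = socSeries (loopEnd x) (l + 1) := by
  induction l with
  | zero =>
    rw [socPow, arrowMap_eq_entryEnd, socSeries_succ, socSeries_zero]
    rfl
  | succ l ih =>
    rw [socPow, ih, arrowMap_eq_entryEnd, socSeries_succ (l := l + 1)]
    rfl

theorem vdim_eq_finrank (N : Submodule K (LoopIndex r d → K)) (i : Fin (loopQuiver r).n) :
    vdim (loopQuiver r) (fun _ ↦ d) K N i = finrank K N := by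
  have hproj : proj (loopQuiver r) (fun _ ↦ d) K i = LinearMap.id :=
    LinearMap.ext fun v ↦ funext fun k ↦ if_pos (Subsingleton.elim _ _)
  rw [vdim, hproj, Submodule.map_id]

theorem radLayering_apply (x : LocV K r L d) (l : Fin (L + 1)) (i : Fin (loopQuiver r).n) :
    radLayering (loopQuiver r) (fun _ ↦ d) K L x.1 l i = layerDim (radSeries (loopEnd x)) l := by
  rw [radLayering, vdim_eq_finrank, vdim_eq_finrank, radPow_eq, radPow_eq, layerDim]

theorem socLayering_apply (x : LocV K r L d) (l : Fin (L + 1)) (i : Fin (loopQuiver r).n) :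
    socLayering (loopQuiver r) (fun _ ↦ d) K L x.1 l i =
      finrank K (socSeries (loopEnd x) (l + 1)) - finrank K (socSeries (loopEnd x) l) := by
  rw [socLayering, vdim_eq_finrank, socPow_eq, vdim_eq_finrank, socPow_eq]
  obtain ⟨_ | l, hl⟩ := l
  · rw [if_pos rfl, socSeries_zero, finrank_bot]
  · simp

theorem dominates_radLayering_iff {x y : LocV K r L d} :
    dominates (radLayering (loopQuiver r) (fun _ ↦ d) K L y.1)
        (radLayering (loopQuiver r) (fun _ ↦ d) K L x.1) ↔
      ∀ l, finrank K (radSeries (loopEnd x) l) ≤ finrank K (radSeries (loopEnd y) l) := by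
  have hsum (z : LocV K r L d) (l : ℕ) :
      ∑ j ∈ range (l + 1), layerDim (radSeries (loopEnd z)) j +
        finrank K (radSeries (loopEnd z) (l + 1)) = d := by
    rw [sum_layerDim_add radSeries_antitone, radSeries_zero, finrank_top,
      finrank_fintype_fun_eq_card, card_loopIndex]
  simp only [dominates, radLayering_apply, sum_filter_le_eq_sum_range]
  refine ⟨fun h l ↦ ?_, fun h l _ ↦ ?_⟩
  · obtain _ | l := l
    · rw [radSeries_zero, radSeries_zero]
    rcases lt_or_ge l (L + 1) with hl | hl
    · have := h ⟨l, hl⟩ default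
      have hx := hsum x l
      have hy := hsum y l
      simp only at this
      omega
    · rw [radSeries_eq_bot_of_le (radSeries_loopEnd x) (hl.trans l.le_succ), finrank_bot]
      exact Nat.zero_le _
  · have := h (l + 1)
    have hx := hsum x l
    have hy := hsum y l
    omega

theorem dominates_socLayering_iff {x y : LocV K r L d} :
    dominates (socLayering (loopQuiver r) (fun _ ↦ d) K L y.1)
        (socLayering (loopQuiver r) (fun _ ↦ d) K L x.1) ↔
      ∀ l, finrank K (socSeries (loopEnd y) l) ≤ finrank K (socSeries (loopEnd x) l) := by
  have hsum (z : LocV K r L d) (l : Fin (L + 1)) : ∑ j ∈ univ.filter (· ≤ l),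
      (finrank K (socSeries (loopEnd z) (j + 1)) - finrank K (socSeries (loopEnd z) j)) =
        finrank K (socSeries (loopEnd z) (l + 1)) := by
    refine (sum_filter_le_eq_sum_range (fun j ↦ finrank K (socSeries (loopEnd z) (j + 1)) -
      finrank K (socSeries (loopEnd z) j)) l).trans ?_
    rw [sum_range_tsub fun _ _ h ↦ Submodule.finrank_mono (socSeries_mono h), socSeries_zero,
      finrank_bot, Nat.sub_zero]
  simp only [dominates, socLayering_apply, hsum]
  refine ⟨fun h l ↦ ?_, fun h l _ ↦ h (l + 1)⟩
  obtain _ | l := l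
  · rw [socSeries_zero, socSeries_zero]
  rcases lt_or_ge l (L + 1) with hl | hl
  · exact h ⟨l, hl⟩ default
  · rw [socSeries_eq_top_of_le (radSeries_loopEnd x) (hl.trans l.le_succ), finrank_top]
    exact Submodule.finrank_le _

theorem mem_locRepS_iff {S : Fin (L + 1) → ℕ} {x : LocV K r L d} :
    x ∈ LocRepS K r L d S ↔ ∀ l : Fin (L + 1), layerDim (radSeries (loopEnd x)) l = S l := by
  simp only [LocRepS, Set.mem_ofPred_eq, funext_iff, radLayering_apply, forall_const]

end LoopQuiver

section LayerSequences

theorem extend_val_of_le {n : ℕ} (S : Fin n → ℕ) {l : ℕ} (hl : n ≤ l) :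
    Function.extend Fin.val S 0 l = 0 :=
  Function.extend_apply' _ _ _ fun ⟨i, hi⟩ ↦ (i.2.trans_le hl).ne hi

theorem isRealizable_extend_iff {r L : ℕ} {S : Fin (L + 1) → ℕ} :
    IsRealizable r (Function.extend Fin.val S 0) ↔ ∀ l : Fin L, S l.succ ≤ r * S l.castSucc := by
  have happly := Fin.val_injective.extend_apply S 0
  refine ⟨fun h l ↦ ?_, fun h l ↦ ?_⟩
  · rw [← happly, ← happly]
    exact h l
  · rcases lt_or_ge l L with hl | hl
    · have := h ⟨l, hl⟩
      rwa [← happly, ← happly] at this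
    · rw [extend_val_of_le S (Nat.succ_le_succ hl)]
      exact Nat.zero_le _

theorem exists_card_fiber_eq {κ : Type*} [Fintype κ] {n : ℕ} {S : Fin n → ℕ}
    (hS : ∑ l, S l = Fintype.card κ) : ∃ lev : κ → ℕ, (∀ k, lev k < n) ∧
      ∀ l, #{k | lev k = l} = Function.extend Fin.val S 0 l := by
  obtain ⟨f⟩ : Nonempty (κ ≃ Σ l, Fin (S l)) := Fintype.card_eq.1 (by simp [hS])
  refine ⟨fun k ↦ (f k).1, fun k ↦ (f k).1.2, fun l ↦ ?_⟩
  rcases lt_or_ge l n with hl | hl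
  · lift l to Fin n using hl
    rw [Fin.val_injective.extend_apply, ← Fintype.card_subtype, ← Fintype.card_fin (S l)]
    exact Fintype.card_congr
      ((f.subtypeEquiv fun k ↦ Fin.val_inj).trans (Equiv.sigmaSubtype l))
  · rw [extend_val_of_le S hl, card_eq_zero, filter_eq_empty_iff]
    exact fun k _ hk ↦ ((f k).1.2.trans_le hl).ne hk

variable {ι K V : Type*} [Field K] [AddCommGroup V] [Module K V] {A : ι → End K V}
  {F : ℕ → Submodule K V}

theorem IsLoewyFiltration.layerDim_eq_extend_iff {n : ℕ} {S : Fin n → ℕ}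
    (hF : IsLoewyFiltration A n F) :
    (∀ l, layerDim F l = Function.extend Fin.val S 0 l) ↔ ∀ l : Fin n, layerDim F l = S l := by
  have happly := Fin.val_injective.extend_apply S 0
  refine ⟨fun h l ↦ (h l).trans (happly l), fun h l ↦ ?_⟩
  rcases lt_or_ge l n with hl | hl
  · exact (h ⟨l, hl⟩).trans (happly ⟨l, hl⟩).symm
  · rw [hF.layerDim_eq_zero hl, extend_val_of_le S hl]

theorem IsLoewyFiltration.finrank_eq_of_layerDim_eq [FiniteDimensional K V] {B : ι → End K V}
    {G : ℕ → Submodule K V} {m n : ℕ} (hF : IsLoewyFiltration A m F) (hG : IsLoewyFiltration B n G)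
    (h : layerDim F = layerDim G) (l : ℕ) : finrank K (F l) = finrank K (G l) := by
  have hsumF := sum_layerDim_add hF.antitone l
  have hsumG := sum_layerDim_add hG.antitone l
  rw [hF.zero] at hsumF
  rw [hG.zero, ← h] at hsumG
  exact Nat.add_left_cancel (hsumF.trans hsumG.symm)

end LayerSequences

section Strata

open QuiverData Stmt14

variable {K : Type} [Field K] {r L d : ℕ} {S : Fin (L + 1) → ℕ}

theorem isLoewyFiltration_radSeries_loopEnd (x : LocV K r L d) :
    IsLoewyFiltration (loopEnd x) (L + 1) (radSeries (loopEnd x)) :=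
  isLoewyFiltration_radSeries (radSeries_loopEnd x)

theorem sum_layerDim_loopEnd {x : LocV K r L d} {F : ℕ → Submodule K (LoopIndex r d → K)}
    (hF : IsLoewyFiltration (loopEnd x) (L + 1) F) : ∑ l : Fin (L + 1), layerDim F l = d := by
  rw [Fin.sum_univ_eq_sum_range (layerDim F), hF.sum_layerDim, finrank_fintype_fun_eq_card,
    card_loopIndex]

theorem sum_eq_of_nonempty_locRepS (hne : (LocRepS K r L d S).Nonempty) : ∑ l, S l = d := by
  obtain ⟨x, hx⟩ := hne
  rw [← sum_layerDim_loopEnd (isLoewyFiltration_radSeries_loopEnd x)]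
  exact Fintype.sum_congr _ _ fun l ↦ (mem_locRepS_iff.1 hx l).symm

theorem exists_loopEnd_eq {M : Fin r → Matrix (LoopIndex r d) (LoopIndex r d) K}
    (hM : radSeries (fun a ↦ (M a).toLin') (L + 1) = ⊥) :
    ∃ x : LocV K r L d, loopEnd x = fun a ↦ (M a).toLin' := by
  set x : RepSpace (loopQuiver r) (fun _ ↦ d) K := fun t ↦
    M ((loopCoords r d).symm t).1 ((loopCoords r d).symm t).2.1 ((loopCoords r d).symm t).2.2
  have hx : entryEnd (loopCoords r d) x = fun a ↦ (M a).toLin' := funext fun a ↦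
    congrArg Matrix.toLin' (Matrix.ext fun i j ↦ by
      simp only [x, Matrix.of_apply, Equiv.symm_apply_apply])
  exact ⟨⟨x, (mem_truncRepVar_iff x).2 (hx ▸ hM)⟩, hx⟩

theorem exists_mem_locRepS (hS : ∑ l, S l = d) (hrad : ∀ l : Fin L, S l.succ ≤ r * S l.castSucc) :
    ∃ x ∈ LocRepS K r L d S,
      (∀ l : Fin L, S l.castSucc ≤ r * S l.succ) → IsRigid (loopEnd x) (L + 1) := by
  obtain ⟨lev, hlt, hlev⟩ := exists_card_fiber_eq (hS.trans (card_loopIndex r d).symm)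
  have hcard (l : Fin (L + 1)) : #{k | lev k = l} = S l :=
    (hlev l).trans (Fin.val_injective.extend_apply S 0 l)
  obtain ⟨M, hM, hrigid⟩ := exists_radSeries_eq_levelSpan (K := K) hlt
    (by rw [funext hlev]; exact isRealizable_extend_iff.2 hrad)
  have hfinrank (l : ℕ) : finrank K (radSeries (fun a ↦ (M a).toLin') l) = #{k | l ≤ lev k} := by
    rw [hM, finrank_levelSpan]
  have hbot : radSeries (fun a ↦ (M a).toLin') (L + 1) = ⊥ := by
    rw [← Submodule.finrank_eq_zero, hfinrank, card_eq_zero, filter_eq_empty_iff]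
    exact fun k _ ↦ (hlt k).not_ge
  obtain ⟨x, hx⟩ := exists_loopEnd_eq hbot
  refine ⟨x, mem_locRepS_iff.2 fun l ↦ ?_, fun hsoc ↦ hx ▸ hrigid fun l hl ↦ ?_⟩
  · rw [hx, (layerDim_radSeries_eq_card_iff lev).2 hfinrank, hcard]
  · have := hsoc ⟨l, Nat.lt_of_succ_lt_succ hl⟩
    rwa [← hcard, ← hcard] at this

theorem locRepS_eq_preimage_stratum {lev : LoopIndex r d → ℕ}
    (hlev : ∀ l, #{k | lev k = l} = Function.extend Fin.val S 0 l) :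
    LocRepS K r L d S = Subtype.val ⁻¹' stratum (loopCoords r d) lev K := by
  ext x
  rw [mem_locRepS_iff, ← (isLoewyFiltration_radSeries_loopEnd x).layerDim_eq_extend_iff]
  simp only [← hlev]
  rfl

theorem stratum_subset_truncRepVar {lev : LoopIndex r d → ℕ} (hlt : ∀ k, lev k < L + 1) :
    stratum (loopCoords r d) lev K ⊆ TruncRepVar (loopQuiver r) (fun _ ↦ d) K L := by
  intro x hx
  rw [mem_truncRepVar_iff, ← Submodule.finrank_eq_zero, (layerDim_radSeries_eq_card_iff lev).1 hx,
    card_eq_zero, filter_eq_empty_iff]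
  exact fun k _ ↦ (hlt k).not_ge

theorem isIrreducible_locRepS [Infinite K] (hne : (LocRepS K r L d S).Nonempty) :
    IsIrreducible (LocRepS K r L d S) := by
  obtain ⟨lev, hlt, hlev⟩ := exists_card_fiber_eq
    ((sum_eq_of_nonempty_locRepS hne).trans (card_loopIndex r d).symm)
  rw [locRepS_eq_preimage_stratum hlev] at hne ⊢
  obtain ⟨x, hx⟩ := hne
  exact isIrreducible_preimage_val (isIrreducible_stratum _ lev ⟨x.1, hx⟩)
    (stratum_subset_truncRepVar hlt)

theorem mem_closure_locRepS [Infinite K] (hne : (LocRepS K r L d S).Nonempty) {x : LocV K r L d}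
    {F : ℕ → Submodule K (LoopIndex r d → K)} (hF : IsLoewyFiltration (loopEnd x) (L + 1) F)
    (hlayer : ∀ l : Fin (L + 1), layerDim F l = S l) : x ∈ closure (LocRepS K r L d S) := by
  obtain ⟨lev, hlt, hlev⟩ := exists_card_fiber_eq
    ((sum_eq_of_nonempty_locRepS hne).trans (card_loopIndex r d).symm)
  rw [locRepS_eq_preimage_stratum hlev] at hne ⊢
  obtain ⟨y, hy⟩ := hne
  rw [closure_subtype, Subtype.image_preimage_coe,
    Set.inter_eq_right.2 (stratum_subset_truncRepVar hlt)]
  refine range_raisingPoint_subset_closure_stratum _ lev ⟨y.1, hy⟩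
    (mem_range_raisingPoint _ lev hF fun l ↦ ?_)
  rw [hlev, hF.layerDim_eq_extend_iff.2 hlayer]

theorem isOpen_setOf_layeringLE (x : LocV K r L d) :
    IsOpen {y : LocV K r L d | LayeringLE (loopEnd y) (loopEnd x)} := by
  have hset : {y : LocV K r L d | LayeringLE (loopEnd y) (loopEnd x)} = ⋂ l ∈ range (L + 1),
      {y | finrank K (radSeries (loopEnd x) l) ≤ finrank K (radSeries (loopEnd y) l)} ∩
        {y | finrank K (socSeries (loopEnd y) l) ≤ finrank K (socSeries (loopEnd x) l)} := by
    ext y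
    simp only [Set.mem_iInter, mem_range]
    refine ⟨fun h l _ ↦ h l, fun h l ↦ ?_⟩
    rcases lt_or_ge l (L + 1) with hl | hl
    · exact h l hl
    · rw [radSeries_eq_bot_of_le (radSeries_loopEnd x) hl, finrank_bot,
        socSeries_eq_top_of_le (radSeries_loopEnd x) hl, finrank_top]
      exact ⟨Nat.zero_le _, Submodule.finrank_le _⟩
  rw [hset]
  exact isOpen_biInter_finset fun l _ ↦
    ((isOpen_le_finrank_radSeries_entryEnd (loopCoords r d) l _).preimage
      continuous_subtype_val).inter
    ((isOpen_finrank_socSeries_entryEnd_le (loopCoords r d) l _).preimage continuous_subtype_val)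

theorem exists_layeringLE_of_mem_closure {x : LocV K r L d} {s : Set (LocV K r L d)}
    (hx : x ∈ closure s) : ∃ y ∈ s, LayeringLE (loopEnd y) (loopEnd x) := by
  obtain ⟨y, hy, hys⟩ := mem_closure_iff.1 hx _ (isOpen_setOf_layeringLE x)
    fun _ ↦ ⟨le_rfl, le_rfl⟩
  exact ⟨y, hys, hy⟩

end Strata

section Components

open QuiverData Stmt14

variable {K : Type} [Field K] {r L d : ℕ} {S S' : Fin (L + 1) → ℕ} {x y : LocV K r L d}

theorem layeringLE_iff_dominates : LayeringLE (loopEnd y) (loopEnd x) ↔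
    dominates (radLayering (loopQuiver r) (fun _ ↦ d) K L y.1)
        (radLayering (loopQuiver r) (fun _ ↦ d) K L x.1) ∧
      dominates (socLayering (loopQuiver r) (fun _ ↦ d) K L y.1)
        (socLayering (loopQuiver r) (fun _ ↦ d) K L x.1) := by
  rw [dominates_radLayering_iff, dominates_socLayering_iff, LayeringLE, forall_and]

theorem eq_of_mem_locRepS (hx : x ∈ LocRepS K r L d S) (hx' : x ∈ LocRepS K r L d S') : S = S' :=
  funext fun l ↦ (mem_locRepS_iff.1 hx l).symm.trans (mem_locRepS_iff.1 hx' l)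

theorem mem_locRepS_of_layeringLE (hx : x ∈ LocRepS K r L d S)
    (hrigid : IsRigid (loopEnd x) (L + 1)) (hle : LayeringLE (loopEnd y) (loopEnd x)) :
    y ∈ LocRepS K r L d S ∧ IsRigid (loopEnd y) (L + 1) := by
  obtain ⟨hrigid', heq⟩ := hrigid.of_layeringLE (radSeries_loopEnd y) hle
  refine ⟨mem_locRepS_iff.2 fun l ↦ ?_, hrigid'⟩
  rw [← mem_locRepS_iff.1 hx l, layerDim, layerDim, heq _ l.2.le, heq _ l.2]

theorem isRigid_loopEnd_iff (hx : x ∈ LocRepS K r L d S) : IsRigid (loopEnd x) (L + 1) ↔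
    socLayering (loopQuiver r) (fun _ ↦ d) K L x.1 = fun l _ ↦ S l.rev := by
  have hrev (l : Fin (L + 1)) : layerDim (radSeries (loopEnd x)) (L + 1 - (l + 1)) = S l.rev := by
    rw [← mem_locRepS_iff.1 hx, Fin.val_rev]
  refine ⟨fun h ↦ funext₂ fun l i ↦ ?_, fun h ↦
    isRigid_of_finrank_socSeries_succ_sub (radSeries_loopEnd x) fun l hl ↦ ?_⟩
  · rw [socLayering_apply, h.finrank_socSeries_succ_sub l.2, hrev]
  · rw [hrev ⟨l, hl⟩, ← socLayering_apply x ⟨l, hl⟩ default, h]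

theorem cond3_iff_exists_isRigid :
    Cond3 K r L d S ↔ ∃ x ∈ LocRepS K r L d S, IsRigid (loopEnd x) (L + 1) := by
  refine ⟨fun ⟨_, _, x, ⟨hxV, hx⟩, hsoc⟩ ↦ ?_, fun ⟨x, hx, hrigid⟩ ↦ ?_⟩
  · lift x to LocV K r L d using hxV
    exact ⟨x, hx, (isRigid_loopEnd_iff hx).2 hsoc⟩
  have hsoc := (isRigid_loopEnd_iff hx).1 hrigid
  refine ⟨⟨x, hx⟩, fun y ⟨hyV, hy⟩ ↦ ?_, x.1, ⟨x.2, hx⟩, hsoc⟩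
  lift y to LocV K r L d using hyV
  have hrad := (dominates_radLayering_iff (x := x) (y := y)).1 fun l i ↦ by rw [hy, hx]
  rw [← hsoc]
  exact dominates_socLayering_iff.2
    (hrigid.finrank_socSeries_le (radSeries_loopEnd y) fun l _ ↦ hrad l)

theorem cond4_of_isRigid (hx : x ∈ LocRepS K r L d S) (hrigid : IsRigid (loopEnd x) (L + 1)) :
    Cond4 K r L d S := by
  refine ⟨x, hx, fun y hrad hsoc ↦ ?_⟩
  obtain ⟨hy, hrigid'⟩ :=
    mem_locRepS_of_layeringLE hx hrigid (layeringLE_iff_dominates.2 ⟨hrad, hsoc⟩)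
  exact ⟨hy.trans hx.symm, ((isRigid_loopEnd_iff hy).1 hrigid').trans
    ((isRigid_loopEnd_iff hx).1 hrigid).symm⟩

theorem exists_isRigid_of_cond2 (hS : ∑ l, S l = d) (h : Cond2 r L S) :
    ∃ x ∈ LocRepS K r L d S, IsRigid (loopEnd x) (L + 1) := by
  obtain ⟨x, hx, hrigid⟩ := exists_mem_locRepS (K := K) hS fun l ↦ (h l).1
  exact ⟨x, hx, hrigid fun l ↦ (h l).2⟩

theorem eq_of_isRigid_of_mem_closure (hx : x ∈ LocRepS K r L d S)
    (hrigid : IsRigid (loopEnd x) (L + 1)) (hx' : x ∈ closure (LocRepS K r L d S')) : S = S' := by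
  obtain ⟨y, hy, hle⟩ := exists_layeringLE_of_mem_closure hx'
  exact eq_of_mem_locRepS (mem_locRepS_of_layeringLE hx hrigid hle).1 hy

variable [Infinite K]

theorem mem_closure_locRepS_layerDim {F : ℕ → Submodule K (LoopIndex r d → K)}
    (hF : IsRealizableFiltration (loopEnd x) r (L + 1) F) :
    x ∈ closure (LocRepS K r L d fun l ↦ layerDim F l) := by
  obtain ⟨y, hy, -⟩ := exists_mem_locRepS (K := K) (sum_layerDim_loopEnd hF.1) fun l ↦ hF.2 l
  exact mem_closure_locRepS ⟨y, hy⟩ hF.1 fun _ ↦ rfl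

theorem exists_cond2_mem_closure (hr : 2 ≤ r) (hd : L + 1 < d) (x : LocV K r L d) :
    ∃ S : Fin (L + 1) → ℕ, ∑ l, S l = d ∧ Cond2 r L S ∧ x ∈ closure (LocRepS K r L d S) := by
  obtain ⟨F, hF⟩ := exists_maximal_isRealizableFiltration (radSeries_loopEnd x)
  have hsoc := fun l hl ↦ layerDim_le_mul_of_maximal (l := l) (L := L) (by simpa using hr) hF
    (by simpa [card_loopIndex] using hd) hl
  rw [Fintype.card_fin] at hF hsoc
  exact ⟨fun l ↦ layerDim F l, sum_layerDim_loopEnd hF.prop.1,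
    fun l ↦ ⟨hF.prop.2 l, hsoc l l.2⟩, mem_closure_locRepS_layerDim hF.prop⟩

theorem cond2_of_cond4 (hr : 2 ≤ r) (hd : L + 1 < d) (h : Cond4 K r L d S) : Cond2 r L S := by
  obtain ⟨x, hx, hmin⟩ := h
  obtain ⟨S', -, hS', hx'⟩ := exists_cond2_mem_closure hr hd x
  obtain ⟨y, hy, hle⟩ := exists_layeringLE_of_mem_closure hx'
  obtain ⟨hrad, hsoc⟩ := layeringLE_iff_dominates.1 hle
  have hyS : y ∈ LocRepS K r L d S := (hmin y hrad hsoc).1.trans hx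
  rwa [eq_of_mem_locRepS hyS hy]

theorem exists_subset_closure_of_isIrreducible (hr : 2 ≤ r) (hd : L + 1 < d)
    {T : Set (LocV K r L d)} (hT : IsIrreducible T) :
    ∃ S : Fin (L + 1) → ℕ, ∑ l, S l = d ∧ Cond2 r L S ∧ T ⊆ closure (LocRepS K r L d S) := by
  classical
  let I : Finset (Fin (L + 1) → ℕ) := {S ∈ piAntidiag univ d | Cond2 r L S}
  have hI (S : Fin (L + 1) → ℕ) : S ∈ I ↔ ∑ l, S l = d ∧ Cond2 r L S := by
    simp [I]
  obtain ⟨Z, hZ, hTZ⟩ := isIrreducible_iff_sUnion_isClosed.1 hT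
    (I.image fun S ↦ closure (LocRepS K r L d S)) (by simp +contextual [isClosed_closure])
    fun x _ ↦ by
      obtain ⟨S, hsum, hS, hx⟩ := exists_cond2_mem_closure hr hd x
      exact ⟨_, mem_coe.2 (mem_image_of_mem _ ((hI S).2 ⟨hsum, hS⟩)), hx⟩
  obtain ⟨S, hS, rfl⟩ := mem_image.1 hZ
  exact ⟨S, ((hI S).1 hS).1, ((hI S).1 hS).2, hTZ⟩

theorem mem_irreducibleComponents_iff (hr : 2 ≤ r) (hd : L + 1 < d) {C : Set (LocV K r L d)} :
    C ∈ irreducibleComponents (LocV K r L d) ↔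
      ∃ S : Fin (L + 1) → ℕ, ∑ l, S l = d ∧ Cond2 r L S ∧ C = closure (LocRepS K r L d S) := by
  have hirr (S : Fin (L + 1) → ℕ) (hsum : ∑ l, S l = d) (hS : Cond2 r L S) :
      IsIrreducible (closure (LocRepS K r L d S)) := by
    obtain ⟨x, hx, -⟩ := exists_isRigid_of_cond2 (K := K) hsum hS
    exact (isIrreducible_locRepS ⟨x, hx⟩).closure
  constructor
  · intro hC
    obtain ⟨S, hsum, hS, hCS⟩ := exists_subset_closure_of_isIrreducible hr hd hC.1
    exact ⟨S, hsum, hS, hCS.antisymm (hC.2 (hirr S hsum hS) hCS)⟩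
  · rintro ⟨S, hsum, hS, rfl⟩
    refine ⟨hirr S hsum hS, fun T hT hle ↦ ?_⟩
    obtain ⟨S', -, -, hTS'⟩ := exists_subset_closure_of_isIrreducible hr hd hT
    obtain ⟨x, hx, hrigid⟩ := exists_isRigid_of_cond2 (K := K) hsum hS
    have heq : S = S' := eq_of_isRigid_of_mem_closure hx hrigid (hTS' (hle (subset_closure hx)))
    rwa [heq]

theorem closure_locRepS_mem_irreducibleComponents_iff (hr : 2 ≤ r) (hd : L + 1 < d)
    (hS : ∑ l, S l = d) :
    closure (LocRepS K r L d S) ∈ irreducibleComponents (LocV K r L d) ↔ Cond2 r L S := by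
  rw [mem_irreducibleComponents_iff hr hd]
  refine ⟨fun ⟨S', hsum, hS', heq⟩ ↦ ?_, fun h ↦ ⟨S, hS, h, rfl⟩⟩
  obtain ⟨x, hx, hrigid⟩ := exists_isRigid_of_cond2 (K := K) hsum hS'
  have hx' : x ∈ closure (LocRepS K r L d S) := heq ▸ subset_closure hx
  rwa [← eq_of_isRigid_of_mem_closure hx hrigid hx']

end Components

section Uniserial

open QuiverData Stmt14

variable {K : Type} [Field K] {r L d : ℕ} {x y : LocV K r L d}

theorem uniserialRep_of_layerDim_le_one (hx : ∀ l, layerDim (radSeries (loopEnd x)) l ≤ 1) :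
    UniserialRep (loopQuiver r) (fun _ ↦ d) K x.1 := by
  have heq (N) (hN : Stable (loopQuiver r) (fun _ ↦ d) K x.1 N) :
      ∃ l, N = radSeries (loopEnd x) l := by
    refine exists_eq_radSeries_of_map_le (radSeries_loopEnd x) hx fun a ↦ ?_
    rw [loopEnd, ← arrowMap_eq_entryEnd]
    exact hN.1 a
  intro N₁ N₂ h₁ h₂
  obtain ⟨l₁, rfl⟩ := heq N₁ h₁
  obtain ⟨l₂, rfl⟩ := heq N₂ h₂
  exact (le_total l₂ l₁).imp (fun h ↦ radSeries_antitone h) fun h ↦ radSeries_antitone h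

theorem exists_isRealizableFiltration_layerDim_eq (hr : 2 ≤ r) (hd : d ≤ L + 1)
    (x : LocV K r L d) :
    ∃ F, IsRealizableFiltration (loopEnd x) r (L + 1) F ∧
      ∀ l, layerDim F l = if l < d then 1 else 0 := by
  obtain ⟨F, hF⟩ := exists_maximal_isRealizableFiltration (radSeries_loopEnd x)
  have hfinrank : finrank K (LoopIndex r d → K) = d := by
    rw [finrank_fintype_fun_eq_card, card_loopIndex]
  have hlayer := layerDim_eq_ite_of_maximal (L := L) (by simpa using hr) hF (hfinrank.le.trans hd)
  rw [hfinrank] at hlayer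
  rw [Fintype.card_fin] at hF
  exact ⟨F, hF.prop, hlayer⟩

/-- The layering `(1, …, 1, 0, …, 0)` of the uniserial modules of length `d`. -/
def uniserialLayering (L d : ℕ) (l : Fin (L + 1)) : ℕ :=
  if (l : ℕ) < d then 1 else 0

theorem uniserialRep_of_layeringLE (hr : 2 ≤ r) (hd : d ≤ L + 1)
    (hx : x ∈ LocRepS K r L d (uniserialLayering L d)) (hle : LayeringLE (loopEnd y) (loopEnd x)) :
    UniserialRep (loopQuiver r) (fun _ ↦ d) K y.1 := by
  obtain ⟨F, ⟨hF, -⟩, hlayer⟩ := exists_isRealizableFiltration_layerDim_eq hr hd y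
  have hradx := isLoewyFiltration_radSeries_loopEnd x
  have hlayerx : layerDim F = layerDim (radSeries (loopEnd x)) := funext fun l ↦
    (hF.layerDim_eq_extend_iff.2 (fun l ↦ hlayer l) l).trans
      (hradx.layerDim_eq_extend_iff.2 (mem_locRepS_iff.1 hx) l).symm
  have hrady : radSeries (loopEnd y) = F := funext fun l ↦
    Submodule.eq_of_le_of_finrank_le (hF.radSeries_le l)
      ((hF.finrank_eq_of_layerDim_eq hradx hlayerx l).trans_le (hle l).1)
  refine uniserialRep_of_layerDim_le_one fun l ↦ ?_
  rw [hrady, hlayer]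
  split_ifs <;> omega

theorem dense_locRepS_uniserialLayering [Infinite K] (hr : 2 ≤ r) (hd : d ≤ L + 1) :
    Dense (LocRepS K r L d (uniserialLayering L d)) := by
  intro x
  obtain ⟨F, hF, hlayer⟩ := exists_isRealizableFiltration_layerDim_eq hr hd x
  have heq : (fun l : Fin (L + 1) ↦ layerDim F l) = uniserialLayering L d :=
    funext fun l ↦ hlayer l
  exact heq ▸ mem_closure_locRepS_layerDim hF

theorem locRepS_uniserialLayering_nonempty (hr : 2 ≤ r) (hd : d ≤ L + 1) :
    (LocRepS K r L d (uniserialLayering L d)).Nonempty := by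
  have hsum : ∑ l, uniserialLayering L d l = d := by
    have hfilter : {l ∈ range (L + 1) | l < d} = range d := by
      grind
    simp only [uniserialLayering]
    rw [Fin.sum_univ_eq_sum_range (fun l ↦ if l < d then 1 else 0), ← card_filter, hfilter,
      card_range]
  obtain ⟨x, hx, -⟩ := exists_mem_locRepS (K := K) (r := r) hsum fun l ↦ by
    simp only [uniserialLayering, Fin.val_succ, Fin.val_castSucc]
    split_ifs <;> omega
  exact ⟨x, hx⟩

theorem isIrreducible_univ_locV [Infinite K] (hr : 2 ≤ r) (hd : d ≤ L + 1) :
    IsIrreducible (Set.univ : Set (LocV K r L d)) := by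
  rw [← (dense_locRepS_uniserialLayering hr hd).closure_eq]
  exact (isIrreducible_locRepS (locRepS_uniserialLayering_nonempty hr hd)).closure

theorem exists_isOpen_dense_uniserialRep [Infinite K] (hr : 2 ≤ r) (hd : d ≤ L + 1) :
    ∃ U : Set (LocV K r L d), IsOpen U ∧ Dense U ∧
      ∀ x ∈ U, UniserialRep (loopQuiver r) (fun _ ↦ d) K x.1 := by
  obtain ⟨x, hx⟩ := locRepS_uniserialLayering_nonempty (K := K) hr hd
  have : PreirreducibleSpace (LocV K r L d) := ⟨(isIrreducible_univ_locV hr hd).isPreirreducible⟩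
  exact ⟨_, isOpen_setOf_layeringLE x,
    (isOpen_setOf_layeringLE x).dense ⟨x, fun _ ↦ ⟨le_rfl, le_rfl⟩⟩,
    fun y ↦ uniserialRep_of_layeringLE hr hd hx⟩

end Uniserial

end LocalTruncated

open QuiverData Stmt14 LocalTruncated in
theorem statement_14_general (K : Type) [Field K] [Infinite K] (r L d : ℕ) (hr : 2 ≤ r) :
    (L + 1 < d →
      (∀ S : Fin (L+1) → ℕ, (∑ l, S l) = d →
        ((closure (LocRepS K r L d S) ∈ irreducibleComponents (LocV K r L d))
            ↔ Cond2 r L S) ∧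
        (Cond2 r L S ↔ Cond3 K r L d S) ∧
        (Cond3 K r L d S ↔ Cond4 K r L d S)) ∧
      (∀ C : Set (LocV K r L d), C ∈ irreducibleComponents (LocV K r L d) ↔
        ∃ S : Fin (L+1) → ℕ, (∑ l, S l) = d ∧ Cond2 r L S ∧
          C = closure (LocRepS K r L d S))) ∧
    (d ≤ L + 1 →
      IsIrreducible (Set.univ : Set (LocV K r L d)) ∧
      ∃ U : Set (LocV K r L d), IsOpen U ∧ Dense U ∧
        ∀ x ∈ U, UniserialRep (loopQuiver r) (fun _ => d) K x.1) := by
  refine ⟨fun hd ↦ ⟨fun S hS ↦ ?_, fun C ↦ mem_irreducibleComponents_iff hr hd⟩,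
    fun hd ↦ ⟨isIrreducible_univ_locV hr hd, exists_isOpen_dense_uniserialRep hr hd⟩⟩
  have h₂₃ : Cond2 r L S → Cond3 K r L d S := fun h ↦
    cond3_iff_exists_isRigid.2 (exists_isRigid_of_cond2 hS h)
  have h₃₄ : Cond3 K r L d S → Cond4 K r L d S := fun h ↦
    let ⟨_, hx, hrigid⟩ := cond3_iff_exists_isRigid.1 h
    cond4_of_isRigid hx hrigid
  have h₄₂ : Cond4 K r L d S → Cond2 r L S := cond2_of_cond4 hr hd
  exact ⟨closure_locRepS_mem_irreducibleComponents_iff hr hd hS, ⟨h₂₃, h₄₂ ∘ h₃₄⟩,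
    ⟨h₃₄, h₂₃ ∘ h₄₂⟩⟩

open QuiverData Stmt14 in
/-- Let `Λ` be the local truncated path algebra on `r ≥ 2` loops with
`J^{L+1} = 0`, and `d` a positive integer. (I) If `d > L+1`, then for every
`d`-dimensional semisimple sequence `S`, conditions (1) (the closure of `Rep S` is an
irreducible component of `Rep_d(Λ)`), (2), (3), (4) are equivalent, and the irreducible
components of `Rep_d(Λ)` are precisely the closures of the `Rep S` with `S` satisfying
(2). (II) If `d ≤ L+1`, then `Rep_d(Λ)` is irreducible and its modules are generically
uniserial. -/
theorem statement_14 (K : Type) [Field K] [IsAlgClosed K] (r L d : ℕ)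
    (hr : 2 ≤ r) (hL : 0 < L) :
    (L + 1 < d →
      (∀ S : Fin (L+1) → ℕ, (∑ l, S l) = d →
        ((closure (LocRepS K r L d S) ∈ irreducibleComponents (LocV K r L d))
            ↔ Cond2 r L S) ∧
        (Cond2 r L S ↔ Cond3 K r L d S) ∧
        (Cond3 K r L d S ↔ Cond4 K r L d S)) ∧
      (∀ C : Set (LocV K r L d), C ∈ irreducibleComponents (LocV K r L d) ↔
        ∃ S : Fin (L+1) → ℕ, (∑ l, S l) = d ∧ Cond2 r L S ∧
          C = closure (LocRepS K r L d S))) ∧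
    (d ≤ L + 1 →
      IsIrreducible (Set.univ : Set (LocV K r L d)) ∧
      ∃ U : Set (LocV K r L d), IsOpen U ∧ Dense U ∧
        ∀ x ∈ U, UniserialRep (loopQuiver r) (fun _ => d) K x.1) := by
  have : Infinite K := IsAlgClosed.instInfinite
  exact statement_14_general K r L d hr
end

section
/- Let Λ = KQ/I be an arbitrary basic finite-dimensional algebra over an algebraically closed field and d a dimension vector. If D is an irreducible component of Rep S for some semisimple sequence S ∈ Seq(d) and there exists a point x ∈ D with Γ(M_x) = 1, then the Zariski closure of D is an irreducible component of Rep_d(Λ). In particular, the closure of D is an irreducible component of Rep_d(Λ) whenever D contains a point encoding a uniserial module. -/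
open Finset

/-! The set `Filt S` of points admitting a filtration governed by `S` is Zariski closed. In matrix
form, membership of `x` asks for an invertible matrix that makes the arrows of `x` block triangular.
If points of `Filt S` converge to `x` along an ultrafilter, their matrices define one over the
ultraproduct of copies of `K`, which is a field, at a point specialising to `x`. A valuation ring
dominating this specialisation reduces the resulting filtration to one over its residue field with
the same dimensions, because every subspace meets the standard lattice in a direct summand; this is
the valuative criterion for the flag variety. The Nullstellensatz brings the matrix over the residue
field back to `K`.

Now let `C` be irreducible with `D ⊆ C`. As radical layerings take finitely many values, some
stratum `Rep S'` is dense in `C`, so `x ∈ D` lies in the closure of `Rep S'`, hence in `Filt S'`.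
Then `Γ(M_x) = 1` forces `S' = S`, and maximality of `D` in `Rep S` gives `C ⊆ closure D`.

A uniserial `M_x` has no submodule strictly between consecutive radical powers, so each step of a
filtration governed by a realizable sequence is the next radical power or is stationary. In a
realizable sequence only zero layers follow a zero layer, so a stationary step happens only at
`0`. -/

section LinearAlgebra

variable {K V : Type*} [Field K] [AddCommGroup V] [Module K V] [FiniteDimensional K V]

theorem exists_sup_span_range_eq {P' P : Submodule K V} (hle : P' ≤ P) {s : ℕ}
    (hs : Module.finrank K P = s + Module.finrank K P') :
    ∃ c : Fin s → V, P' ⊔ Submodule.span K (Set.range c) = P := by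
  obtain ⟨C, hdisj, hsup⟩ := IsModularLattice.exists_disjoint_and_sup_eq hle
  have hC : Module.finrank K C = s := by
    have := Submodule.finrank_sup_add_finrank_inf_eq P' C
    rw [hsup, hdisj.eq_bot, finrank_bot] at this
    lia
  let c := Module.finBasisOfFinrankEq K C hC
  refine ⟨fun j => c j, ?_⟩
  have hspan : Submodule.span K (Set.range fun j => (c j : V)) = C := by
    rw [Set.range_comp' Subtype.val c, ← Submodule.coe_subtype, Submodule.span_image, c.span_eq,
      Submodule.map_subtype_top]
  rw [hspan, hsup]

theorem finrank_inf_ker_add_one {W : Submodule K V} {f : Module.Dual K V} {u : V} (hu : u ∈ W)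
    (hfu : f u ≠ 0) : Module.finrank K ↥(W ⊓ LinearMap.ker f) + 1 = Module.finrank K W := by
  have hf : f.domRestrict W ≠ 0 := fun h => hfu (LinearMap.congr_fun h ⟨u, hu⟩)
  rw [← Module.Dual.finrank_ker_add_one_of_ne_zero hf, LinearMap.ker_domRestrict,
    ← Submodule.map_comap_subtype, Submodule.finrank_map_subtype_eq]

end LinearAlgebra

section FiniteType

theorem nonempty_algHom_of_finiteType (K B : Type*) [Field K] [IsAlgClosed K] [CommRing B]
    [Nontrivial B] [Algebra K B] [Algebra.FiniteType K B] : Nonempty (B →ₐ[K] K) := by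
  obtain ⟨m, hm⟩ := Ideal.exists_maximal B
  let : Field (B ⧸ m) := Ideal.Quotient.field m
  have : Module.Finite K (B ⧸ m) := finite_of_finite_type_of_isJacobsonRing K (B ⧸ m)
  exact ⟨(IsAlgClosed.lift : B ⧸ m →ₐ[K] K).comp (Ideal.Quotient.mkₐ K m)⟩

end FiniteType

section GenericFiber

variable {X T : Type*} [TopologicalSpace X]

theorem exists_subset_closure_inter_fiber {C : Set X} (hC : IsIrreducible C) {s : X → T}
    (hs : (s '' C).Finite) : ∃ t, C ⊆ closure (C ∩ s ⁻¹' {t}) := by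
  classical
  obtain ⟨Z, hZ, hCZ⟩ := isIrreducible_iff_sUnion_isClosed.1 hC
    (hs.toFinset.image fun t => closure (C ∩ s ⁻¹' {t}))
    (by simp only [mem_image, forall_exists_index, and_imp, forall_apply_eq_imp_iff₂,
          isClosed_closure, implies_true])
    (fun y hy => Set.mem_sUnion.2 ⟨closure (C ∩ s ⁻¹' {s y}),
      mem_coe.2 (mem_image_of_mem _ (hs.mem_toFinset.2 ⟨y, hy, rfl⟩)),
      subset_closure ⟨hy, rfl⟩⟩)
  obtain ⟨t, -, rfl⟩ := mem_image.1 hZ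
  exact ⟨t, hCZ⟩

theorem closure_mem_irreducibleComponents_of_maximal_fiber {s : X → T} (hs : (Set.range s).Finite)
    {t : T} {D : Set X} (hD : Maximal (fun E => IsIrreducible E ∧ E ⊆ s ⁻¹' {t}) D) {x : X}
    (hxD : x ∈ D) (hx : ∀ u, x ∈ closure (s ⁻¹' {u}) → u = t) :
    closure D ∈ irreducibleComponents X := by
  refine ⟨hD.prop.1.closure, fun C hC hDC => ?_⟩
  obtain ⟨u, hCu⟩ := exists_subset_closure_inter_fiber hC (hs.subset (Set.image_subset_range s C))
  obtain rfl : u = t :=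
    hx u (closure_mono Set.inter_subset_right (hCu (hDC (subset_closure hxD))))
  have hdense : closure (C ∩ s ⁻¹' {u}) = closure C :=
    (closure_mono Set.inter_subset_left).antisymm (closure_minimal hCu isClosed_closure)
  have hirr : IsIrreducible (C ∩ s ⁻¹' {u}) := by
    rw [← isIrreducible_iff_closure, hdense]
    exact hC.closure
  have hDle : D ⊆ C ∩ s ⁻¹' {u} := fun y hy => ⟨hDC (subset_closure hy), hD.prop.2 hy⟩
  exact hCu.trans (closure_mono (hD.le_of_ge ⟨hirr, Set.inter_subset_right⟩ hDle))

end GenericFiber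

section ResidueSubspace

open IsLocalRing

variable {F : Type*} [Field F] (V : ValuationSubring F) {ι : Type*}

/-- The reduction of a subspace `U` of `F^ι` modulo the maximal ideal of a valuation ring `V` of
`F`: the image of the `V`-module `U ∩ V^ι` in `k^ι`, where `k` is the residue field of `V`. -/
def residueSubspace (U : Submodule F (ι → F)) :
    Submodule (ResidueField V) (ι → ResidueField V) where
  carrier := {z | ∃ y : ι → V, (fun p => (y p : F)) ∈ U ∧ (fun p => residue V (y p)) = z}
  add_mem' := by
    rintro _ _ ⟨y, hy, rfl⟩ ⟨y', hy', rfl⟩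
    exact ⟨y + y', U.add_mem hy hy', by ext p; simp⟩
  zero_mem' := ⟨0, U.zero_mem, by ext p; simp⟩
  smul_mem' := by
    rintro c _ ⟨y, hy, rfl⟩
    obtain ⟨c, rfl⟩ := residue_surjective c
    exact ⟨c • y, U.smul_mem (c : F) hy, by ext p; simp⟩

theorem residueSubspace_mono {U U' : Submodule F (ι → F)} (h : U ≤ U') :
    residueSubspace V U ≤ residueSubspace V U' := by
  rintro _ ⟨y, hy, rfl⟩
  exact ⟨y, h hy, rfl⟩

theorem residueSubspace_top : residueSubspace V (⊤ : Submodule F (ι → F)) = ⊤ := by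
  refine top_unique fun z _ => ?_
  choose y hy using fun p => residue_surjective (R := V) (z p)
  exact ⟨y, trivial, funext hy⟩

theorem residueSubspace_bot : residueSubspace V (⊥ : Submodule F (ι → F)) = ⊥ := by
  refine bot_unique ?_
  rintro _ ⟨y, hy, rfl⟩
  have hy0 (p) : y p = 0 := Subtype.ext (congrFun ((Submodule.mem_bot F).1 hy) p)
  simp only [hy0, map_zero]
  exact Submodule.zero_mem _

theorem residueSubspace_inf_ker_proj {U : Submodule F (ι → F)} {j : ι} {y : ι → V}
    (hy : (fun p => (y p : F)) ∈ U) (hyj : y j = 1) :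
    residueSubspace V (U ⊓ LinearMap.ker (LinearMap.proj j : (ι → F) →ₗ[F] F)) =
      residueSubspace V U ⊓ LinearMap.ker (LinearMap.proj j) := by
  apply le_antisymm
  · rintro _ ⟨y', ⟨hy', hy'j⟩, rfl⟩
    have : y' j = 0 := Subtype.ext hy'j
    exact ⟨⟨y', hy', rfl⟩, by simp [this]⟩
  · rintro _ ⟨⟨y', hy', rfl⟩, hy'j⟩
    have hres : residue V (y' j) = 0 := hy'j
    exact ⟨y' - y' j • y, ⟨U.sub_mem hy' (U.smul_mem (y' j : F) hy), by simp [hyj]⟩,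
      by ext p; simp [hres]⟩

variable [Finite ι]

theorem exists_integral_mem_of_ne_bot {U : Submodule F (ι → F)} (hU : U ≠ ⊥) :
    ∃ y : ι → V, (fun p => (y p : F)) ∈ U ∧ ∃ j, y j = 1 := by
  obtain ⟨u, hu, hu0⟩ := Submodule.exists_mem_ne_zero_of_ne_bot hU
  obtain ⟨i, hi⟩ := Function.ne_iff.1 hu0
  have : Nonempty ι := ⟨i⟩
  obtain ⟨j, hj⟩ := Finite.exists_max fun p => V.valuation (u p)
  choose y hy using fun p => (V.valuation_le_iff _ _).1 (hj p)
  have huj : u j ≠ 0 := fun h => hi (by rw [← hy, h, mul_zero, Pi.zero_apply])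
  refine ⟨y, ?_, j, Subtype.ext (mul_right_cancel₀ huj ((hy j).trans (one_mul _).symm))⟩
  have : (fun p => (y p : F)) = (u j)⁻¹ • u := by
    ext p
    rw [Pi.smul_apply, smul_eq_mul, ← hy p, mul_comm, mul_inv_cancel_right₀ huj]
  exact this ▸ U.smul_mem _ hu

theorem finrank_residueSubspace (U : Submodule F (ι → F)) :
    Module.finrank (ResidueField V) (residueSubspace V U) = Module.finrank F U := by
  induction hn : Module.finrank F U generalizing U with
  | zero => rw [Submodule.finrank_eq_zero.1 hn, residueSubspace_bot, finrank_bot]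
  | succ n ih =>
    have hU : U ≠ ⊥ := by
      rintro rfl
      simp at hn
    obtain ⟨y, hy, j, hyj⟩ := exists_integral_mem_of_ne_bot V hU
    have hF := finrank_inf_ker_add_one (f := LinearMap.proj j) hy (by simp [hyj])
    have hk := finrank_inf_ker_add_one (W := residueSubspace V U) (f := LinearMap.proj j)
      ⟨y, hy, rfl⟩ (by simp [hyj])
    rw [← residueSubspace_inf_ker_proj V hy hyj, ih _ (by lia)] at hk
    exact hk.symm

theorem exists_valuationSubring_comap_maximalIdeal_eq {A : Type*} [CommRing A] (P : Ideal A)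
    [P.IsPrime] (θ : A →+* F) (hθ : RingHom.ker θ ≤ P) :
    ∃ (V : ValuationSubring F) (j : A →+* V),
      (∀ a, (j a : F) = θ a) ∧ (maximalIdeal V).comap j = P := by
  have hunit (s : P.primeCompl) : IsUnit (θ s) := isUnit_iff_ne_zero.2 fun h => s.2 (hθ h)
  obtain ⟨V, hV, hloc⟩ := exists_factor_valuationRing
    (IsLocalization.lift hunit : Localization.AtPrime P →+* F)
  let f : Localization.AtPrime P →+* V := RingHom.codRestrict _ V.toSubring hV
  have hmax : (maximalIdeal V).comap f = maximalIdeal _ := ((local_hom_TFAE f).out 0 4).1 hloc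
  refine ⟨V, f.comp (algebraMap A _), fun a => IsLocalization.lift_eq hunit a, ?_⟩
  rw [← Ideal.comap_comap, hmax]
  exact Localization.AtPrime.under_maximalIdeal

end ResidueSubspace

namespace QuiverData

variable {Q : QuiverData} {d : Fin Q.n → ℕ} {K : Type} [Field K]

variable {Q : QuiverData} {d : Fin Q.n → ℕ} {K : Type} [Field K]

section GradedSubspaces

theorem proj_apply (i : Fin Q.n) (m : Carrier Q d K) (p : Σ i, Fin (d i)) :
    proj Q d K i m p = if p.1 = i then m p else 0 := rfl

theorem sum_proj (m : Carrier Q d K) : ∑ i, proj Q d K i m = m := by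
  ext p
  simp [proj_apply]

theorem proj_proj (i j : Fin Q.n) (m : Carrier Q d K) :
    proj Q d K i (proj Q d K j m) = if i = j then proj Q d K j m else 0 := by
  ext p
  simp only [proj_apply, apply_ite (fun v : Carrier Q d K => v p), Pi.zero_apply]
  grind

theorem le_of_forall_map_proj_le {N N' : Submodule K (Carrier Q d K)}
    (h : ∀ i, N.map (proj Q d K i) ≤ N') : N ≤ N' := fun m hm => by
  rw [← sum_proj m]
  exact Submodule.sum_mem _ fun i _ => h i (Submodule.mem_map_of_mem hm)

theorem vdim_bot (i : Fin Q.n) : vdim Q d K ⊥ i = 0 := by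
  rw [vdim, Submodule.map_bot, finrank_bot]

theorem vdim_top (i : Fin Q.n) : vdim Q d K ⊤ i = d i := by
  let ρ : Carrier Q d K →ₗ[K] Fin (d i) → K :=
    LinearMap.funLeft K K (fun v => (⟨i, v⟩ : Σ i, Fin (d i)))
  have hρ : LinearMap.range ρ = ⊤ := LinearMap.range_eq_top.2
    (LinearMap.funLeft_surjective_of_injective K K _
      (sigma_mk_injective (β := fun i => Fin (d i))))
  have hker : LinearMap.ker ρ = LinearMap.ker (proj Q d K i) := by
    ext m
    simp only [LinearMap.mem_ker, funext_iff, proj_apply, ρ, LinearMap.funLeft_apply,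
      Pi.zero_apply, Sigma.forall, ite_eq_right_iff]
    exact ⟨by rintro h j v rfl; exact h v, fun h v => h i v rfl⟩
  have h₁ := LinearMap.finrank_range_add_finrank_ker ρ
  have h₂ := LinearMap.finrank_range_add_finrank_ker (proj Q d K i)
  rw [hρ, finrank_top, Module.finrank_fin_fun, hker] at h₁
  rw [vdim, Submodule.map_top]
  lia

theorem vdim_mono {N N' : Submodule K (Carrier Q d K)} (h : N ≤ N') (i : Fin Q.n) :
    vdim Q d K N i ≤ vdim Q d K N' i :=
  Submodule.finrank_mono (Submodule.map_mono h)

theorem eq_of_le_of_vdim_le {N N' : Submodule K (Carrier Q d K)} (hle : N ≤ N')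
    (hgr : ∀ i, N.map (proj Q d K i) ≤ N)
    (h : ∀ i, vdim Q d K N' i ≤ vdim Q d K N i) : N = N' := by
  refine hle.antisymm (le_of_forall_map_proj_le fun i => ?_)
  rw [← Submodule.eq_of_le_of_finrank_le (Submodule.map_mono hle) (h i)]
  exact hgr i

end GradedSubspaces

section RadicalSeries

theorem radPow_zero (x : RepSpace Q d K) : radPow Q d K x 0 = ⊤ :=
  top_unique (le_iSup_of_le ⟨[], rfl⟩ (by simp [wordMap, Module.End.one_eq_id]))

theorem radPow_succ (x : RepSpace Q d K) (l : ℕ) :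
    radPow Q d K x (l + 1) = ⨆ a, (radPow Q d K x l).map (arrowMap Q d K x a) := by
  have range_cons (a : Fin Q.numArrows) (w : List (Fin Q.numArrows)) :
      LinearMap.range (wordMap Q d K x (a :: w)) =
        (LinearMap.range (wordMap Q d K x w)).map (arrowMap Q d K x a) := by
    rw [wordMap, List.map_cons, List.prod_cons, Module.End.mul_eq_comp, LinearMap.range_comp]
    rfl
  simp only [radPow, Submodule.map_iSup, ← range_cons]
  refine le_antisymm (iSup_le ?_) (iSup_le fun a => iSup_le fun w => ?_)
  · rintro ⟨_ | ⟨a, w⟩, hw⟩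
    · simp at hw
    · exact le_iSup_of_le a (le_iSup_of_le ⟨w, by simpa using hw⟩ le_rfl)
  · exact le_iSup_of_le ⟨a :: w.1, by simp [w.2]⟩ le_rfl

theorem map_arrowMap_radPow_le (x : RepSpace Q d K) (l : ℕ) (a : Fin Q.numArrows) :
    (radPow Q d K x l).map (arrowMap Q d K x a) ≤ radPow Q d K x (l + 1) := by
  rw [radPow_succ]
  exact le_iSup (fun a => (radPow Q d K x l).map (arrowMap Q d K x a)) a

theorem radPow_succ_le (x : RepSpace Q d K) (l : ℕ) :
    radPow Q d K x (l + 1) ≤ radPow Q d K x l := by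
  induction l with
  | zero => rw [radPow_zero]; exact le_top
  | succ l ih =>
    rw [radPow_succ x l, radPow_succ x (l + 1)]
    exact iSup_mono fun a => Submodule.map_mono ih

theorem radPow_eq_of_radPow_succ_eq {x : RepSpace Q d K} {l : ℕ}
    (h : radPow Q d K x (l + 1) = radPow Q d K x l) {l' : ℕ} (hl : l ≤ l') :
    radPow Q d K x l' = radPow Q d K x l := by
  induction l', hl using Nat.le_induction with
  | base => rfl
  | succ n _ ih => rw [radPow_succ, ih, ← radPow_succ, h]

theorem proj_arrowMap (x : RepSpace Q d K) (i : Fin Q.n) (a : Fin Q.numArrows)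
    (m : Carrier Q d K) :
    proj Q d K i (arrowMap Q d K x a m) = if Q.tgt a = i then arrowMap Q d K x a m else 0 := by
  ext p
  by_cases hp : p.1 = Q.tgt a
  · rw [proj_apply, hp]
    split_ifs <;> rfl
  · have : arrowMap Q d K x a m p = 0 := by simp [arrowMap, hp]
    rw [proj_apply]
    split_ifs <;> simp [this]

theorem map_proj_radPow_le (x : RepSpace Q d K) (l : ℕ) (i : Fin Q.n) :
    (radPow Q d K x l).map (proj Q d K i) ≤ radPow Q d K x l := by
  cases l with
  | zero => rw [radPow_zero]; exact le_top
  | succ l =>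
    rw [radPow_succ, Submodule.map_iSup]
    refine iSup_mono fun a => ?_
    rintro _ ⟨_, ⟨m, hm, rfl⟩, rfl⟩
    rw [proj_arrowMap]
    split_ifs
    exacts [Submodule.mem_map_of_mem hm, Submodule.zero_mem _]

theorem radPow_eq_bot {x : RepSpace Q d K} {l : ℕ}
    (h : ∀ w : List (Fin Q.numArrows), w.length = l → wordMap Q d K x w = 0) :
    radPow Q d K x l = ⊥ :=
  iSup_eq_bot.2 fun w => by rw [h w.1 w.2, LinearMap.range_zero]

theorem radLayering_add_vdim (x : RepSpace Q d K) {L : ℕ} (l : Fin (L + 1)) (i : Fin Q.n) :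
    radLayering Q d K L x l i + vdim Q d K (radPow Q d K x (l + 1)) i =
      vdim Q d K (radPow Q d K x l) i :=
  Nat.sub_add_cancel (vdim_mono (radPow_succ_le x l) i)

theorem finite_range_radLayering (L : ℕ) : (Set.range (radLayering Q d K L)).Finite := by
  refine (Set.finite_Iic fun _ _ => Module.finrank K (Carrier Q d K)).subset ?_
  rintro _ ⟨x, rfl⟩ l i
  exact (Nat.sub_le _ _).trans (Submodule.finrank_le _)

theorem radLayering_eq_zero_of_le {L : ℕ} {x : RepSpace Q d K} {l l' : Fin (L + 1)}
    (h : radLayering Q d K L x l = 0) (hl : l ≤ l') : radLayering Q d K L x l' = 0 := by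
  have hstab : radPow Q d K x (l + 1) = radPow Q d K x l :=
    eq_of_le_of_vdim_le (radPow_succ_le x l) (map_proj_radPow_le x _) fun i => by
      rw [← radLayering_add_vdim x l i, h, Pi.zero_apply, zero_add]
  ext i
  rw [radLayering, radPow_eq_of_radPow_succ_eq hstab hl,
    radPow_eq_of_radPow_succ_eq hstab (Nat.le_succ_of_le hl), Nat.sub_self]
  rfl

end RadicalSeries

section GovernedFiltrations

variable {L : ℕ} {x : RepSpace Q d K} {S : Fin (L + 1) → Fin Q.n → ℕ}
  {F : Fin (L + 2) → Submodule K (Carrier Q d K)}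

theorem governed_radPow
    (h : ∀ w : List (Fin Q.numArrows), w.length = L + 1 → wordMap Q d K x w = 0) :
    Governed Q d K L x (radLayering Q d K L x) (fun l => radPow Q d K x l) :=
  ⟨radPow_zero x, radPow_eq_bot h, fun l => radPow_succ_le x l,
    fun l => map_proj_radPow_le x l, fun l => map_arrowMap_radPow_le x l,
    fun l i => (radLayering_add_vdim x l i).symm⟩

theorem sum_castSucc_le_castSucc (f : Fin (L + 1) → ℕ) (l : Fin (L + 1)) :
    ∑ j with l.castSucc ≤ j.castSucc, f j = f l + ∑ j with l.succ ≤ j.castSucc, f j := by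
  have hIci : (univ.filter fun j : Fin (L + 1) => l.castSucc ≤ j.castSucc) =
      insert l (univ.filter fun j => l.succ ≤ j.castSucc) := by
    ext j
    simp only [mem_filter, mem_univ, true_and, mem_insert, Fin.le_def, Fin.ext_iff,
      Fin.val_castSucc, Fin.val_succ]
    lia
  rw [hIci, sum_insert (by simp [Fin.le_def])]

theorem Governed.vdim_eq_sum (H : Governed Q d K L x S F) (l : Fin (L + 2)) (i : Fin Q.n) :
    vdim Q d K (F l) i = ∑ j with l ≤ j.castSucc, S j i := by
  obtain ⟨-, hbot, -, -, -, hdim⟩ := H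
  induction l using Fin.reverseInduction with
  | last => simp [hbot, vdim_bot, Fin.castSucc_ne_last]
  | cast l ih => rw [hdim, ih, sum_castSucc_le_castSucc]

theorem Governed.hasDimVec (H : Governed Q d K L x S F) : hasDimVec S d := fun i => by
  simpa [H.1, vdim_top] using (H.vdim_eq_sum 0 i).symm

end GovernedFiltrations

section AdaptedBases

variable {L : ℕ} {S : Fin (L + 1) → Fin Q.n → ℕ}

/-- A distribution of the index set of the standard basis of the carrier space over the layers of
the semisimple sequence `S`: the `d i` indices at the vertex `i` are matched with the
`∑ l, S l i` composition factors at `i`. -/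
abbrev LayerLabelling (S : Fin (L + 1) → Fin Q.n → ℕ) (d : Fin Q.n → ℕ) :=
  ∀ i, Fin (d i) ≃ Σ l, Fin (S l i)

theorem nonempty_layerLabelling (hS : hasDimVec S d) : Nonempty (LayerLabelling S d) := by
  rw [Classical.nonempty_pi]
  intro i
  rw [← Fintype.card_eq]
  simp [hS i]

/-- The number of the layer to which a labelling assigns a basis index. -/
def LayerLabelling.layer (e : LayerLabelling S d) (p : Σ i, Fin (d i)) : Fin (L + 1) :=
  (e p.1 p.2).1

/-- The span of the vectors of the family `b` that are labelled by the layers from `l` onwards. -/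
def LayerLabelling.spanGE (e : LayerLabelling S d) (b : (Σ i, Fin (d i)) → Carrier Q d K)
    (l : Fin (L + 2)) : Submodule K (Carrier Q d K) :=
  Submodule.span K (b '' {p | l ≤ (e.layer p).castSucc})

/-- A basis of `M_x` is adapted to the labelling `e` if it consists of vectors supported at the
prescribed vertices and every arrow moves it to strictly deeper layers. -/
structure IsAdaptedBasis (x : RepSpace Q d K) (e : LayerLabelling S d)
    (b : Module.Basis (Σ i, Fin (d i)) K (Carrier Q d K)) : Prop where
  proj_self (p : Σ i, Fin (d i)) : proj Q d K p.1 (b p) = b p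
  arrowMap_mem (a : Fin Q.numArrows) (p : Σ i, Fin (d i)) :
    arrowMap Q d K x a (b p) ∈ e.spanGE b (e.layer p).succ

namespace LayerLabelling

variable (e : LayerLabelling S d) {b : (Σ i, Fin (d i)) → Carrier Q d K}

theorem spanGE_antitone : Antitone (e.spanGE b) := fun _ _ h =>
  Submodule.span_mono (Set.image_mono fun _ hp => h.trans hp)

theorem card_le_layer (l : Fin (L + 2)) (i : Fin Q.n) :
    Fintype.card {v : Fin (d i) // l ≤ (e.layer ⟨i, v⟩).castSucc} =
      ∑ j with l ≤ j.castSucc, S j i := by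
  have hcongr := Fintype.card_congr <|
    ((e i).subtypeEquivOfSubtype (p := fun s => l ≤ s.1.castSucc)).trans
      (Equiv.subtypeSigmaEquiv _ fun j : Fin (L + 1) => l ≤ j.castSucc)
  rw [Fintype.card_sigma] at hcongr
  simp only [Fintype.card_fin] at hcongr
  exact hcongr.trans
    (sum_subtype (univ.filter fun j : Fin (L + 1) => l ≤ j.castSucc) (by simp) fun j => S j i).symm

theorem map_proj_spanGE (hb : ∀ p, proj Q d K p.1 (b p) = b p) (l : Fin (L + 2)) (i : Fin Q.n) :
    (e.spanGE b l).map (proj Q d K i) = Submodule.span K (Set.range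
      fun v : {v : Fin (d i) // l ≤ (e.layer ⟨i, v⟩).castSucc} => b ⟨i, v⟩) := by
  have hproj (p) : proj Q d K i (b p) = if i = p.1 then b p else 0 := by
    rw [← hb p, proj_proj, hb]
  rw [spanGE, Submodule.map_span]
  refine Submodule.span_eq_span ?_ ?_
  · rintro _ ⟨_, ⟨⟨j, v⟩, hp, rfl⟩, rfl⟩
    rw [hproj]
    split_ifs with h
    · obtain rfl : i = j := h
      exact Submodule.subset_span ⟨⟨v, hp⟩, rfl⟩
    · exact Submodule.zero_mem _
  · rintro _ ⟨v, rfl⟩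
    exact Submodule.subset_span ⟨b ⟨i, v⟩, ⟨⟨i, v⟩, v.2, rfl⟩, by rw [hproj, if_pos rfl]⟩

theorem vdim_spanGE (hb : ∀ p, proj Q d K p.1 (b p) = b p) (hli : LinearIndependent K b)
    (l : Fin (L + 2)) (i : Fin Q.n) :
    vdim Q d K (e.spanGE b l) i = ∑ j with l ≤ j.castSucc, S j i := by
  rw [vdim, e.map_proj_spanGE hb, finrank_span_eq_card, e.card_le_layer]
  exact hli.comp _ ((sigma_mk_injective (β := fun i => Fin (d i))).comp Subtype.val_injective)

end LayerLabelling

theorem IsAdaptedBasis.governed {x : RepSpace Q d K} {e : LayerLabelling S d}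
    {b : Module.Basis (Σ i, Fin (d i)) K (Carrier Q d K)} (H : IsAdaptedBasis x e b) :
    Governed Q d K L x S (e.spanGE b) := by
  refine ⟨?_, ?_, fun l => e.spanGE_antitone (Fin.castSucc_lt_succ).le, fun l i => ?_,
    fun l a => ?_, fun l i => ?_⟩
  · simp [LayerLabelling.spanGE, b.span_eq]
  · simp [LayerLabelling.spanGE, Fin.castSucc_ne_last]
  · rw [e.map_proj_spanGE H.proj_self, LayerLabelling.spanGE]
    refine Submodule.span_mono ?_
    rintro _ ⟨v, rfl⟩
    exact ⟨_, v.2, rfl⟩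
  · rw [LayerLabelling.spanGE, Submodule.map_span_le]
    rintro _ ⟨p, hp, rfl⟩
    exact e.spanGE_antitone (Fin.succ_le_succ_iff.2 (Fin.castSucc_le_castSucc_iff.1 hp))
      (H.arrowMap_mem a p)
  · rw [e.vdim_spanGE H.proj_self b.linearIndependent,
      e.vdim_spanGE H.proj_self b.linearIndependent, sum_castSucc_le_castSucc]

theorem Governed.exists_isAdaptedBasis {x : RepSpace Q d K}
    {F : Fin (L + 2) → Submodule K (Carrier Q d K)} (H : Governed Q d K L x S F)
    (e : LayerLabelling S d) : ∃ b, IsAdaptedBasis x e b := by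
  obtain ⟨htop, hbot, hmono, hgr, harr, hdim⟩ := H
  choose c hc using fun (l : Fin (L + 1)) (i : Fin Q.n) =>
    exists_sup_span_range_eq (Submodule.map_mono (f := proj Q d K i) (hmono l)) (hdim l i)
  let b (p : Σ i, Fin (d i)) : Carrier Q d K := c (e.layer p) p.1 (e p.1 p.2).2
  have hbmem (p) : b p ∈ (F (e.layer p).castSucc).map (proj Q d K p.1) := by
    rw [← hc]
    exact Submodule.mem_sup_right (Submodule.subset_span ⟨_, rfl⟩)
  have hle (l) : F l ≤ e.spanGE b l := by
    induction l using Fin.reverseInduction with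
    | last => rw [hbot]; exact bot_le
    | cast l ih =>
      refine le_of_forall_map_proj_le fun i => ?_
      rw [← hc]
      refine sup_le (((hgr _ _).trans ih).trans (e.spanGE_antitone (Fin.castSucc_lt_succ).le)) ?_
      rw [Submodule.span_le]
      rintro _ ⟨j, rfl⟩
      refine Submodule.subset_span ⟨⟨i, (e i).symm ⟨l, j⟩⟩, ?_, ?_⟩
      · simp [LayerLabelling.layer]
      · simp only [b, LayerLabelling.layer]
        rw [Equiv.apply_symm_apply]
  have hspan : ⊤ ≤ Submodule.span K (Set.range b) := by
    rw [← htop]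
    exact (hle 0).trans (Submodule.span_mono (Set.image_subset_range _ _))
  refine ⟨basisOfTopLeSpanOfCardEqFinrank b hspan (by simp), fun p => ?_, fun a p => ?_⟩
  · obtain ⟨m, -, hm⟩ := hbmem p
    rw [coe_basisOfTopLeSpanOfCardEqFinrank, ← hm, proj_proj, if_pos rfl]
  · rw [coe_basisOfTopLeSpanOfCardEqFinrank]
    exact hle _ (harr _ a (Submodule.mem_map_of_mem (hgr _ _ (hbmem p))))

end AdaptedBases

section Triangularization

variable {R R' : Type*} [CommRing R] [CommRing R'] {L : ℕ} {S : Fin (L + 1) → Fin Q.n → ℕ}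

/-- The matrix over a commutative ring `R` by which the arrow `a` acts when the coordinates of the
representation space are specialised to elements of `R`. -/
def arrowMatrix (w : Coords Q d → R) (a : Fin Q.numArrows) :
    Matrix (Σ i, Fin (d i)) (Σ i, Fin (d i)) R :=
  fun p q => if h : p.1 = Q.tgt a ∧ q.1 = Q.src a then
    w ⟨a, (Fin.cast (congrArg d h.1) p.2, Fin.cast (congrArg d h.2) q.2)⟩ else 0

theorem map_arrowMatrix (f : R →+* R') (w : Coords Q d → R) (a : Fin Q.numArrows) :
    (arrowMatrix w a).map f = arrowMatrix (fun c => f (w c)) a := by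
  ext p q
  simp only [arrowMatrix, Matrix.map_apply]
  split_ifs
  exacts [rfl, map_zero f]

/-- The matrix form, over an arbitrary commutative ring, of a filtration governed by `S`: the
columns of the vertex-graded invertible matrix `g`, with inverse `h`, are a basis in which every
arrow is strictly triangular with respect to the layers of `e`. -/
structure Triangularizes (e : LayerLabelling S d) (w : Coords Q d → R)
    (g h : Matrix (Σ i, Fin (d i)) (Σ i, Fin (d i)) R) : Prop where
  mul_eq_one : g * h = 1
  graded (p q : Σ i, Fin (d i)) : p.1 ≠ q.1 → g p q = 0
  triangular (a : Fin Q.numArrows) (p q : Σ i, Fin (d i)) :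
    ¬ e.layer q < e.layer p → (h * arrowMatrix w a * g) p q = 0

theorem map_mul_arrowMatrix_mul (f : R →+* R') (w : Coords Q d → R) (a : Fin Q.numArrows)
    (g h : Matrix (Σ i, Fin (d i)) (Σ i, Fin (d i)) R) (p q : Σ i, Fin (d i)) :
    (h.map f * arrowMatrix (fun c => f (w c)) a * g.map f) p q =
      f ((h * arrowMatrix w a * g) p q) := by
  rw [← map_arrowMatrix, ← Matrix.map_mul, ← Matrix.map_mul, Matrix.map_apply]

namespace Triangularizes

variable {e : LayerLabelling S d} {w : Coords Q d → R}
  {g h : Matrix (Σ i, Fin (d i)) (Σ i, Fin (d i)) R}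

theorem map (H : Triangularizes e w g h) (f : R →+* R') :
    Triangularizes e (fun c => f (w c)) (g.map f) (h.map f) where
  mul_eq_one := by
    rw [← Matrix.map_mul, H.mul_eq_one, Matrix.map_one f (map_zero f) (map_one f)]
  graded p q hpq := by rw [Matrix.map_apply, H.graded p q hpq, map_zero]
  triangular a p q hpq := by rw [map_mul_arrowMatrix_mul, H.triangular a p q hpq, map_zero]

theorem of_forall_map {ι : Type*} {f : ι → R →+* R'} (hf : ∀ r, (∀ y, f y r = 0) → r = 0)
    (H : ∀ y, Triangularizes e (fun c => f y (w c)) (g.map (f y)) (h.map (f y))) :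
    Triangularizes e w g h where
  mul_eq_one := by
    ext p q
    rw [← sub_eq_zero]
    refine hf _ fun y => ?_
    rw [← Matrix.sub_apply, ← Matrix.map_apply (f := f y), Matrix.map_sub (f y) (map_sub (f y)),
      Matrix.map_mul, (H y).mul_eq_one, Matrix.map_one _ (map_zero _) (map_one _), sub_self]
    rfl
  graded p q hpq := hf _ fun y => (H y).graded p q hpq
  triangular a p q hpq := hf _ fun y => by
    rw [← map_mul_arrowMatrix_mul, (H y).triangular a p q hpq]

end Triangularizes

end Triangularization

section MatrixForm

open Matrix

variable {L : ℕ} {S : Fin (L + 1) → Fin Q.n → ℕ} {e : LayerLabelling S d}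
  {x : RepSpace Q d K}

theorem arrowMap_eq_mulVecLin (x : RepSpace Q d K) (a : Fin Q.numArrows) :
    arrowMap Q d K x a = (arrowMatrix x a).mulVecLin := by
  refine LinearMap.ext fun m => funext fun p => ?_
  simp only [arrowMap, LinearMap.coe_mk, AddHom.coe_mk, mulVecLin_apply, mulVec, dotProduct,
    arrowMatrix, Fintype.sum_sigma]
  split_ifs with hp
  · rw [Finset.sum_eq_single_of_mem (Q.src a) (mem_univ _)
      fun i _ hi => by simp only [hi, and_false, dite_false, zero_mul, sum_const_zero]]
    simp only [hp, and_self, dite_true, Fin.cast_eq_self]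
  · simp only [hp, false_and, dite_false, zero_mul, sum_const_zero]

theorem triangularizes_toMatrix_iff
    {b : Module.Basis (Σ i, Fin (d i)) K (Carrier Q d K)} :
    Triangularizes e x ((Pi.basisFun K _).toMatrix b) (b.toMatrix (Pi.basisFun K _)) ↔
      IsAdaptedBasis x e b := by
  have hconj (a : Fin Q.numArrows) :
      b.toMatrix (Pi.basisFun K _) * arrowMatrix x a * (Pi.basisFun K _).toMatrix b =
        LinearMap.toMatrix b b (arrowMap Q d K x a) := by
    rw [← basis_toMatrix_mul_linearMap_toMatrix_mul_basis_toMatrix b (Pi.basisFun K _)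
      b (Pi.basisFun K _), arrowMap_eq_mulVecLin, LinearMap.toMatrix_eq_toMatrix',
      ← toLin'_apply', LinearMap.toMatrix'_toLin']
  have hmem (a : Fin Q.numArrows) (q : Σ i, Fin (d i)) :
      arrowMap Q d K x a (b q) ∈ e.spanGE b (e.layer q).succ ↔
        ∀ p, ¬ e.layer q < e.layer p → LinearMap.toMatrix b b (arrowMap Q d K x a) p q = 0 := by
    simp only [LayerLabelling.spanGE, b.mem_span_image, Set.subset_def, mem_coe,
      Finsupp.mem_support_iff, Set.mem_ofPred_eq, Fin.succ_le_castSucc_iff,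
      LinearMap.toMatrix_apply]
    exact forall_congr' fun p => not_imp_comm
  constructor
  · intro H
    refine ⟨fun q => ?_, fun a q => ?_⟩
    · ext p
      rw [proj_apply]
      split_ifs with hpq
      exacts [rfl, (H.graded p q hpq).symm]
    · exact (hmem a q).2 fun p hpq => hconj a ▸ H.triangular a p q hpq
  · intro H
    refine ⟨Module.Basis.toMatrix_mul_toMatrix_flip _ _, fun p q hpq => ?_, fun a p q hpq => ?_⟩
    · rw [Module.Basis.toMatrix_apply, Pi.basisFun_repr, ← H.proj_self, proj_apply, if_neg hpq]
    · rw [hconj]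
      exact (hmem a q).1 (H.arrowMap_mem a q) p hpq

theorem Triangularizes.exists_isAdaptedBasis {g h : Matrix (Σ i, Fin (d i)) (Σ i, Fin (d i)) K}
    (H : Triangularizes e x g h) : ∃ b, IsAdaptedBasis x e b := by
  let b := (Pi.basisFun K _).map (toLin'OfInv (mul_eq_one_comm.1 H.mul_eq_one) H.mul_eq_one)
  have hg : (Pi.basisFun K _).toMatrix b = g := by
    ext p q
    simp [b, Module.Basis.toMatrix_apply]
  have hh : b.toMatrix (Pi.basisFun K _) = h :=
    left_inv_eq_right_inv (hg ▸ Module.Basis.toMatrix_mul_toMatrix_flip _ _) H.mul_eq_one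
  exact ⟨b, triangularizes_toMatrix_iff.1 (by rwa [hg, hh])⟩

theorem exists_triangularizes_iff_mem_filtSet (e : LayerLabelling S d) :
    (∃ g h, Triangularizes e x g h) ↔ x ∈ FiltSet Q d K L S := by
  constructor
  · rintro ⟨g, h, H⟩
    obtain ⟨b, hb⟩ := H.exists_isAdaptedBasis
    exact ⟨_, hb.governed⟩
  · rintro ⟨F, H⟩
    obtain ⟨b, hb⟩ := H.exists_isAdaptedBasis e
    exact ⟨_, _, triangularizes_toMatrix_iff.2 hb⟩

end MatrixForm

section Reduction

open IsLocalRing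

variable {F : Type} [Field F] {V : ValuationSubring F}

theorem map_proj_residueSubspace {U : Submodule F (Carrier Q d F)} {i : Fin Q.n}
    (hU : U.map (proj Q d F i) ≤ U) :
    (residueSubspace V U).map (proj Q d _ i) = residueSubspace V (U.map (proj Q d F i)) := by
  apply le_antisymm
  · rintro _ ⟨_, ⟨y, hy, rfl⟩, rfl⟩
    refine ⟨fun p => if p.1 = i then y p else 0, ⟨_, hy, ?_⟩, ?_⟩
    · ext p
      simp only [proj_apply]
      split_ifs <;> rfl
    · ext p
      simp only [proj_apply]
      split_ifs
      exacts [rfl, map_zero _]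
  · rintro _ ⟨y, hy, rfl⟩
    refine ⟨_, ⟨y, hU hy, rfl⟩, ?_⟩
    obtain ⟨m, -, hm⟩ := hy
    ext p
    rw [proj_apply, ite_eq_left_iff]
    intro hp
    have : y p = 0 := Subtype.ext (by rw [← congrFun hm p, proj_apply, if_neg hp]; rfl)
    rw [this, map_zero]

theorem vdim_residueSubspace {U : Submodule F (Carrier Q d F)} {i : Fin Q.n}
    (hU : U.map (proj Q d F i) ≤ U) :
    vdim Q d _ (residueSubspace V U) i = vdim Q d F U i := by
  rw [vdim, map_proj_residueSubspace hU, finrank_residueSubspace, vdim]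

theorem map_arrowMap_residueSubspace_le {w : Coords Q d → V} {a : Fin Q.numArrows}
    {U U' : Submodule F (Carrier Q d F)}
    (h : U.map (arrowMap Q d F (fun c => (w c : F)) a) ≤ U') :
    (residueSubspace V U).map (arrowMap Q d _ (fun c => residue V (w c)) a) ≤
      residueSubspace V U' := by
  rintro _ ⟨_, ⟨y, hy, rfl⟩, rfl⟩
  refine ⟨(arrowMatrix w a).mulVec y, ?_, ?_⟩
  · convert h (Submodule.mem_map_of_mem hy) using 1
    have hmap : (arrowMatrix w a).map V.subtype = arrowMatrix (fun c => (w c : F)) a :=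
      map_arrowMatrix V.subtype w a
    rw [arrowMap_eq_mulVecLin, ← hmap]
    ext p
    exact RingHom.map_mulVec V.subtype _ y p
  · rw [arrowMap_eq_mulVecLin, ← map_arrowMatrix (residue V)]
    ext p
    exact RingHom.map_mulVec (residue V) _ y p

theorem Governed.residueSubspace {L : ℕ} {S : Fin (L + 1) → Fin Q.n → ℕ} {w : Coords Q d → V}
    {U : Fin (L + 2) → Submodule F (Carrier Q d F)}
    (H : Governed Q d F L (fun c => (w c : F)) S U) :
    Governed Q d (ResidueField V) L (fun c => residue V (w c)) S
      (fun l => residueSubspace V (U l)) := by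
  obtain ⟨htop, hbot, hmono, hgr, harr, hdim⟩ := H
  refine ⟨?_, ?_, fun l => residueSubspace_mono V (hmono l), fun l i => ?_,
    fun l a => map_arrowMap_residueSubspace_le (harr l a), fun l i => ?_⟩
  · simp only [htop, residueSubspace_top]
  · simp only [hbot, residueSubspace_bot]
  · rw [map_proj_residueSubspace (hgr l i)]
    exact residueSubspace_mono V (hgr l i)
  · rw [vdim_residueSubspace (hgr _ i), vdim_residueSubspace (hgr _ i), hdim]

end Reduction

section Closedness

open Filter Topology

variable {L : ℕ} {S : Fin (L + 1) → Fin Q.n → ℕ}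

theorem isOpen_setOf_eval_ne_zero (p : MvPolynomial (Coords Q d) K) :
    IsOpen {x : RepSpace Q d K | MvPolynomial.eval x p ≠ 0} :=
  TopologicalSpace.isOpen_generateFrom_of_mem ⟨p, rfl⟩

variable [IsAlgClosed K]

theorem Triangularizes.descend {e : LayerLabelling S d} {k : Type*} [Field k] {φ : K →+* k}
    {x : RepSpace Q d K} {g h : Matrix (Σ i, Fin (d i)) (Σ i, Fin (d i)) k}
    (H : Triangularizes e (fun c => φ (x c)) g h) : ∃ g h, Triangularizes e x g h := by
  let := φ.toAlgebra
  let entries : Set k := Set.range (Function.uncurry g) ∪ Set.range (Function.uncurry h)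
  let B := Algebra.adjoin K entries
  have : Algebra.FiniteType K B := B.fg_iff_finiteType.1 <|
    Subalgebra.fg_def.2 ⟨entries, (Set.finite_range _).union (Set.finite_range _), rfl⟩
  let gB : Matrix (Σ i, Fin (d i)) (Σ i, Fin (d i)) B :=
    fun p q => ⟨g p q, Algebra.subset_adjoin (Or.inl ⟨(p, q), rfl⟩)⟩
  let hB : Matrix (Σ i, Fin (d i)) (Σ i, Fin (d i)) B :=
    fun p q => ⟨h p q, Algebra.subset_adjoin (Or.inr ⟨(p, q), rfl⟩)⟩
  have HB : Triangularizes e (fun c => algebraMap K B (x c)) gB hB :=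
    .of_forall_map (f := fun _ : Unit => (B.val : B →+* k))
      (fun _ hr => Subtype.ext (hr ())) fun _ => H
  obtain ⟨ψ⟩ := nonempty_algHom_of_finiteType K B
  have hx : (fun c => (ψ : B →+* K) (algebraMap K B (x c))) = x := funext fun c => ψ.commutes (x c)
  exact ⟨_, _, hx ▸ HB.map (ψ : B →+* K)⟩

theorem mem_filtSet_of_ker_le_ker_eval (e : LayerLabelling S d) {F : Type} [Field F]
    {θ : MvPolynomial (Coords Q d) K →+* F} {x : RepSpace Q d K}
    (hθ : RingHom.ker θ ≤ RingHom.ker (MvPolynomial.eval x))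
    (h : (fun c => θ (MvPolynomial.X c)) ∈ FiltSet Q d F L S) : x ∈ FiltSet Q d K L S := by
  have : (RingHom.ker (MvPolynomial.eval x)).IsPrime := RingHom.ker_isPrime _
  obtain ⟨V, j, hj, hmax⟩ := exists_valuationSubring_comap_maximalIdeal_eq _ θ hθ
  obtain ⟨U, hU⟩ := h
  simp only [← hj] at hU
  let φ : K →+* IsLocalRing.ResidueField V :=
    ((IsLocalRing.residue V).comp j).comp MvPolynomial.C
  have hφ (c : Coords Q d) : IsLocalRing.residue V (j (MvPolynomial.X c)) = φ (x c) := by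
    have hmem : MvPolynomial.X c - MvPolynomial.C (x c) ∈ (IsLocalRing.maximalIdeal V).comap j := by
      simp [hmax, RingHom.mem_ker]
    rw [Ideal.mem_comap, ← IsLocalRing.residue_eq_zero_iff, map_sub, map_sub, sub_eq_zero] at hmem
    exact hmem
  have hred := hU.residueSubspace
  simp only [hφ] at hred
  obtain ⟨g, h, H⟩ := (exists_triangularizes_iff_mem_filtSet e).2 ⟨_, hred⟩
  exact (exists_triangularizes_iff_mem_filtSet e).1 H.descend

theorem isClosed_filtSet (S : Fin (L + 1) → Fin Q.n → ℕ) : IsClosed (FiltSet Q d K L S) := by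
  refine isClosed_of_closure_subset fun x hx => ?_
  obtain ⟨_, F, hF⟩ := closure_nonempty_iff.1 ⟨x, hx⟩
  obtain ⟨e⟩ := nonempty_layerLabelling hF.hasDimVec
  choose g h H using fun y : FiltSet Q d K L S => (exists_triangularizes_iff_mem_filtSet e).2 y.2
  have : (comap ((↑) : FiltSet Q d K L S → RepSpace Q d K) (𝓝 x)).NeBot :=
    mem_closure_iff_comap_neBot.1 hx
  let U := Ultrafilter.of (comap ((↑) : FiltSet Q d K L S → RepSpace Q d K) (𝓝 x))
  let ev : MvPolynomial (Coords Q d) K →+* (FiltSet Q d K L S → K) :=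
    RingHom.pi fun y => MvPolynomial.eval y.1
  have Hev : Triangularizes e (fun c => ev (MvPolynomial.X c))
      (Matrix.of fun p q y => g y p q) (Matrix.of fun p q y => h y p q) := by
    refine .of_forall_map (f := Pi.evalRingHom fun _ => K) (fun _ => funext) fun y => ?_
    have hev : (fun c => Pi.evalRingHom (fun _ => K) y (ev (MvPolynomial.X c))) = y.1 :=
      funext fun c => MvPolynomial.eval_X c
    exact hev.symm ▸ H y
  let θ : MvPolynomial (Coords Q d) K →+* (U : Filter (FiltSet Q d K L S)).Germ K :=
    (Germ.coeRingHom _).comp ev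
  refine mem_filtSet_of_ker_le_ker_eval e (θ := θ) (fun p hp => ?_)
    ((exists_triangularizes_iff_mem_filtSet e).1 ⟨_, _, Hev.map (Germ.coeRingHom _)⟩)
  by_contra hpx
  have hne : ∀ᶠ y in U, ev p y ≠ 0 :=
    Ultrafilter.of_le _ (preimage_mem_comap ((isOpen_setOf_eval_ne_zero p).mem_nhds hpx))
  have heq : ∀ᶠ y in U, ev p y = 0 := Germ.coe_eq.1 hp
  obtain ⟨y, hy, hy0⟩ := (hne.and heq).exists
  exact hy hy0

end Closedness

variable {L : ℕ} {x : RepSpace Q d K}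

section Uniserial

variable {S : Fin (L + 1) → Fin Q.n → ℕ} {F : Fin (L + 2) → Submodule K (Carrier Q d K)}
  {N : Submodule K (Carrier Q d K)} {l : ℕ}

theorem stable_of_radPow_succ_le (hl : radPow Q d K x (l + 1) ≤ N) (hl' : N ≤ radPow Q d K x l)
    (hgr : ∀ i, N.map (proj Q d K i) ≤ N) : Stable Q d K x N :=
  ⟨fun a => ((Submodule.map_mono hl').trans (map_arrowMap_radPow_le x l a)).trans hl, hgr⟩

theorem stable_span_proj_sup_radPow_succ {m : Carrier Q d K} (hm : m ∈ radPow Q d K x l)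
    (i : Fin Q.n) :
    Stable Q d K x (Submodule.span K {proj Q d K i m} ⊔ radPow Q d K x (l + 1)) := by
  refine stable_of_radPow_succ_le le_sup_right (sup_le ?_ (radPow_succ_le x l)) fun j => ?_
  · rw [Submodule.span_singleton_le_iff_mem]
    exact map_proj_radPow_le x l i (Submodule.mem_map_of_mem hm)
  · rw [Submodule.map_sup, Submodule.map_span, Set.image_singleton, proj_proj]
    refine sup_le_sup ?_ (map_proj_radPow_le x _ j)
    split_ifs <;> simp

theorem UniserialRep.eq_radPow_succ_or_eq_radPow (hx : UniserialRep Q d K x)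
    (hl : radPow Q d K x (l + 1) ≤ N) (hl' : N ≤ radPow Q d K x l)
    (hgr : ∀ i, N.map (proj Q d K i) ≤ N) :
    N = radPow Q d K x (l + 1) ∨ N = radPow Q d K x l := by
  by_cases hle : radPow Q d K x l ≤ N
  · exact .inr (hl'.antisymm hle)
  obtain ⟨i, hi⟩ := not_forall.1 (mt le_of_forall_map_proj_le hle)
  obtain ⟨_, ⟨m, hm, rfl⟩, hmN⟩ := SetLike.not_le_iff_exists.1 hi
  have hcov := Submodule.wcovBy_span_singleton_sup (proj Q d K i m) (radPow Q d K x (l + 1))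
  have hmem := Submodule.mem_sup_left (T := radPow Q d K x (l + 1))
    (Submodule.mem_span_singleton_self (R := K) (proj Q d K i m))
  rcases hx _ _ (stable_of_radPow_succ_le hl hl' hgr) (stable_span_proj_sup_radPow_succ hm i)
    with h | h
  · exact .inl ((hcov.eq_or_eq hl h).resolve_right fun hN => hmN (hN ▸ hmem))
  · exact absurd (h hmem) hmN

theorem Governed.eq_bot_of_le (H : Governed Q d K L x S F) {l : Fin (L + 1)}
    (hS : ∀ l', l ≤ l' → S l' = 0) : F l.castSucc = ⊥ := by
  refine (eq_of_le_of_vdim_le bot_le (by simp) fun i => ?_).symm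
  rw [H.vdim_eq_sum, sum_eq_zero]
  · exact Nat.zero_le _
  · intro j hj
    rw [hS j (Fin.castSucc_le_castSucc_iff.1 (mem_filter.1 hj).2), Pi.zero_apply]

theorem UniserialRep.eq_radPow_of_governed (hx : UniserialRep Q d K x) {y : RepSpace Q d K}
    (H : Governed Q d K L x (radLayering Q d K L y) F) (l : Fin (L + 2)) :
    F l = radPow Q d K x l := by
  have ⟨htop, _, hmono, hgr, harr, hdim⟩ := H
  induction l using Fin.induction with
  | zero => rw [htop, Fin.val_zero, radPow_zero]
  | succ l ih =>
    rw [Fin.val_castSucc] at ih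
    have hle : radPow Q d K x (l + 1) ≤ F l.succ := by
      rw [radPow_succ, ← ih]
      exact iSup_le (harr l)
    refine (hx.eq_radPow_succ_or_eq_radPow hle (ih ▸ hmono l) (hgr _)).elim id fun hF => ?_
    have hlayer : radLayering Q d K L y l = 0 := by
      ext i
      have := hdim l i
      rw [ih, hF] at this
      simpa using this
    have hbot : F l.succ = ⊥ := by
      rw [hF, ← ih]
      exact H.eq_bot_of_le fun l' => radLayering_eq_zero_of_le hlayer
    rw [hbot] at hle ⊢
    exact (bot_unique hle).symm

theorem Governed.eq_radLayering (H : Governed Q d K L x S F) (hF : ∀ l, F l = radPow Q d K x l) :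
    S = radLayering Q d K L x := by
  ext l i
  have h := H.2.2.2.2.2 l i
  rw [hF, hF, Fin.val_castSucc, Fin.val_succ, ← radLayering_add_vdim x l i] at h
  exact (Nat.add_right_cancel h).symm

end Uniserial

section Gamma

variable {P : Set (RepSpace Q d K)}

theorem mem_filtSet_radLayering
    (hL : ∀ w : List (Fin Q.numArrows), w.length = L + 1 → wordMap Q d K x w = 0) :
    x ∈ FiltSet Q d K L (radLayering Q d K L x) :=
  ⟨_, governed_radPow hL⟩

theorem UniserialRep.gammaCount_eq_one (hx : UniserialRep Q d K x) (hxP : x ∈ P)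
    (hL : ∀ w : List (Fin Q.numArrows), w.length = L + 1 → wordMap Q d K x w = 0) :
    gammaCount Q d K L P x = 1 := by
  refine Set.ncard_eq_one.2 ⟨radLayering Q d K L x, Set.eq_singleton_iff_unique_mem.2
    ⟨⟨⟨x, hxP, rfl⟩, mem_filtSet_radLayering hL⟩, ?_⟩⟩
  rintro _ ⟨⟨y, -, rfl⟩, F, hF⟩
  exact hF.eq_radLayering (hx.eq_radPow_of_governed hF)

theorem radLayering_eq_of_gammaCount_eq_one (hx : gammaCount Q d K L P x = 1) (hxP : x ∈ P)
    (hL : ∀ w : List (Fin Q.numArrows), w.length = L + 1 → wordMap Q d K x w = 0)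
    {y : RepSpace Q d K} (hy : y ∈ P) (hxy : x ∈ FiltSet Q d K L (radLayering Q d K L y)) :
    radLayering Q d K L y = radLayering Q d K L x := by
  obtain ⟨T, hT⟩ := Set.ncard_eq_one.1 hx
  have hmem {z} (hz : z ∈ P) (hxz : x ∈ FiltSet Q d K L (radLayering Q d K L z)) :
      radLayering Q d K L z = T := Set.eq_of_mem_singleton (hT ▸ ⟨⟨z, hz, rfl⟩, hxz⟩)
  rw [hmem hy hxy, hmem hxP (mem_filtSet_radLayering hL)]

end Gamma

theorem closure_radLayering_fiber_subset [IsAlgClosed K] {X : Set (RepSpace Q d K)}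
    (hX : ∀ x ∈ X, ∀ w : List (Fin Q.numArrows), w.length = L + 1 → wordMap Q d K x w = 0)
    (S : Fin (L + 1) → Fin Q.n → ℕ) :
    closure {x : X | radLayering Q d K L x = S} ⊆ (↑) ⁻¹' FiltSet Q d K L S := by
  refine closure_minimal ?_ ((isClosed_filtSet S).preimage continuous_subtype_val)
  rintro x rfl
  exact mem_filtSet_radLayering (hX x x.2)

end QuiverData

open QuiverData in
theorem statement_19_general (K : Type) [Field K] [IsAlgClosed K] (Q : QuiverData) (L : ℕ)
    (d : Fin Q.n → ℕ) (X : Set (RepSpace Q d K))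
    (hX : ∀ x ∈ X, ∀ w : List (Fin Q.numArrows), w.length = L + 1 → wordMap Q d K x w = 0)
    (S : Fin (L + 1) → Fin Q.n → ℕ) (D : Set X)
    (hD : Maximal (fun E => IsIrreducible E ∧ E ⊆ {x : X | radLayering Q d K L x = S}) D) :
    ((∃ x ∈ D, gammaCount Q d K L X x = 1) → closure D ∈ irreducibleComponents X) ∧
    ((∃ x ∈ D, UniserialRep Q d K x) → closure D ∈ irreducibleComponents X) := by
  have of_gammaCount (x : X) (hxD : x ∈ D) (hx : gammaCount Q d K L X x = 1) :
      closure D ∈ irreducibleComponents X := by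
    refine closure_mem_irreducibleComponents_of_maximal_fiber
      (s := radLayering Q d K L ∘ ((↑) : X → RepSpace Q d K))
      ((finite_range_radLayering L).subset (Set.range_comp_subset_range _ _)) hD hxD
      fun S' hS' => ?_
    obtain ⟨y, rfl⟩ := closure_nonempty_iff.1 ⟨x, hS'⟩
    have hxS : radLayering Q d K L x = S := hD.prop.2 hxD
    rw [← hxS]
    exact radLayering_eq_of_gammaCount_eq_one hx x.2 (hX x x.2) y.2
      (closure_radLayering_fiber_subset hX _ hS')
  refine ⟨fun ⟨x, hxD, hx⟩ => of_gammaCount x hxD hx, fun ⟨x, hxD, hx⟩ => ?_⟩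
  exact of_gammaCount x hxD (hx.gammaCount_eq_one x.2 (hX x x.2))

open QuiverData in
/-- For an arbitrary basic finite-dimensional algebra `Λ = KQ/I` (with
`J^{L+1} = 0`): if `D` is an irreducible component of the stratum `Rep S` and some point
`x ∈ D` satisfies `Γ(M_x) = 1`, then the closure of `D` is an irreducible component of
`Rep_d(Λ)`. In particular, the closure of `D` is an irreducible component of `Rep_d(Λ)`
whenever `D` contains a point encoding a uniserial module. -/
theorem statement_19 (K : Type) [Field K] [IsAlgClosed K]
    (Q : QuiverData) (L : ℕ) (d : Fin Q.n → ℕ)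
    (Rels : Set (FreeAlgebra K (Fin Q.n ⊕ Fin Q.numArrows)))
    (hLoewy : ∀ x ∈ RepVar Q d K Rels, ∀ w : List (Fin Q.numArrows),
      w.length = L + 1 → wordMap Q d K x w = 0)
    (S : Fin (L+1) → Fin Q.n → ℕ) (hS : hasDimVec S d)
    (D : Set (GenV Q d K Rels))
    (hDsub : D ⊆ {x : GenV Q d K Rels | radLayering Q d K L x.1 = S})
    (hDirr : IsIrreducible D)
    (hDmax : ∀ E : Set (GenV Q d K Rels),
      E ⊆ {x : GenV Q d K Rels | radLayering Q d K L x.1 = S} →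
      IsIrreducible E → D ⊆ E → E = D) :
    ((∃ x ∈ D, gammaCount Q d K L (RepVar Q d K Rels) x.1 = 1) →
        closure D ∈ irreducibleComponents (GenV Q d K Rels)) ∧
    ((∃ x ∈ D, UniserialRep Q d K x.1) →
        closure D ∈ irreducibleComponents (GenV Q d K Rels)) :=
  statement_19_general K Q L d (RepVar Q d K Rels) hLoewy S D
    ⟨⟨hDirr, hDsub⟩, fun E hE hDE => (hDmax E hE.2 hE.1 hDE).le⟩
end
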